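/- arXiv:1202.6259 — 10 statements merged into one kernel-verified Lean document; each statement's English description precedes it below -/
import Mathlib

section
/- For all Borel probability measures u and v on X, one has d_1(u,v) = d_2(u,v) = d_2^+(u,v) = d_3(u,v). -/
open MeasureTheory Set

namespace Stmt0

variable {V : Type*} [NormedAddCommGroup V] [NormedSpace ℝ V]
  [MeasurableSpace V] [BorelSpace V]

/-- The pairing `u(f) = ∫_X f du`. -/
noncomputable def pairing {X : Set V} (u : ProbabilityMeasure X) (f : C(X, ℝ)) : ℝ :=
  ∫ x, f x ∂(u : Measure X)

/-- `D₁ = {f ∈ C(X,ℝ) : ∀ x,y ∈ X, ∀ a,b ≥ 0, a·f(x) − b·f(y) ≤ ‖a·x − b·y‖}`. -/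
def D1 (X : Set V) : Set C(X, ℝ) :=
  {f | ∀ x y : X, ∀ a b : ℝ, 0 ≤ a → 0 ≤ b →
    a * f x - b * f y ≤ ‖a • (x : V) - b • (y : V)‖}

noncomputable def d1 {X : Set V} (u v : ProbabilityMeasure X) : ℝ :=
  sSup ((fun f => pairing u f - pairing v f) '' D1 X)

/-- `D₂ = {(f,g) : ∀ x,y ∈ X, ∀ a,b ≥ 0, a·f(x) + b·g(y) ≤ ‖a·x − b·y‖}`. -/
def D2 (X : Set V) : Set (C(X, ℝ) × C(X, ℝ)) :=
  {fg | ∀ x y : X, ∀ a b : ℝ, 0 ≤ a → 0 ≤ b →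
    a * fg.1 x + b * fg.2 y ≤ ‖a • (x : V) - b • (y : V)‖}

noncomputable def d2 {X : Set V} (u v : ProbabilityMeasure X) : ℝ :=
  sSup ((fun fg => pairing u fg.1 + pairing v fg.2) '' D2 X)

/-- `D₂^ε`, where `a, b` now range over `[0,1]`. -/
def D2eps (X : Set V) (ε : ℝ) : Set (C(X, ℝ) × C(X, ℝ)) :=
  {fg | ∀ x y : X, ∀ a b : ℝ, a ∈ Icc (0:ℝ) 1 → b ∈ Icc (0:ℝ) 1 →
    a * fg.1 x + b * fg.2 y ≤ ε + ‖a • (x : V) - b • (y : V)‖}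

noncomputable def d2eps {X : Set V} (ε : ℝ) (u v : ProbabilityMeasure X) : ℝ :=
  sSup ((fun fg => pairing u fg.1 + pairing v fg.2) '' D2eps X ε)

noncomputable def d2plus {X : Set V} (u v : ProbabilityMeasure X) : ℝ :=
  sInf ((fun ε => d2eps ε u v) '' Ioi (0:ℝ))

/-- `M₃(u,v)`: finite positive measures `γ` on `X²×[0,1]²` whose suitably weighted
marginals are `u` and `v`. -/
def M3 {X : Set V} (u v : ProbabilityMeasure X) :
    Set (Measure (X × X × Icc (0:ℝ) 1 × Icc (0:ℝ) 1)) :=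
  {γ | IsFiniteMeasure γ ∧ ∀ f : C(X, ℝ),
    (∫ p, (p.2.2.1 : ℝ) * f p.1 ∂γ = pairing u f) ∧
    (∫ p, (p.2.2.2 : ℝ) * f p.2.1 ∂γ = pairing v f)}

noncomputable def d3 {X : Set V} (u v : ProbabilityMeasure X) : ℝ :=
  sInf ((fun γ => ∫ p, ‖(p.2.2.1 : ℝ) • (p.1 : V) - (p.2.2.2 : ℝ) • ((p.2.1 : X) : V)‖ ∂γ) ''
    M3 u v)

section helpers

set_option linter.unusedSectionVars false

variable {X : Set V}

lemma integrable_cm [CompactSpace X] (u : ProbabilityMeasure X) (f : C(X, ℝ)) :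
    Integrable (fun x => f x) (u : Measure X) :=
  f.continuous.integrable_of_hasCompactSupport (HasCompactSupport.of_compactSpace f)

lemma pairing_mono [CompactSpace X] (u : ProbabilityMeasure X) {f g : C(X, ℝ)}
    (h : ∀ x, f x ≤ g x) : pairing u f ≤ pairing u g :=
  integral_mono (integrable_cm u f) (integrable_cm u g) h

lemma pairing_const (u : ProbabilityMeasure X) (c : ℝ) :
    pairing u (ContinuousMap.const X c) = c := by
  simp [pairing]

lemma pairing_add [CompactSpace X] (u : ProbabilityMeasure X) (f g : C(X, ℝ)) :
    pairing u (f + g) = pairing u f + pairing u g :=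
  integral_add (integrable_cm u f) (integrable_cm u g)

lemma pairing_smul (u : ProbabilityMeasure X) (c : ℝ) (f : C(X, ℝ)) :
    pairing u (c • f) = c * pairing u f :=
  integral_const_mul c _

lemma pairing_zero (u : ProbabilityMeasure X) : pairing u 0 = 0 := by
  simp [pairing]

lemma pairing_neg (u : ProbabilityMeasure X) (f : C(X, ℝ)) :
    pairing u (-f) = - pairing u f := by
  simp [pairing, integral_neg]

lemma pairing_le [CompactSpace X] (u : ProbabilityMeasure X) {f : C(X, ℝ)} {c : ℝ}
    (h : ∀ x, f x ≤ c) : pairing u f ≤ c := by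
  have := pairing_mono u (g := ContinuousMap.const X c) h
  rwa [pairing_const] at this

lemma le_pairing [CompactSpace X] (u : ProbabilityMeasure X) {f : C(X, ℝ)} {c : ℝ}
    (h : ∀ x, c ≤ f x) : c ≤ pairing u f := by
  have := pairing_mono u (f := ContinuousMap.const X c) h
  rwa [pairing_const] at this

lemma exists_bound [CompactSpace X] : ∃ C : ℝ, ∀ x : X, ‖(x : V)‖ ≤ C := by
  obtain ⟨C, hC⟩ := (isCompact_iff_compactSpace.2 ‹CompactSpace X›).isBounded.exists_norm_le
  exact ⟨C, fun x => hC x x.2⟩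

lemma D2_sub_D2eps {ε : ℝ} (hε : 0 ≤ ε) : D2 X ⊆ D2eps X ε := by
  intro fg h x y a b ha hb
  have := h x y a b ha.1 hb.1
  linarith

lemma bdd_D2eps [CompactSpace X] (ε : ℝ) (u v : ProbabilityMeasure X) :
    BddAbove ((fun fg : C(X, ℝ) × C(X, ℝ) => pairing u fg.1 + pairing v fg.2) '' D2eps X ε) := by
  obtain ⟨C, hC⟩ := exists_bound (X := X)
  refine ⟨(ε + C) + (ε + C), ?_⟩
  rintro _ ⟨fg, h, rfl⟩
  refine add_le_add (pairing_le u fun x => ?_) (pairing_le v fun x => ?_)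
  · have := h x x 1 0 (by simp) (by simp)
    simp at this
    linarith [hC x]
  · have := h x x 0 1 (by simp) (by simp)
    simp at this
    linarith [hC x]

lemma bdd_D2 [CompactSpace X] (u v : ProbabilityMeasure X) :
    BddAbove ((fun fg : C(X, ℝ) × C(X, ℝ) => pairing u fg.1 + pairing v fg.2) '' D2 X) :=
  (bdd_D2eps 0 u v).mono (image_mono (D2_sub_D2eps le_rfl))

lemma zero_mem_D2 : (0 : C(X, ℝ) × C(X, ℝ)) ∈ D2 X := by
  intro x y a b _ _
  simp

lemma D1_to_D2 {f : C(X, ℝ)} (hf : f ∈ D1 X) : (f, -f) ∈ D2 X := by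
  intro x y a b ha hb
  have := hf x y a b ha hb
  simp only [ContinuousMap.neg_apply]
  linarith

lemma bdd_D1 [CompactSpace X] (u v : ProbabilityMeasure X) :
    BddAbove ((fun f : C(X, ℝ) => pairing u f - pairing v f) '' D1 X) := by
  refine (bdd_D2 u v).mono ?_
  rintro _ ⟨f, hf, rfl⟩
  exact ⟨(f, -f), D1_to_D2 hf, by simp [pairing_neg, sub_eq_add_neg]⟩

lemma d1_le_d2 [CompactSpace X] (u v : ProbabilityMeasure X) : d1 u v ≤ d2 u v := by
  refine csSup_le ⟨_, 0, by intro x y a b _ _; simp, rfl⟩ ?_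
  rintro _ ⟨f, hf, rfl⟩
  exact le_csSup (bdd_D2 u v) ⟨(f, -f), D1_to_D2 hf, by simp [pairing_neg, sub_eq_add_neg]⟩

lemma D2_between (f g : C(X, ℝ)) (h : (f, g) ∈ D2 X) :
    ∃ k ∈ D1 X, (∀ x, f x ≤ k x) ∧ ∀ x, k x ≤ - g x := by
  let F : X → X × {b : ℝ // 0 ≤ b} → ℝ := fun x p => ‖(x : V) - p.2.1 • (p.1 : V)‖ - p.2.1 * g p.1
  have hlow : ∀ (x : X) p, - ‖(x : V)‖ ≤ F x p := by
    intro x p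
    have h1 := h p.1 p.1 0 p.2.1 le_rfl p.2.2
    simp only [zero_mul, zero_smul, zero_sub, norm_neg, zero_add] at h1
    have h2 := norm_sub_norm_le (p.2.1 • (p.1 : V)) (p.2.1 • (p.1 : V) - (x : V))
    rw [sub_sub_cancel, norm_sub_rev _ (x : V)] at h2
    simp only [F]
    linarith
  have hbdd : ∀ x, BddBelow (range (F x)) := fun x => ⟨_, by rintro _ ⟨p, rfl⟩; exact hlow x p⟩
  let k : X → ℝ := fun x => ⨅ p, F x p
  have hk : ∀ x y : X, ∀ a b : ℝ, 0 ≤ a → 0 ≤ b →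
      a * k x - b * k y ≤ ‖a • (x : V) - b • (y : V)‖ := by
    intro x y a b ha hb
    haveI : Nonempty (X × {b : ℝ // 0 ≤ b}) := ⟨(x, ⟨0, le_rfl⟩)⟩
    rcases ha.eq_or_lt with rfl | ha
    · have : -‖(y : V)‖ ≤ k y := le_ciInf fun p => hlow y p
      simp only [zero_mul, zero_smul, zero_sub, norm_neg, norm_smul, Real.norm_eq_abs,
        abs_of_nonneg hb]
      nlinarith
    · have key : ∀ p, a * k x - ‖a • (x : V) - b • (y : V)‖ ≤ b * F y p := by
        intro p
        have h1 : k x ≤ F x (p.1, ⟨b * p.2.1 / a, by have := p.2.2; positivity⟩) :=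
          ciInf_le (hbdd x) _
        have h2 := mul_le_mul_of_nonneg_left h1 ha.le
        have e1 : a * ‖(x : V) - (b * p.2.1 / a) • (p.1 : V)‖
            = ‖a • (x : V) - (b * p.2.1) • (p.1 : V)‖ := by
          rw [← abs_of_pos ha, ← Real.norm_eq_abs, ← norm_smul, smul_sub, smul_smul,
            Real.norm_eq_abs, abs_of_pos ha, mul_div_cancel₀ _ ha.ne']
        have e2 : b * ‖(y : V) - p.2.1 • (p.1 : V)‖
            = ‖b • (y : V) - (b * p.2.1) • (p.1 : V)‖ := by
          rw [← abs_of_nonneg hb, ← Real.norm_eq_abs, ← norm_smul, smul_sub, smul_smul,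
            Real.norm_eq_abs, abs_of_nonneg hb]
        have e3 := norm_sub_le_norm_sub_add_norm_sub (a • (x : V)) (b • (y : V))
          ((b * p.2.1) • (p.1 : V))
        simp only [F] at h2 ⊢
        rw [mul_sub, e1] at h2
        rw [mul_sub, e2]
        have e4 : a * (b * p.2.1 / a * g p.1) = b * (p.2.1 * g p.1) := by
          field_simp
        rw [e4] at h2
        linarith
      have : a * k x - ‖a • (x : V) - b • (y : V)‖ ≤ b * k y := by
        rw [show k y = ⨅ p, F y p from rfl, Real.mul_iInf_of_nonneg hb]
        exact le_ciInf key
      linarith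
  have hc : Continuous k := by
    have : LipschitzWith 1 k := by
      refine LipschitzWith.of_le_add fun x y => ?_
      have := hk x y 1 1 zero_le_one zero_le_one
      simp only [one_mul, one_smul] at this
      rw [Subtype.dist_eq, dist_eq_norm]
      linarith
    exact this.continuous
  refine ⟨⟨k, hc⟩, hk, fun x => ?_, fun x => ?_⟩
  · haveI : Nonempty (X × {b : ℝ // 0 ≤ b}) := ⟨(x, ⟨0, le_rfl⟩)⟩
    refine le_ciInf fun p => ?_
    have := h x p.1 1 p.2.1 zero_le_one p.2.2
    simp only [one_mul, one_smul] at this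
    simp only [F]
    linarith
  · refine (ciInf_le (hbdd x) (x, ⟨1, zero_le_one⟩)).trans ?_
    simp [F]

lemma d2_le_d1 [CompactSpace X] (u v : ProbabilityMeasure X) : d2 u v ≤ d1 u v := by
  refine csSup_le ⟨_, 0, zero_mem_D2, rfl⟩ ?_
  rintro _ ⟨⟨f, g⟩, hf, rfl⟩
  obtain ⟨k, hk, h1, h2⟩ := D2_between f g hf
  refine le_trans ?_ (le_csSup (bdd_D1 u v) ⟨k, hk, rfl⟩)
  have a1 := pairing_mono u h1
  have a2 := pairing_mono v (f := k) (g := -g) h2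
  rw [pairing_neg] at a2
  simp only
  linarith

lemma d2_le_d2eps [CompactSpace X] {ε : ℝ} (hε : 0 ≤ ε) (u v : ProbabilityMeasure X) :
    d2 u v ≤ d2eps ε u v :=
  csSup_le_csSup (bdd_D2eps ε u v) ⟨_, 0, zero_mem_D2, rfl⟩ (image_mono (D2_sub_D2eps hε))

lemma d2_le_d2plus [CompactSpace X] (u v : ProbabilityMeasure X) : d2 u v ≤ d2plus u v := by
  refine le_csInf ⟨_, 1, by simp, rfl⟩ ?_
  rintro _ ⟨ε, hε, rfl⟩
  exact d2_le_d2eps (le_of_lt hε) u v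

/-- The compact space carrying the plans. -/
abbrev KK (X : Set V) := X × X × Icc (0:ℝ) 1 × Icc (0:ℝ) 1

/-- The cost function. -/
def cost (X : Set V) : C(KK X, ℝ) where
  toFun p := ‖(p.2.2.1 : ℝ) • (p.1 : V) - (p.2.2.2 : ℝ) • ((p.2.1 : X) : V)‖
  continuous_toFun := by fun_prop

/-- First weighted lift. -/
def lift1 (f : C(X, ℝ)) : C(KK X, ℝ) where
  toFun p := (p.2.2.1 : ℝ) * f p.1
  continuous_toFun := by fun_prop

/-- Second weighted lift. -/
def lift2 (f : C(X, ℝ)) : C(KK X, ℝ) where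
  toFun p := (p.2.2.2 : ℝ) * f p.2.1
  continuous_toFun := by fun_prop

lemma integrable_KK [CompactSpace X] (γ : Measure (KK X)) [IsFiniteMeasure γ] (f : C(KK X, ℝ)) :
    Integrable (fun x => f x) γ :=
  f.continuous.integrable_of_hasCompactSupport (HasCompactSupport.of_compactSpace f)

lemma d2plus_le_cost [CompactSpace X] (u v : ProbabilityMeasure X) (γ : Measure (KK X))
    (hγ : γ ∈ M3 u v) : d2plus u v ≤ ∫ p, cost X p ∂γ := by
  obtain ⟨hfin, hm⟩ := hγ
  have hb : BddBelow ((fun ε => d2eps ε u v) '' Ioi (0:ℝ)) := by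
    refine ⟨d2 u v, ?_⟩
    rintro _ ⟨ε, hε, rfl⟩
    exact d2_le_d2eps (le_of_lt hε) u v
  have key : ∀ ε : ℝ, 0 < ε → d2plus u v ≤ ε * γ.real univ + ∫ p, cost X p ∂γ := by
    intro ε hε
    refine (csInf_le hb ⟨ε, hε, rfl⟩).trans ?_
    refine csSup_le ⟨_, 0, D2_sub_D2eps hε.le zero_mem_D2, rfl⟩ ?_
    rintro _ ⟨⟨f, g⟩, hfg, rfl⟩
    have h1 : pairing u f + pairing v g = ∫ p, (lift1 f p + lift2 g p) ∂γ := by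
      rw [integral_add (integrable_KK γ _) (integrable_KK γ _), ← (hm f).1, ← (hm g).2]
      rfl
    have h2 : ε * γ.real univ + ∫ p, cost X p ∂γ = ∫ p, (ε + cost X p) ∂γ := by
      rw [integral_add (integrable_const _) (integrable_KK γ _)]
      simp [mul_comm]
    simp only
    rw [h1, h2]
    refine integral_mono ((integrable_KK γ _).add (integrable_KK γ _))
      ((integrable_const _).add (integrable_KK γ _)) fun p => ?_
    exact hfg p.1 p.2.1 p.2.2.1 p.2.2.2 p.2.2.1.2 p.2.2.2.2
  have hm0 : 0 ≤ γ.real univ := measureReal_nonneg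
  refine le_of_forall_pos_le_add fun δ hδ => ?_
  have := key (δ / (γ.real univ + 1)) (by positivity)
  have h3 : δ / (γ.real univ + 1) * γ.real univ ≤ δ := by
    rw [div_mul_eq_mul_div, div_le_iff₀ (by positivity)]
    nlinarith
  linarith

lemma exists_measure {K : Type*} [TopologicalSpace K] [CompactSpace K] [T2Space K]
    [MeasurableSpace K] [BorelSpace K] (L : C(K, ℝ) →ₗ[ℝ] ℝ)
    (hL : ∀ φ : C(K, ℝ), (∀ k, 0 ≤ φ k) → 0 ≤ L φ) :
    ∃ γ : Measure K, IsFiniteMeasure γ ∧ ∀ φ : C(K, ℝ), ∫ k, φ k ∂γ = L φ := by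
  let T : CompactlySupportedContinuousMap K ℝ →ₗ[ℝ] C(K, ℝ) :=
    { toFun := fun f => f.toContinuousMap
      map_add' := fun f g => rfl
      map_smul' := fun c f => rfl }
  let Λ : CompactlySupportedContinuousMap K ℝ →ₚ[ℝ] ℝ :=
    PositiveLinearMap.mk₀ (L.comp T) (fun f hf => hL _ fun k => hf k)
  refine ⟨RealRMK.rieszMeasure Λ, ⟨isCompact_univ.measure_lt_top⟩, fun φ => ?_⟩
  exact RealRMK.integral_rieszMeasure Λ ⟨φ, HasCompactSupport.of_compactSpace φ⟩

/-- The cone of pairs `(φ, r)` such that `φ` is super-replicated at cost at most `r`. -/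
def repCone [CompactSpace X] (u v : ProbabilityMeasure X) : PointedCone ℝ (C(KK X, ℝ) × ℝ) where
  carrier := {q | ∃ (f g : C(X, ℝ)) (t : ℝ), 0 ≤ t ∧
    (∀ p : KK X, 1 ≤ (p.2.2.1 : ℝ) + p.2.2.2 → q.1 p ≤ lift1 f p + lift2 g p + t * cost X p) ∧
    pairing u f + pairing v g + t * d2 u v ≤ q.2}
  zero_mem' := ⟨0, 0, 0, le_rfl, fun p _ => by simp [lift1, lift2], by simp [pairing_zero]⟩
  add_mem' := by
    rintro q q' ⟨f, g, t, ht, h1, h2⟩ ⟨f', g', t', ht', h1', h2'⟩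
    refine ⟨f + f', g + g', t + t', add_nonneg ht ht', fun p hp => ?_, ?_⟩
    · have a := h1 p hp
      have b := h1' p hp
      simp only [lift1, lift2, ContinuousMap.coe_mk, ContinuousMap.add_apply, Prod.fst_add] at *
      linarith
    · rw [pairing_add, pairing_add, Prod.snd_add]
      linarith
  smul_mem' := by
    rintro ⟨c, hc⟩ q ⟨f, g, t, ht, h1, h2⟩
    refine ⟨c • f, c • g, c * t, mul_nonneg hc ht, fun p hp => ?_, ?_⟩
    · have a := mul_le_mul_of_nonneg_left (h1 p hp) hc
      change c * q.1 p ≤ _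
      simp only [lift1, lift2, ContinuousMap.coe_mk, ContinuousMap.smul_apply, smul_eq_mul] at *
      linarith
    · rw [pairing_smul, pairing_smul]
      change _ ≤ c * q.2
      have a := mul_le_mul_of_nonneg_left h2 hc
      linarith

lemma mem_D2_of_simplex {f g : C(X, ℝ)}
    (h : ∀ p : KK X, 1 ≤ (p.2.2.1 : ℝ) + p.2.2.2 → lift1 f p + lift2 g p ≤ cost X p) :
    (f, g) ∈ D2 X := by
  intro x y a b ha hb
  rcases (add_nonneg ha hb).eq_or_lt with h0 | h0
  · have ha0 : a = 0 := by linarith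
    have hb0 : b = 0 := by linarith
    simp [ha0, hb0]
  · have := h (x, y, ⟨a / (a + b), by positivity, by rw [div_le_one h0]; linarith⟩,
      ⟨b / (a + b), by positivity, by rw [div_le_one h0]; linarith⟩) (by
        simp only [← add_div]; rw [div_self h0.ne'])
    simp only [lift1, lift2, cost, ContinuousMap.coe_mk] at this
    have h2 := mul_le_mul_of_nonneg_left this h0.le
    rw [← abs_of_pos h0, ← Real.norm_eq_abs, ← norm_smul, smul_sub, smul_smul, smul_smul,
      Real.norm_eq_abs, abs_of_pos h0, mul_div_cancel₀ _ h0.ne', mul_div_cancel₀ _ h0.ne'] at h2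
    have e : (a + b) * (a / (a + b) * f x + b / (a + b) * g y) = a * f x + b * g y := by
      field_simp
    rw [e] at h2
    exact h2

lemma repCone_nonneg [CompactSpace X] (u v : ProbabilityMeasure X) (r : ℝ)
    (h : ((0 : C(KK X, ℝ)), r) ∈ repCone u v) : 0 ≤ r := by
  obtain ⟨f, g, t, ht, h1, h2⟩ := h
  refine le_trans ?_ h2
  simp only [ContinuousMap.zero_apply] at h1
  rcases ht.eq_or_lt with rfl | ht
  · have hf : ∀ x, 0 ≤ f x := fun x => by
      have := h1 (x, x, ⟨1, by simp⟩, ⟨0, by simp⟩) (by simp)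
      simpa [lift1, lift2] using this
    have hg : ∀ x, 0 ≤ g x := fun x => by
      have := h1 (x, x, ⟨0, by simp⟩, ⟨1, by simp⟩) (by simp)
      simpa [lift1, lift2] using this
    have := le_pairing u hf
    have := le_pairing v hg
    linarith
  · have hm : ((-t⁻¹) • f, (-t⁻¹) • g) ∈ D2 X := by
      refine mem_D2_of_simplex fun p hp => ?_
      have := mul_le_mul_of_nonneg_left (h1 p hp) (inv_nonneg.2 ht.le)
      have e : t⁻¹ * (t * cost X p) = cost X p := by field_simp
      rw [mul_add, e] at this
      simp only [lift1, lift2, ContinuousMap.coe_mk, ContinuousMap.smul_apply, smul_eq_mul] at *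
      linarith
    have := le_csSup (bdd_D2 u v) ⟨_, hm, rfl⟩
    simp only [pairing_smul] at this
    change _ ≤ d2 u v at this
    have h3 := mul_le_mul_of_nonneg_left this ht.le
    have e : t * (-t⁻¹ * pairing u f + -t⁻¹ * pairing v g) = - (pairing u f + pairing v g) := by
      field_simp
      ring
    rw [e] at h3
    linarith

lemma repCone_dense [CompactSpace X] (u v : ProbabilityMeasure X) (φ : C(KK X, ℝ)) :
    (φ, ‖φ‖ + ‖φ‖) ∈ repCone u v := by
  refine ⟨ContinuousMap.const X ‖φ‖, ContinuousMap.const X ‖φ‖, 0, le_rfl, fun p hp => ?_, ?_⟩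
  · have := (le_abs_self _).trans (φ.norm_coe_le_norm p)
    simp only [lift1, lift2, ContinuousMap.coe_mk, ContinuousMap.const_apply]
    nlinarith [norm_nonneg φ]
  · simp [pairing_const]

lemma exists_functional [CompactSpace X] (u v : ProbabilityMeasure X) :
    ∃ L : C(KK X, ℝ) →ₗ[ℝ] ℝ, ∀ φ r, (φ, r) ∈ repCone u v → L φ ≤ r := by
  let P : (C(KK X, ℝ) × ℝ) →ₗ.[ℝ] ℝ :=
    (LinearMap.snd ℝ C(KK X, ℝ) ℝ).toPMap (LinearMap.range (LinearMap.inr ℝ C(KK X, ℝ) ℝ))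
  obtain ⟨G, hG1, hG2⟩ := riesz_extension (repCone u v) P
    (by
      rintro ⟨_, r, rfl⟩ hx
      exact repCone_nonneg u v r hx)
    (by
      rintro ⟨φ, r⟩
      refine ⟨⟨_, (‖φ‖ + ‖φ‖ - r), rfl⟩, ?_⟩
      have := repCone_dense u v φ
      simpa using this)
  refine ⟨-(G.comp (LinearMap.inl ℝ _ _)), fun φ r h => ?_⟩
  have h1 : G (0, r) = r := hG1 ⟨_, r, rfl⟩
  have h2 := hG2 _ h
  have h3 : G (φ, r) = G (φ, 0) + G (0, r) := by rw [← map_add]; simp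
  simp only [LinearMap.neg_apply, LinearMap.comp_apply, LinearMap.inl_apply]
  linarith

lemma d3_le_d2 [CompactSpace X] (u v : ProbabilityMeasure X) :
    (M3 u v).Nonempty ∧ d3 u v ≤ d2 u v := by
  obtain ⟨L, hL⟩ := exists_functional u v
  obtain ⟨γ, hfin, hγ⟩ := exists_measure L (by
    intro φ hφ
    have := hL (-φ) 0 ⟨0, 0, 0, le_rfl, fun p _ => by simpa [lift1, lift2] using hφ p,
      by simp [pairing_zero]⟩
    rw [map_neg] at this
    linarith)
  have le1 : ∀ f, L (lift1 f) ≤ pairing u f := fun f =>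
    hL _ _ ⟨f, 0, 0, le_rfl, fun p _ => by simp [lift2], by simp [pairing_zero]⟩
  have le2 : ∀ f, L (lift2 f) ≤ pairing v f := fun f =>
    hL _ _ ⟨0, f, 0, le_rfl, fun p _ => by simp [lift1], by simp [pairing_zero]⟩
  have n1 : ∀ f : C(X, ℝ), lift1 (-f) = - lift1 f := fun f => by ext; simp [lift1]
  have n2 : ∀ f : C(X, ℝ), lift2 (-f) = - lift2 f := fun f => by ext; simp [lift2]
  have eq1 : ∀ f, L (lift1 f) = pairing u f := fun f => by
    have := le1 (-f)
    rw [n1, map_neg, pairing_neg] at this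
    linarith [le1 f]
  have eq2 : ∀ f, L (lift2 f) = pairing v f := fun f => by
    have := le2 (-f)
    rw [n2, map_neg, pairing_neg] at this
    linarith [le2 f]
  have hM : γ ∈ M3 u v :=
    ⟨hfin, fun f => ⟨(hγ (lift1 f)).trans (eq1 f), (hγ (lift2 f)).trans (eq2 f)⟩⟩
  refine ⟨⟨γ, hM⟩, ?_⟩
  have hc : ∫ p, cost X p ∂γ ≤ d2 u v := by
    rw [hγ]
    exact hL _ _ ⟨0, 0, 1, zero_le_one, fun p _ => by simp [lift1, lift2], by simp [pairing_zero]⟩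
  refine le_trans (csInf_le ⟨0, ?_⟩ ⟨γ, hM, rfl⟩) hc
  rintro _ ⟨γ', _, rfl⟩
  exact integral_nonneg fun p => norm_nonneg _

lemma d2plus_le_d3 [CompactSpace X] (u v : ProbabilityMeasure X) : d2plus u v ≤ d3 u v := by
  refine le_csInf ((d3_le_d2 u v).1.image _) ?_
  rintro _ ⟨γ, hγ, rfl⟩
  exact d2plus_le_cost u v γ hγ

end helpers

end Stmt0

/-- **Theorem 1 (Renault–Venel).** For all Borel probability measures `u, v` on a compact
subset `X` of a real normed vector space, `d₁(u,v) = d₂(u,v) = d₂⁺(u,v) = d₃(u,v)`. -/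
theorem stmt0 {V : Type*} [NormedAddCommGroup V] [NormedSpace ℝ V]
    [MeasurableSpace V] [BorelSpace V] (X : Set V) (hX : IsCompact X)
    (u v : ProbabilityMeasure X) :
    Stmt0.d1 u v = Stmt0.d2 u v ∧ Stmt0.d2 u v = Stmt0.d2plus u v ∧
      Stmt0.d2plus u v = Stmt0.d3 u v := by
  haveI : CompactSpace X := isCompact_iff_compactSpace.1 hX
  have h1 := Stmt0.d1_le_d2 u v
  have h2 := Stmt0.d2_le_d1 u v
  have h3 := Stmt0.d2_le_d2plus u v
  have h4 := Stmt0.d2plus_le_d3 u v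
  have h5 := (Stmt0.d3_le_d2 u v).2
  exact ⟨le_antisymm h1 h2, le_antisymm h3 (h4.trans h5), le_antisymm h4 (h5.trans h3)⟩
end

section
/- Fix ε > 0 and f ∈ C(X,ℝ) such that a·f(x) ≤ ε + a·‖x‖ for all x ∈ X and a ∈ [0,1]. Define f̂ : X → ℝ by f̂(y) = inf over a ∈ [0,1], b ∈ (0,1], x ∈ X of (1/b)·(ε + ‖a·x − b·y‖ − a·f(x)). Then: (i) for each y ∈ X, −‖y‖ ≤ f̂(y) ≤ −f(y) + ε; (ii) f̂ is 1-Lipschitz (hence continuous); (iii) for all x, y ∈ X and all a, b ∈ [0,1], a·f̂(x) − b·f̂(y) ≤ a·ε + ‖b·y − a·x‖. -/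
open Set

/-- **Lemma 1 (Renault–Venel).** Let `X` be a compact subset of a real normed vector
space, `ε > 0`, and `f ∈ C(X,ℝ)` with `a·f(x) ≤ ε + a·‖x‖` for all `x ∈ X`, `a ∈ [0,1]`.
Define `f̂(y) = inf_{a ∈ [0,1], b ∈ (0,1], x ∈ X} (1/b)·(ε + ‖a·x − b·y‖ − a·f(x))`. Then
`−‖y‖ ≤ f̂(y) ≤ −f(y) + ε` for each `y`, `f̂` is 1-Lipschitz, and for all `x, y ∈ X` and
`a, b ∈ [0,1]`, `a·f̂(x) − b·f̂(y) ≤ a·ε + ‖b·y − a·x‖`. -/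
theorem stmt1 {V : Type*} [NormedAddCommGroup V] [NormedSpace ℝ V]
    (X : Set V) (hX : IsCompact X) (ε : ℝ) (hε : 0 < ε) (f : C(X, ℝ))
    (hf : ∀ (x : X) (a : ℝ), a ∈ Icc (0:ℝ) 1 → a * f x ≤ ε + a * ‖(x : V)‖)
    (fhat : X → ℝ)
    (hfhat : ∀ y : X, fhat y =
      sInf {r : ℝ | ∃ a ∈ Icc (0:ℝ) 1, ∃ b ∈ Ioc (0:ℝ) 1, ∃ x : X,
        r = (1 / b) * (ε + ‖a • (x : V) - b • (y : V)‖ - a * f x)}) :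
    (∀ y : X, -‖(y : V)‖ ≤ fhat y ∧ fhat y ≤ -f y + ε) ∧
    LipschitzWith 1 fhat ∧
    (∀ (x y : X) (a b : ℝ), a ∈ Icc (0:ℝ) 1 → b ∈ Icc (0:ℝ) 1 →
      a * fhat x - b * fhat y ≤ a * ε + ‖b • (y : V) - a • (x : V)‖) := by
  have hlow : ∀ (y x : X) (a b : ℝ), a ∈ Icc (0:ℝ) 1 → b ∈ Ioc (0:ℝ) 1 →
      -‖(y : V)‖ ≤ (1 / b) * (ε + ‖a • (x : V) - b • (y : V)‖ - a * f x) := by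
    intro y x a b ha hb
    have h1 := hf x a ha
    have h2 := norm_sub_norm_le (a • (x : V)) (b • (y : V))
    rw [norm_smul, norm_smul, Real.norm_of_nonneg ha.1, Real.norm_of_nonneg hb.1.le] at h2
    rw [one_div, inv_mul_eq_div, le_div_iff₀ hb.1]
    linarith
  have hle : ∀ (y x : X) (a b : ℝ), a ∈ Icc (0:ℝ) 1 → b ∈ Ioc (0:ℝ) 1 →
      fhat y ≤ (1 / b) * (ε + ‖a • (x : V) - b • (y : V)‖ - a * f x) := by
    intro y x a b ha hb
    rw [hfhat y]
    refine csInf_le ⟨-‖(y : V)‖, ?_⟩ ⟨a, ha, b, hb, x, rfl⟩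
    rintro r ⟨a, ha, b, hb, x, rfl⟩
    exact hlow y x a b ha hb
  have hge : ∀ (y : X) (c : ℝ), (∀ (x : X) (a b : ℝ), a ∈ Icc (0:ℝ) 1 → b ∈ Ioc (0:ℝ) 1 →
      c ≤ (1 / b) * (ε + ‖a • (x : V) - b • (y : V)‖ - a * f x)) → c ≤ fhat y := by
    intro y c h
    rw [hfhat y]
    refine le_csInf ⟨_, 0, by simp, 1, by simp, y, rfl⟩ ?_
    rintro r ⟨a, ha, b, hb, x, rfl⟩
    exact h x a b ha hb
  have hl : ∀ y : X, -‖(y : V)‖ ≤ fhat y := fun y => hge y _ (hlow y)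
  refine ⟨fun y => ⟨hl y, ?_⟩, ?_, ?_⟩
  · have h := hle y y 1 1 (by simp) (by simp)
    simp at h
    linarith
  · refine LipschitzWith.of_le_add_mul 1 fun y z => ?_
    have : fhat y - dist y z ≤ fhat z := by
      refine hge z _ fun x a b ha hb => ?_
      have h := hle y x a b ha hb
      rw [Subtype.dist_eq, dist_eq_norm]
      rw [one_div, inv_mul_eq_div, le_div_iff₀ hb.1] at h ⊢
      have h2 := norm_add_le (a • (x : V) - b • (z : V)) (-(b • ((y : V) - z)))
      rw [norm_neg, norm_smul, Real.norm_of_nonneg hb.1.le,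
        show a • (x : V) - b • (z : V) + -(b • ((y : V) - z)) = a • (x : V) - b • (y : V) by
          module] at h2
      linarith
    simp only [NNReal.coe_one, one_mul]
    linarith
  · intro x y a b ha hb
    rcases ha.1.eq_or_lt with rfl | ha0
    · have := hl y
      simp only [zero_mul, zero_smul, sub_zero, zero_sub, zero_add, norm_smul,
        Real.norm_of_nonneg hb.1]
      nlinarith [hb.1]
    rcases hb.1.eq_or_lt with rfl | hb0
    · have h := hle x x 0 1 (by simp) (by simp)
      simp only [zero_smul, zero_sub, norm_neg, norm_smul, zero_mul, Real.norm_of_nonneg ha.1]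
      simp at h
      nlinarith
    have key : (a * fhat x - a * ε - ‖b • (y : V) - a • (x : V)‖) / b ≤ fhat y := by
      refine hge y _ fun z p q hp hq => ?_
      have hq0 := hq.1
      rw [div_le_iff₀ hb0]
      obtain ⟨t, ht⟩ : ∃ t, t = b * p / (q * a) := ⟨_, rfl⟩
      have ht0 : 0 ≤ t := by
        rw [ht]; exact div_nonneg (mul_nonneg hb.1 hp.1) (by positivity)
      have hat : a * t = b / q * p := by rw [ht]; field_simp
      -- the norm estimate
      have hn : a * ‖t • (z : V) - (x : V)‖ ≤
          b / q * ‖p • (z : V) - q • (y : V)‖ + ‖b • (y : V) - a • (x : V)‖ := by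
        have e : a • (t • (z : V) - (x : V)) =
            (b / q) • (p • (z : V) - q • (y : V)) + (b • (y : V) - a • (x : V)) := by
          rw [smul_sub, smul_sub, smul_smul, smul_smul, smul_smul, hat,
            div_mul_cancel₀ b hq0.ne']
          abel
        have h := norm_add_le ((b / q) • (p • (z : V) - q • (y : V))) (b • (y : V) - a • (x : V))
        rw [← e, norm_smul, norm_smul, Real.norm_of_nonneg ha.1,
          Real.norm_of_nonneg (by positivity : 0 ≤ b / q)] at h
        exact h
      have hbq : 0 < b / q := by positivity
      have hm : a * fhat x ≤ a * ε + b / q * ε + a * ‖t • (z : V) - (x : V)‖ - a * t * f z := by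
        rcases le_or_gt t 1 with h1 | h1
        · have h := hle x z t 1 ⟨ht0, h1⟩ (by simp)
          simp only [one_smul, div_one, one_mul] at h
          nlinarith [mul_le_mul_of_nonneg_left h ha.1, mul_pos hbq hε]
        · have htp : 0 < t := by linarith
          have h := hle x z 1 t⁻¹ (by simp) ⟨by positivity, inv_le_one_of_one_le₀ h1.le⟩
          have e : (z : V) - t⁻¹ • (x : V) = t⁻¹ • (t • (z : V) - (x : V)) := by
            rw [smul_sub, smul_smul, inv_mul_cancel₀ htp.ne', one_smul]
          rw [one_smul, e, norm_smul, Real.norm_of_nonneg (inv_nonneg.2 ht0)] at h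
          have e2 : 1 / t⁻¹ * (ε + t⁻¹ * ‖t • (z : V) - (x : V)‖ - 1 * f z) =
              t * ε + ‖t • (z : V) - (x : V)‖ - t * f z := by
            field_simp
          rw [e2] at h
          have h3 : a * t * ε ≤ b / q * ε := by
            rw [hat]
            exact mul_le_mul_of_nonneg_right (mul_le_of_le_one_right hbq.le hp.2) hε.le
          nlinarith [mul_le_mul_of_nonneg_left h ha.1, mul_pos ha0 hε]
      rw [hat] at hm
      have e3 : 1 / q * (ε + ‖p • (z : V) - q • (y : V)‖ - p * f z) * b =
          b / q * ε + b / q * ‖p • (z : V) - q • (y : V)‖ - b / q * p * f z := by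
        ring
      rw [e3]
      linarith
    rw [div_le_iff₀ hb0] at key
    linarith
end

section
/- For all Borel probability measures u and v on X, d_2^+(u,v) ≥ d_3(u,v). -/
open MeasureTheory Set

namespace Stmt2

variable {V : Type*} [NormedAddCommGroup V] [NormedSpace ℝ V]
  [MeasurableSpace V] [BorelSpace V]

/-- The pairing `u(f) = ∫_X f du`. -/
noncomputable def pairing {X : Set V} (u : ProbabilityMeasure X) (f : C(X, ℝ)) : ℝ :=
  ∫ x, f x ∂(u : Measure X)

/-- `D₂^ε`, where `a, b` range over `[0,1]`. -/
def D2eps (X : Set V) (ε : ℝ) : Set (C(X, ℝ) × C(X, ℝ)) :=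
  {fg | ∀ x y : X, ∀ a b : ℝ, a ∈ Icc (0:ℝ) 1 → b ∈ Icc (0:ℝ) 1 →
    a * fg.1 x + b * fg.2 y ≤ ε + ‖a • (x : V) - b • (y : V)‖}

noncomputable def d2eps {X : Set V} (ε : ℝ) (u v : ProbabilityMeasure X) : ℝ :=
  sSup ((fun fg => pairing u fg.1 + pairing v fg.2) '' D2eps X ε)

noncomputable def d2plus {X : Set V} (u v : ProbabilityMeasure X) : ℝ :=
  sInf ((fun ε => d2eps ε u v) '' Ioi (0:ℝ))

/-- `M₃(u,v)`: finite positive measures `γ` on `X²×[0,1]²` whose suitably weighted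
marginals are `u` and `v`. -/
def M3 {X : Set V} (u v : ProbabilityMeasure X) :
    Set (Measure (X × X × Icc (0:ℝ) 1 × Icc (0:ℝ) 1)) :=
  {γ | IsFiniteMeasure γ ∧ ∀ f : C(X, ℝ),
    (∫ p, (p.2.2.1 : ℝ) * f p.1 ∂γ = pairing u f) ∧
    (∫ p, (p.2.2.2 : ℝ) * f p.2.1 ∂γ = pairing v f)}

noncomputable def d3 {X : Set V} (u v : ProbabilityMeasure X) : ℝ :=
  sInf ((fun γ => ∫ p, ‖(p.2.2.1 : ℝ) • (p.1 : V) - (p.2.2.2 : ℝ) • ((p.2.1 : X) : V)‖ ∂γ) ''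
    M3 u v)

end Stmt2

namespace Stmt2

open CompactlySupported in
/-- Hahn-Banach + Riesz-Markov-Kakutani duality. -/
lemma exists_measure {K : Type*} [TopologicalSpace K] [T2Space K] [CompactSpace K]
    [MeasurableSpace K] [BorelSpace K] {M : Type*} [AddCommGroup M] [Module ℝ M]
    (w : C(K, ℝ)) (hw : ∀ k, 0 < w k) (T : M →ₗ[ℝ] C(K, ℝ)) (hT : Function.Injective T)
    (φ : M →ₗ[ℝ] ℝ) (S : ℝ) (h : ∀ m, (∀ k, T m k ≤ w k) → φ m ≤ S) :
    ∃ γ : Measure K, IsFiniteMeasure γ ∧ (∀ m, ∫ k, T m k ∂γ = φ m) ∧ ∫ k, w k ∂γ ≤ S := by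
  have hS : 0 ≤ S := by
    have := h 0 (fun k => by simpa using (hw k).le)
    simpa using this
  let P : C(K, ℝ) → C(K, ℝ) := fun f =>
    ⟨fun k => max (f k / w k) 0, by
      have : ∀ k, w k ≠ 0 := fun k => (hw k).ne'
      fun_prop (disch := assumption)⟩
  have hP : ∀ f k, P f k = max (f k / w k) 0 := fun f k => rfl
  have hP0 : ∀ f k, 0 ≤ P f k := fun f k => le_max_right _ _
  have hPle : ∀ f k, f k ≤ ‖P f‖ * w k := fun f k => by
    have h1 : f k / w k ≤ ‖P f‖ :=
      ((le_max_left _ 0).trans (le_abs_self _)).trans ((P f).norm_coe_le_norm k)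
    rwa [div_le_iff₀ (hw k)] at h1
  let e := LinearEquiv.ofInjective T hT
  let F : C(K, ℝ) →ₗ.[ℝ] ℝ := ⟨LinearMap.range T, φ ∘ₗ e.symm.toLinearMap⟩
  obtain ⟨L, hL1, hL2⟩ := exists_extension_of_le_sublinear F (fun f => S * ‖P f‖) (by
      intro c hc f
      have : P (c • f) = c • P f := by
        ext k
        simp only [hP, ContinuousMap.smul_apply, smul_eq_mul]
        rw [mul_div_assoc, mul_max_of_nonneg _ _ hc.le, mul_zero]
      simp only [this, norm_smul, Real.norm_eq_abs, abs_of_pos hc]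
      ring) (by
      intro f g
      rw [← mul_add]
      refine mul_le_mul_of_nonneg_left ?_ hS
      rw [ContinuousMap.norm_le _ (by positivity)]
      intro k
      rw [Real.norm_eq_abs, abs_of_nonneg (hP0 _ _), hP]
      refine max_le ?_ (by positivity)
      rw [div_le_iff₀ (hw k), add_mul]
      exact add_le_add (hPle f k) (hPle g k)) (by
      rintro ⟨_, m, rfl⟩
      have hm : F ⟨T m, m, rfl⟩ = φ m := by
        change φ (e.symm ⟨T m, m, rfl⟩) = φ m
        congr 1
        exact e.symm_apply_apply m
      rw [hm]
      change φ m ≤ S * ‖P (T m)‖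
      have key : ∀ t : ℝ, ‖P (T m)‖ < t → φ m ≤ S * t := by
        intro t ht
        have ht0 : 0 < t := (norm_nonneg _).trans_lt ht
        have := h (t⁻¹ • m) (fun k => by
          rw [map_smul, ContinuousMap.smul_apply, smul_eq_mul, inv_mul_le_iff₀ ht0]
          exact (hPle _ k).trans (mul_le_mul_of_nonneg_right ht.le (hw k).le))
        rw [map_smul, smul_eq_mul, inv_mul_le_iff₀ ht0] at this
        linarith
      refine le_of_forall_pos_le_add fun δ hδ => ?_
      have := key (‖P (T m)‖ + δ / (S + 1)) (by
        have : 0 < δ / (S + 1) := by positivity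
        linarith)
      have h2 : S * (δ / (S + 1)) ≤ δ := by
        rw [← mul_div_assoc, div_le_iff₀ (by positivity)]
        nlinarith
      linarith)
  have hLT : ∀ m, L (T m) = φ m := fun m => by
    have := hL1 ⟨T m, m, rfl⟩
    rw [this]
    change φ (e.symm ⟨T m, m, rfl⟩) = φ m
    congr 1
    exact e.symm_apply_apply m
  have hLpos : ∀ f : C(K, ℝ), (∀ k, 0 ≤ f k) → 0 ≤ L f := fun f hf => by
    have h1 := hL2 (-f)
    have h2 : P (-f) = 0 := by
      ext k
      rw [hP]
      simp only [ContinuousMap.neg_apply, ContinuousMap.zero_apply]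
      apply max_eq_right
      rw [neg_div]
      have := div_nonneg (hf k) (hw k).le
      linarith
    simp only [map_neg, h2, norm_zero, mul_zero] at h1
    linarith
  have hLw : L w ≤ S := by
    refine (hL2 w).trans ?_
    have : ‖P w‖ ≤ 1 := by
      rw [ContinuousMap.norm_le _ zero_le_one]
      intro k
      rw [Real.norm_eq_abs, abs_of_nonneg (hP0 _ _), hP, div_self (hw k).ne']
      simp
    nlinarith
  let Λ₀ : C_c(K, ℝ) →ₗ[ℝ] ℝ :=
    { toFun := fun f => L f.toContinuousMap
      map_add' := fun f g => by
        rw [← map_add]; rfl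
      map_smul' := fun c f => by
        rw [← map_smul]; rfl }
  let Λ : C_c(K, ℝ) →ₚ[ℝ] ℝ := PositiveLinearMap.mk₀ Λ₀ (fun f hf => hLpos _ (fun k => hf k))
  have hint : ∀ f : C(K, ℝ), ∫ k, f k ∂(RealRMK.rieszMeasure Λ) = L f := fun f =>
    RealRMK.integral_rieszMeasure Λ (CompactlySupportedContinuousMap.continuousMapEquiv f)
  refine ⟨RealRMK.rieszMeasure Λ, inferInstance, fun m => ?_, ?_⟩
  · rw [hint, hLT]
  · rw [hint]; exact hLw

section
variable {V : Type*} [NormedAddCommGroup V] [NormedSpace ℝ V]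
  [MeasurableSpace V] [BorelSpace V]

lemma cont_integrable {X : Set V} [CompactSpace X] (u : ProbabilityMeasure X) (f : C(X, ℝ)) :
    Integrable (fun x => f x) (u : Measure X) :=
  f.continuous.integrable_of_hasCompactSupport (HasCompactSupport.of_compactSpace _)

lemma bdd {X : Set V} [CompactSpace X] (ε : ℝ) (u v : ProbabilityMeasure X) :
    BddAbove ((fun fg => pairing u fg.1 + pairing v fg.2) '' D2eps X ε) := by
  obtain ⟨R, hR⟩ := (isCompact_iff_compactSpace.mpr ‹CompactSpace X›).isBounded.exists_norm_le
  refine ⟨ε + 2 * R, ?_⟩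
  rintro _ ⟨⟨f, g⟩, hfg, rfl⟩
  have h1 : ∀ x y : X, f x + g y ≤ ε + 2 * R := fun x y => by
    have := hfg x y 1 1 (by simp) (by simp)
    simp only [one_mul, one_smul] at this
    have h2 := norm_sub_le (x : V) (y : V)
    have := hR x x.2
    have := hR y y.2
    linarith
  have h2 : ∀ y : X, pairing u f + g y ≤ ε + 2 * R := fun y => by
    have : pairing u f ≤ ∫ _x, (ε + 2 * R - g y) ∂(u : Measure X) :=
      integral_mono (cont_integrable u f) (integrable_const _)
        (fun x => by have := h1 x y; change f x ≤ _; linarith)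
    simp at this
    linarith
  have : pairing v g ≤ ∫ _x, (ε + 2 * R - pairing u f) ∂(v : Measure X) :=
    integral_mono (cont_integrable v g) (integrable_const _)
      (fun x => by have := h2 x; change g x ≤ _; linarith)
  simp at this
  change pairing u f + pairing v g ≤ _
  linarith

lemma d3_le {X : Set V} (hX : IsCompact X) (u v : ProbabilityMeasure X) (ε : ℝ) (hε : 0 < ε) :
    d3 u v ≤ d2eps ε u v := by
  have : CompactSpace X := isCompact_iff_compactSpace.mp hX
  obtain ⟨x₀⟩ : Nonempty X := (u : Measure X).nonempty_of_neZero
  let c : C(X × X × Icc (0:ℝ) 1 × Icc (0:ℝ) 1, ℝ) :=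
    ⟨fun p => ‖(p.2.2.1 : ℝ) • (p.1 : V) - (p.2.2.2 : ℝ) • ((p.2.1 : X) : V)‖, by fun_prop⟩
  let w : C(X × X × Icc (0:ℝ) 1 × Icc (0:ℝ) 1, ℝ) := ⟨fun p => ε + c p, by fun_prop⟩
  let T : (C(X, ℝ) × C(X, ℝ)) →ₗ[ℝ] C(X × X × Icc (0:ℝ) 1 × Icc (0:ℝ) 1, ℝ) :=
    { toFun := fun fg => ⟨fun p => (p.2.2.1 : ℝ) * fg.1 p.1 + (p.2.2.2 : ℝ) * fg.2 p.2.1,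
        by fun_prop⟩
      map_add' := fun a b => by ext p; simp; ring
      map_smul' := fun a b => by ext p; simp; ring }
  have hTa : ∀ fg p, T fg p = (p.2.2.1 : ℝ) * fg.1 p.1 + (p.2.2.2 : ℝ) * fg.2 p.2.1 :=
    fun _ _ => rfl
  let φ : (C(X, ℝ) × C(X, ℝ)) →ₗ[ℝ] ℝ :=
    { toFun := fun fg => pairing u fg.1 + pairing v fg.2
      map_add' := fun a b => by
        simp only [pairing, Prod.fst_add, Prod.snd_add, ContinuousMap.add_apply]
        rw [integral_add (cont_integrable u _) (cont_integrable u _),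
          integral_add (cont_integrable v _) (cont_integrable v _)]
        ring
      map_smul' := fun a b => by
        simp only [pairing, Prod.smul_fst, Prod.smul_snd, ContinuousMap.smul_apply,
          integral_smul, RingHom.id_apply, smul_add] }
  have hc0 : ∀ p, 0 ≤ c p := fun p => by
    change 0 ≤ ‖(p.2.2.1 : ℝ) • (p.1 : V) - (p.2.2.2 : ℝ) • ((p.2.1 : X) : V)‖
    exact norm_nonneg _
  obtain ⟨γ, hγ, hγ1, hγ2⟩ := exists_measure w (fun p => by
      have := hc0 p
      change 0 < ε + c p
      linarith) T (by
      rintro ⟨f, g⟩ ⟨f', g'⟩ h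
      have h' := fun p => DFunLike.congr_fun h p
      simp only [hTa] at h'
      refine Prod.ext ?_ ?_
      · ext x
        simpa using h' (x, x₀, 1, 0)
      · ext x
        simpa using h' (x₀, x, 0, 1)) φ (d2eps ε u v) (by
      intro fg h
      refine le_csSup (bdd ε u v) ⟨fg, ?_, rfl⟩
      intro x y a b ha hb
      exact h (x, y, ⟨a, ha⟩, ⟨b, hb⟩))
  have hcγ : ∫ p, c p ∂γ ≤ ∫ p, w p ∂γ := by
    refine integral_mono
      (c.continuous.integrable_of_hasCompactSupport (HasCompactSupport.of_compactSpace _))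
      (w.continuous.integrable_of_hasCompactSupport (HasCompactSupport.of_compactSpace _)) ?_
    intro p
    change c p ≤ ε + c p
    linarith
  refine le_trans ?_ (hcγ.trans hγ2)
  unfold d3
  refine csInf_le ⟨0, ?_⟩ ⟨γ, ⟨hγ, fun f => ⟨?_, ?_⟩⟩, rfl⟩
  · rintro _ ⟨γ', -, rfl⟩
    exact integral_nonneg fun p => norm_nonneg _
  · have := hγ1 (f, 0)
    simpa [hTa, φ, pairing] using this
  · have := hγ1 (0, f)
    simpa [hTa, φ, pairing] using this

end

end Stmt2

/-- **Proposition 2 (Renault–Venel).** For all Borel probability measures `u, v` on a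
compact subset `X` of a real normed vector space, `d₂⁺(u,v) ≥ d₃(u,v)`. -/
theorem stmt2 {V : Type*} [NormedAddCommGroup V] [NormedSpace ℝ V]
    [MeasurableSpace V] [BorelSpace V] (X : Set V) (hX : IsCompact X)
    (u v : ProbabilityMeasure X) :
    Stmt2.d2plus u v ≥ Stmt2.d3 u v := by
  refine le_csInf ⟨_, 1, by simp, rfl⟩ ?_
  rintro _ ⟨ε, hε, rfl⟩
  exact Stmt2.d3_le hX u v ε hε
end

section
/- If f and g belong to D_0 and λ ∈ [0,1], then −f, the pointwise maximum sup{f,g}, the pointwise minimum inf{f,g}, and the convex combination λ·f + (1−λ)·g all belong to D_0. Moreover the linear span of D_0 is dense in C(X,ℝ) for the uniform norm. -/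
open Set

namespace Stmt4

variable (K : Type*) [Fintype K]

/-- The simplex `Δ(K)` of probability vectors on `K`, inside `K → ℝ`
(endowed with the ℓ¹ norm, written explicitly as sums of absolute values below). -/
def Δ : Set (K → ℝ) := {p | (∀ k, 0 ≤ p k) ∧ ∑ k, p k = 1}

/-- The probability simplex on `Fin n`. -/
def fsimplex (n : ℕ) : Set (Fin n → ℝ) := {x | (∀ i, 0 ≤ x i) ∧ ∑ i, x i = 1}

/-- The value `max_{x ∈ Δ(I)} min_{y ∈ Δ(J)} Σ_{i,j} x(i)·y(j)·M(i,j)` of a matrix game. -/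
noncomputable def matValue {n m : ℕ} (M : Fin n → Fin m → ℝ) : ℝ :=
  sSup ((fun x => sInf ((fun y => ∑ i, ∑ j, x i * y j * M i j) '' fsimplex m)) '' fsimplex n)

/-- `D₀`: the set of non-revealing game functions `p ↦ Val(Σ_k p^k G^k)`, for families
`(G^k)` of `I×J` matrices with entries in `[−1,1]` (with `I`, `J` nonempty finite). -/
def D0 : Set C(Δ K, ℝ) :=
  {f | ∃ (n m : ℕ), 0 < n ∧ 0 < m ∧ ∃ G : K → Fin n → Fin m → ℝ,
    (∀ k i j, G k i j ∈ Icc (-1 : ℝ) 1) ∧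
    ∀ p : Δ K, f p = matValue (fun i j => ∑ k, (p : K → ℝ) k * G k i j)}

end Stmt4

namespace Stmt4

/-- `v` is the value of the matrix game `M`, witnessed by optimal mixed strategies. -/
def IsVal {I J : Type} [Fintype I] [Fintype J] (M : I → J → ℝ) (v : ℝ) : Prop :=
  ∃ x ∈ stdSimplex ℝ I, ∃ y ∈ stdSimplex ℝ J,
    (∀ j, v ≤ ∑ i, x i * M i j) ∧ (∀ i, ∑ j, y j * M i j ≤ v)

lemma exists_isVal {I J : Type} [Fintype I] [Fintype J] [Nonempty I] [Nonempty J]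
    (M : I → J → ℝ) : ∃ v, IsVal M v := by
  classical
  have h := Sion.exists_isSaddlePointOn (X := stdSimplex ℝ J) (Y := stdSimplex ℝ I)
    (f := fun y x => ∑ i, ∑ j, x i * y j * M i j)
    ⟨_, single_mem_stdSimplex ℝ (Classical.arbitrary J)⟩ (convex_stdSimplex ℝ J)
    (isCompact_stdSimplex ℝ J)
    (fun x _ => (Continuous.continuousOn (by fun_prop)).lowerSemicontinuousOn)
    (fun x _ => ConvexOn.quasiconvexOn ⟨convex_stdSimplex ℝ J, by
      intro y _ y' _ a b _ _ _
      apply le_of_eq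
      simp only [smul_eq_mul, Finset.mul_sum, ← Finset.sum_add_distrib]
      refine Finset.sum_congr rfl fun i _ => Finset.sum_congr rfl fun j _ => ?_
      simp; ring⟩)
    (convex_stdSimplex ℝ I) ⟨_, single_mem_stdSimplex ℝ (Classical.arbitrary I)⟩
    (isCompact_stdSimplex ℝ I)
    (fun x _ => (Continuous.continuousOn (by fun_prop)).upperSemicontinuousOn)
    (fun x _ => ConcaveOn.quasiconcaveOn ⟨convex_stdSimplex ℝ I, by
      intro y _ y' _ a b _ _ _
      apply le_of_eq
      simp only [smul_eq_mul, Finset.mul_sum, ← Finset.sum_add_distrib]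
      refine Finset.sum_congr rfl fun i _ => Finset.sum_congr rfl fun j _ => ?_
      simp; ring⟩)
  obtain ⟨y, hy, x, hx, h⟩ := h
  refine ⟨∑ i, ∑ j, x i * y j * M i j, x, hx, y, hy, fun j => ?_, fun i => ?_⟩
  · have := h _ (single_mem_stdSimplex ℝ j) x hx
    refine this.trans (le_of_eq ?_)
    refine Finset.sum_congr rfl fun i _ => ?_
    rw [Finset.sum_eq_single j]
    · simp
    · intro b _ hb; simp [hb]
    · simp
  · have := h y hy _ (single_mem_stdSimplex ℝ i)
    refine le_trans (le_of_eq ?_) this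
    dsimp only
    rw [Finset.sum_eq_single i]
    · simp
    · intro b _ hb; simp [hb]
    · simp

lemma avg_le {J : Type} [Fintype J] {y a : J → ℝ} {v : ℝ} (hy : y ∈ stdSimplex ℝ J)
    (h : ∀ j, a j ≤ v) : ∑ j, y j * a j ≤ v := by
  calc ∑ j, y j * a j ≤ ∑ j, y j * v :=
        Finset.sum_le_sum fun j _ => mul_le_mul_of_nonneg_left (h j) (hy.1 j)
    _ = v := by rw [← Finset.sum_mul, hy.2, one_mul]

lemma le_avg {J : Type} [Fintype J] {y a : J → ℝ} {v : ℝ} (hy : y ∈ stdSimplex ℝ J)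
    (h : ∀ j, v ≤ a j) : v ≤ ∑ j, y j * a j := by
  calc v = ∑ j, y j * v := by rw [← Finset.sum_mul, hy.2, one_mul]
    _ ≤ ∑ j, y j * a j :=
        Finset.sum_le_sum fun j _ => mul_le_mul_of_nonneg_left (h j) (hy.1 j)

lemma pay_le {I J : Type} [Fintype I] [Fintype J] (M : I → J → ℝ) (x : I → ℝ) (y : J → ℝ) {v : ℝ}
    (hx : x ∈ stdSimplex ℝ I) (h : ∀ i, ∑ j, y j * M i j ≤ v) :
    ∑ i, ∑ j, x i * y j * M i j ≤ v := by
  have := avg_le hx h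
  simpa only [Finset.mul_sum, mul_assoc] using this

lemma le_pay {I J : Type} [Fintype I] [Fintype J] (M : I → J → ℝ) (x : I → ℝ) (y : J → ℝ) {v : ℝ}
    (hy : y ∈ stdSimplex ℝ J) (h : ∀ j, v ≤ ∑ i, x i * M i j) :
    v ≤ ∑ i, ∑ j, x i * y j * M i j := by
  have := le_avg hy h
  rw [Finset.sum_comm]
  simpa only [Finset.mul_sum, mul_assoc, mul_left_comm] using this

lemma IsVal.matValue_eq {n m : ℕ} {M : Fin n → Fin m → ℝ} {v : ℝ} (h : IsVal M v) :
    matValue M = v := by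
  obtain ⟨x, hx, y, hy, h1, h2⟩ := h
  have key : ∀ x' ∈ fsimplex n,
      sInf ((fun y => ∑ i, ∑ j, x' i * y j * M i j) '' fsimplex m) ≤ v := by
    intro x' hx'
    refine (csInf_le ?_ (mem_image_of_mem _ hy)).trans (pay_le M x' y hx' h2)
    exact ((isCompact_stdSimplex ℝ (Fin m)).image (by fun_prop)).bddBelow
  apply le_antisymm
  · refine csSup_le ⟨_, x, hx, rfl⟩ ?_
    rintro _ ⟨x', hx', rfl⟩
    exact key x' hx'
  · refine le_trans ?_ (le_csSup ⟨v, ?_⟩ (mem_image_of_mem _ hx))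
    · refine le_csInf ⟨_, y, hy, rfl⟩ ?_
      rintro _ ⟨y', hy', rfl⟩
      exact le_pay M x y' hy' h1
    · rintro _ ⟨x', hx', rfl⟩
      exact key x' hx'

lemma isVal_matValue {n m : ℕ} (hn : 0 < n) (hm : 0 < m) (M : Fin n → Fin m → ℝ) :
    IsVal M (matValue M) := by
  have : Nonempty (Fin n) := ⟨⟨0, hn⟩⟩
  have : Nonempty (Fin m) := ⟨⟨0, hm⟩⟩
  obtain ⟨v, hv⟩ := exists_isVal M
  rwa [hv.matValue_eq]

lemma comp_equiv_mem {I I' : Type} [Fintype I] [Fintype I'] (e : I' ≃ I) {x : I → ℝ}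
    (hx : x ∈ stdSimplex ℝ I) : x ∘ e ∈ stdSimplex ℝ I' :=
  ⟨fun _ => hx.1 _, (e.sum_comp x).trans hx.2⟩

lemma IsVal.reindex {I J I' J' : Type} [Fintype I] [Fintype J] [Fintype I'] [Fintype J']
    (e : I' ≃ I) (e' : J' ≃ J) {M : I → J → ℝ} {v : ℝ} (h : IsVal M v) :
    IsVal (fun i j => M (e i) (e' j)) v := by
  obtain ⟨x, hx, y, hy, h1, h2⟩ := h
  refine ⟨x ∘ e, comp_equiv_mem e hx, y ∘ e', comp_equiv_mem e' hy, fun j => ?_, fun i => ?_⟩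
  · exact (h1 (e' j)).trans (e.sum_comp (fun i => x i * M i (e' j))).ge
  · exact (e'.sum_comp (fun j => y j * M (e i) j)).le.trans (h2 (e i))

lemma mem_D0_of {K : Type*} [Fintype K] {f : C(Δ K, ℝ)} {I J : Type} [Fintype I] [Fintype J]
    [Nonempty I] [Nonempty J] (G : K → I → J → ℝ) (hG : ∀ k i j, G k i j ∈ Icc (-1 : ℝ) 1)
    (h : ∀ p : Δ K, IsVal (fun i j => ∑ k, (p : K → ℝ) k * G k i j) (f p)) : f ∈ D0 K := by
  refine ⟨Fintype.card I, Fintype.card J, Fintype.card_pos, Fintype.card_pos,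
    fun k i j => G k ((Fintype.equivFin I).symm i) ((Fintype.equivFin J).symm j),
    fun k i j => hG _ _ _, fun p => ?_⟩
  exact ((h p).reindex (Fintype.equivFin I).symm (Fintype.equivFin J).symm).matValue_eq.symm

lemma D0_elim {K : Type*} [Fintype K] {f : C(Δ K, ℝ)} (hf : f ∈ D0 K) :
    ∃ (n m : ℕ), 0 < n ∧ 0 < m ∧ ∃ G : K → Fin n → Fin m → ℝ,
    (∀ k i j, G k i j ∈ Icc (-1 : ℝ) 1) ∧
    ∀ p : Δ K, IsVal (fun i j => ∑ k, (p : K → ℝ) k * G k i j) (f p) := by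
  obtain ⟨n, m, hn, hm, G, hG, h⟩ := hf
  refine ⟨n, m, hn, hm, G, hG, fun p => ?_⟩
  rw [h p]
  exact isVal_matValue hn hm _

lemma D0_neg {K : Type*} [Fintype K] {f : C(Δ K, ℝ)} (hf : f ∈ D0 K) : -f ∈ D0 K := by
  obtain ⟨n, m, hn, hm, G, hG, h⟩ := D0_elim hf
  have : Nonempty (Fin n) := ⟨⟨0, hn⟩⟩
  have : Nonempty (Fin m) := ⟨⟨0, hm⟩⟩
  refine mem_D0_of (I := Fin m) (J := Fin n) (fun k i j => - G k j i) (fun k i j => ?_)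
    (fun p => ?_)
  · have := hG k j i
    exact ⟨by linarith [this.2], by linarith [this.1]⟩
  · obtain ⟨x, hx, y, hy, h1, h2⟩ := h p
    refine ⟨y, hy, x, hx, fun j => ?_, fun i => ?_⟩
    · simpa using h2 j
    · simpa using h1 i

lemma prod_mem {A B : Type} [Fintype A] [Fintype B] {u : A → ℝ} {w : B → ℝ}
    (hu : u ∈ stdSimplex ℝ A) (hw : w ∈ stdSimplex ℝ B) :
    (fun q : A × B => u q.1 * w q.2) ∈ stdSimplex ℝ (A × B) := by
  refine ⟨fun q => mul_nonneg (hu.1 _) (hw.1 _), ?_⟩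
  rw [Fintype.sum_prod_type]
  simp only [← Finset.mul_sum, hw.2, mul_one, hu.2]

lemma sum_fst {A B : Type} [Fintype A] [Fintype B] {u : A → ℝ} {w : B → ℝ}
    (hw : w ∈ stdSimplex ℝ B) (a : A → ℝ) :
    ∑ q : A × B, u q.1 * w q.2 * a q.1 = ∑ i, u i * a i := by
  rw [Fintype.sum_prod_type]
  refine Finset.sum_congr rfl fun i _ => ?_
  simp only [← Finset.mul_sum, ← Finset.sum_mul, hw.2, mul_one]

lemma sum_snd {A B : Type} [Fintype A] [Fintype B] {u : A → ℝ} {w : B → ℝ}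
    (hu : u ∈ stdSimplex ℝ A) (a : B → ℝ) :
    ∑ q : A × B, u q.1 * w q.2 * a q.2 = ∑ i, w i * a i := by
  rw [Fintype.sum_prod_type_right]
  refine Finset.sum_congr rfl fun i _ => ?_
  simp only [← Finset.sum_mul, hu.2, one_mul]

lemma D0_sup {K : Type*} [Fintype K] {f g : C(Δ K, ℝ)} (hf : f ∈ D0 K) (hg : g ∈ D0 K) :
    f ⊔ g ∈ D0 K := by
  obtain ⟨n, m, hn, hm, G, hG, h⟩ := D0_elim hf
  obtain ⟨n', m', hn', hm', G', hG', h'⟩ := D0_elim hg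
  have : Nonempty (Fin n) := ⟨⟨0, hn⟩⟩
  have : Nonempty (Fin m) := ⟨⟨0, hm⟩⟩
  have : Nonempty (Fin n') := ⟨⟨0, hn'⟩⟩
  have : Nonempty (Fin m') := ⟨⟨0, hm'⟩⟩
  refine mem_D0_of (I := Fin n ⊕ Fin n') (J := Fin m × Fin m')
    (fun k i j => Sum.elim (fun i => G k i j.1) (fun i => G' k i j.2) i) ?_ (fun p => ?_)
  · rintro k (i | i) j
    · exact hG _ _ _
    · exact hG' _ _ _
  · obtain ⟨x, hx, y, hy, h1, h2⟩ := h p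
    obtain ⟨x', hx', y', hy', h1', h2'⟩ := h' p
    have hrow : ∀ i : Fin n ⊕ Fin n', ∑ j : Fin m × Fin m', y j.1 * y' j.2 *
        (∑ k, (p : K → ℝ) k * Sum.elim (fun i => G k i j.1) (fun i => G' k i j.2) i)
          ≤ (f ⊔ g) p := by
      rintro (i | i)
      · refine le_trans (le_of_eq ?_) ((h2 i).trans le_sup_left)
        exact sum_fst hy' (fun j => ∑ k, (p : K → ℝ) k * G k i j)
      · refine le_trans (le_of_eq ?_) ((h2' i).trans le_sup_right)
        exact sum_snd hy (fun j => ∑ k, (p : K → ℝ) k * G' k i j)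
    rcases le_total (g p) (f p) with hle | hle
    · refine ⟨Sum.elim x 0, ⟨?_, ?_⟩, _, prod_mem hy hy', fun j => ?_, hrow⟩
      · rintro (i | i)
        · exact hx.1 i
        · exact le_rfl
      · simpa using hx.2
      · rw [ContinuousMap.sup_apply, sup_eq_left.2 hle]
        simpa using h1 j.1
    · refine ⟨Sum.elim 0 x', ⟨?_, ?_⟩, _, prod_mem hy hy', fun j => ?_, hrow⟩
      · rintro (i | i)
        · exact le_rfl
        · exact hx'.1 i
      · simpa using hx'.2
      · rw [ContinuousMap.sup_apply, sup_eq_right.2 hle]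
        simpa using h1' j.2

lemma D0_inf {K : Type*} [Fintype K] {f g : C(Δ K, ℝ)} (hf : f ∈ D0 K) (hg : g ∈ D0 K) :
    f ⊓ g ∈ D0 K := by
  have := D0_neg (D0_sup (D0_neg hf) (D0_neg hg))
  convert this using 1
  ext p
  simp [max_neg_neg]

lemma D0_conv {K : Type*} [Fintype K] {f g : C(Δ K, ℝ)} (hf : f ∈ D0 K) (hg : g ∈ D0 K)
    {l : ℝ} (hl : l ∈ Icc (0 : ℝ) 1) : l • f + (1 - l) • g ∈ D0 K := by
  obtain ⟨n, m, hn, hm, G, hG, h⟩ := D0_elim hf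
  obtain ⟨n', m', hn', hm', G', hG', h'⟩ := D0_elim hg
  have : Nonempty (Fin n) := ⟨⟨0, hn⟩⟩
  have : Nonempty (Fin m) := ⟨⟨0, hm⟩⟩
  have : Nonempty (Fin n') := ⟨⟨0, hn'⟩⟩
  have : Nonempty (Fin m') := ⟨⟨0, hm'⟩⟩
  have hl0 : 0 ≤ l := hl.1
  have hl1 : 0 ≤ 1 - l := by linarith [hl.2]
  refine mem_D0_of (I := Fin n × Fin n') (J := Fin m × Fin m')
    (fun k i j => l * G k i.1 j.1 + (1 - l) * G' k i.2 j.2) ?_ (fun p => ?_)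
  · intro k i j
    exact (convex_Icc (-1 : ℝ) 1) (hG _ _ _) (hG' _ _ _) hl0 hl1 (by ring)
  · obtain ⟨x, hx, y, hy, h1, h2⟩ := h p
    obtain ⟨x', hx', y', hy', h1', h2'⟩ := h' p
    have e : ∀ (i : Fin n × Fin n') (j : Fin m × Fin m'),
        ∑ k, (p : K → ℝ) k * (l * G k i.1 j.1 + (1 - l) * G' k i.2 j.2) =
        l * (∑ k, (p : K → ℝ) k * G k i.1 j.1) +
          (1 - l) * ∑ k, (p : K → ℝ) k * G' k i.2 j.2 := by
      intro i j
      simp only [Finset.mul_sum, ← Finset.sum_add_distrib]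
      exact Finset.sum_congr rfl fun k _ => by ring
    refine ⟨_, prod_mem hx hx', _, prod_mem hy hy', fun j => ?_, fun i => ?_⟩
    · have E : ∑ i : Fin n × Fin n', x i.1 * x' i.2 *
          (∑ k, (p : K → ℝ) k * (l * G k i.1 j.1 + (1 - l) * G' k i.2 j.2)) =
          l * (∑ i, x i * ∑ k, (p : K → ℝ) k * G k i j.1) +
          (1 - l) * ∑ i, x' i * ∑ k, (p : K → ℝ) k * G' k i j.2 := by
        rw [← sum_fst (u := x) hx' (fun i => ∑ k, (p : K → ℝ) k * G k i j.1),
          ← sum_snd (w := x') hx (fun i => ∑ k, (p : K → ℝ) k * G' k i j.2), Finset.mul_sum, Finset.mul_sum,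
          ← Finset.sum_add_distrib]
        refine Finset.sum_congr rfl fun i _ => ?_
        rw [e]; ring
      refine le_trans ?_ E.ge
      exact add_le_add (mul_le_mul_of_nonneg_left (h1 _) hl0)
        (mul_le_mul_of_nonneg_left (h1' _) hl1)
    · have E : ∑ j : Fin m × Fin m', y j.1 * y' j.2 *
          (∑ k, (p : K → ℝ) k * (l * G k i.1 j.1 + (1 - l) * G' k i.2 j.2)) =
          l * (∑ j, y j * ∑ k, (p : K → ℝ) k * G k i.1 j) +
          (1 - l) * ∑ j, y' j * ∑ k, (p : K → ℝ) k * G' k i.2 j := by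
        rw [← sum_fst (u := y) hy' (fun j => ∑ k, (p : K → ℝ) k * G k i.1 j),
          ← sum_snd (w := y') hy (fun j => ∑ k, (p : K → ℝ) k * G' k i.2 j), Finset.mul_sum, Finset.mul_sum,
          ← Finset.sum_add_distrib]
        refine Finset.sum_congr rfl fun j _ => ?_
        rw [e]; ring
      refine le_trans E.le ?_
      exact add_le_add (mul_le_mul_of_nonneg_left (h2 _) hl0)
        (mul_le_mul_of_nonneg_left (h2' _) hl1)

lemma D0_linear {K : Type*} [Fintype K] {f : C(Δ K, ℝ)} (c : K → ℝ)
    (hc : ∀ k, c k ∈ Icc (-1 : ℝ) 1) (h : ∀ p : Δ K, f p = ∑ k, (p : K → ℝ) k * c k) :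
    f ∈ D0 K := by
  refine mem_D0_of (I := Unit) (J := Unit) (fun k _ _ => c k) (fun k _ _ => hc k) (fun p => ?_)
  refine ⟨fun _ => 1, ⟨fun _ => zero_le_one, by simp⟩, fun _ => 1,
    ⟨fun _ => zero_le_one, by simp⟩, fun j => ?_, fun i => ?_⟩
  · simp [h p]
  · simp [h p]

lemma D0_zero {K : Type*} [Fintype K] : (0 : C(Δ K, ℝ)) ∈ D0 K :=
  D0_linear 0 (fun k => by simp) (fun p => by simp)

/-- The cone generated by `D0`. -/
def L (K : Type*) [Fintype K] : Set C(Δ K, ℝ) := {f | ∃ a : ℝ, 0 < a ∧ ∃ g ∈ D0 K, f = a • g}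

lemma D0_scale {K : Type*} [Fintype K] {f : C(Δ K, ℝ)} (hf : f ∈ D0 K) {a c : ℝ}
    (ha : 0 < a) (hac : a ≤ c) : ∃ g ∈ D0 K, a • f = c • g := by
  have hc : 0 < c := ha.trans_le hac
  refine ⟨(a / c) • f + (1 - a / c) • 0,
    D0_conv hf D0_zero ⟨by positivity, (div_le_one hc).2 hac⟩, ?_⟩
  rw [smul_zero, add_zero, smul_smul, mul_div_cancel₀ _ hc.ne']

lemma L_sup {K : Type*} [Fintype K] {f g : C(Δ K, ℝ)} (hf : f ∈ L K) (hg : g ∈ L K) :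
    f ⊔ g ∈ L K := by
  obtain ⟨a, ha, f, hf, rfl⟩ := hf
  obtain ⟨b, hb, g, hg, rfl⟩ := hg
  obtain ⟨f', hf', e⟩ := D0_scale hf ha (le_max_left a b)
  obtain ⟨g', hg', e'⟩ := D0_scale hg hb (le_max_right a b)
  have hc : 0 < max a b := lt_max_of_lt_left ha
  refine ⟨max a b, hc, f' ⊔ g', D0_sup hf' hg', ?_⟩
  rw [e, e']
  ext p
  exact (mul_max_of_nonneg (f' p) (g' p) hc.le).symm

lemma L_neg {K : Type*} [Fintype K] {f : C(Δ K, ℝ)} (hf : f ∈ L K) : -f ∈ L K := by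
  obtain ⟨a, ha, f, hf, rfl⟩ := hf
  exact ⟨a, ha, -f, D0_neg hf, (smul_neg a f).symm⟩

lemma L_inf {K : Type*} [Fintype K] {f g : C(Δ K, ℝ)} (hf : f ∈ L K) (hg : g ∈ L K) :
    f ⊓ g ∈ L K := by
  have := L_neg (L_sup (L_neg hf) (L_neg hg))
  convert this using 1
  ext p
  simp [max_neg_neg]

lemma L_linear {K : Type*} [Fintype K] (c : K → ℝ) :
    ∃ f ∈ L K, ∀ p : Δ K, f p = ∑ k, (p : K → ℝ) k * c k := by
  have hs : 0 ≤ ∑ k, |c k| := Finset.sum_nonneg fun k _ => abs_nonneg _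
  have hpos : 0 < 1 + ∑ k, |c k| := by linarith
  let g : C(Δ K, ℝ) := ⟨fun p => ∑ k, (p : K → ℝ) k * (c k / (1 + ∑ k, |c k|)),
    continuous_finset_sum _ fun k _ =>
      ((continuous_apply k).comp continuous_subtype_val).mul continuous_const⟩
  refine ⟨(1 + ∑ k, |c k|) • g, ⟨_, hpos, g, D0_linear _ (fun k => ?_) (fun p => rfl), rfl⟩,
    fun p => ?_⟩
  · have : |c k| ≤ ∑ k, |c k| :=
      Finset.single_le_sum (f := fun k => |c k|) (fun k _ => abs_nonneg _) (Finset.mem_univ k)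
    have h3 := abs_le.1 (show |c k| ≤ 1 + ∑ k, |c k| by linarith)
    constructor
    · rw [le_div_iff₀ hpos]; linarith [h3.1]
    · rw [div_le_one hpos]; exact h3.2
  · change (1 + ∑ k, |c k|) * ∑ k, (p : K → ℝ) k * (c k / (1 + ∑ k, |c k|)) = _
    rw [Finset.mul_sum]
    exact Finset.sum_congr rfl fun k _ => by field_simp

lemma L_affine {K : Type*} [Fintype K] (k : K) (a b : ℝ) :
    ∃ f ∈ L K, ∀ p : Δ K, f p = a + b * (p : K → ℝ) k := by
  classical
  obtain ⟨f, hf, h⟩ := L_linear (fun k' => a + if k' = k then b else 0)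
  refine ⟨f, hf, fun p => ?_⟩
  rw [h p]
  simp only [mul_add, Finset.sum_add_distrib, ← Finset.sum_mul, p.2.2, one_mul]
  simp [mul_comm]

lemma L_sep {K : Type*} [Fintype K] [Nonempty K] : (L K).SeparatesPointsStrongly := by
  intro v x y
  by_cases hxy : x = y
  · subst hxy
    obtain ⟨f, hf, h⟩ := L_affine (Classical.arbitrary K) (v x) 0
    exact ⟨f, hf, by simp [h], by simp [h]⟩
  · have : ∃ k, (x : K → ℝ) k ≠ (y : K → ℝ) k := by
      by_contra! hc
      exact hxy (Subtype.ext (funext hc))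
    obtain ⟨k, hk⟩ := this
    have hk' : (x : K → ℝ) k - (y : K → ℝ) k ≠ 0 := sub_ne_zero.2 hk
    obtain ⟨f, hf, h⟩ := L_affine k
      (v x - (v x - v y) / ((x : K → ℝ) k - (y : K → ℝ) k) * (x : K → ℝ) k)
      ((v x - v y) / ((x : K → ℝ) k - (y : K → ℝ) k))
    refine ⟨f, hf, by rw [h]; ring, ?_⟩
    rw [h]
    field_simp
    ring

lemma dense_L {K : Type*} [Fintype K] [Nonempty K] : Dense (L K) := by
  have : CompactSpace (Δ K) := isCompact_iff_compactSpace.1 (isCompact_stdSimplex ℝ K)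
  rw [dense_iff_closure_eq]
  exact ContinuousMap.sublattice_closure_eq_top (L K) ⟨0, 1, one_pos, 0, D0_zero, by simp⟩
    (fun f hf g hg => L_inf hf hg) (fun f hf g hg => L_sup hf hg) L_sep

end Stmt4

/-- **Lemma 2 (Renault–Venel).** If `f, g ∈ D₀` and `λ ∈ [0,1]`, then `−f`, `f ⊔ g`,
`f ⊓ g` and `λ·f + (1−λ)·g` belong to `D₀`; moreover the linear span of `D₀` is dense
in `C(X,ℝ)` (for the uniform norm, `X = Δ(K)` being compact). -/
theorem stmt4 (K : Type*) [Fintype K] [Nonempty K] :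
    (∀ f g : C(Stmt4.Δ K, ℝ), ∀ l : ℝ, f ∈ Stmt4.D0 K → g ∈ Stmt4.D0 K →
      l ∈ Icc (0:ℝ) 1 →
      -f ∈ Stmt4.D0 K ∧ f ⊔ g ∈ Stmt4.D0 K ∧ f ⊓ g ∈ Stmt4.D0 K ∧
        l • f + (1 - l) • g ∈ Stmt4.D0 K) ∧
    Dense ((Submodule.span ℝ (Stmt4.D0 K) : Submodule ℝ C(Stmt4.Δ K, ℝ)) :
      Set C(Stmt4.Δ K, ℝ)) := by
  refine ⟨fun f g l hf hg hl => ⟨Stmt4.D0_neg hf, Stmt4.D0_sup hf hg, Stmt4.D0_inf hf hg,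
    Stmt4.D0_conv hf hg hl⟩, Stmt4.dense_L.mono ?_⟩
  rintro _ ⟨a, _, g, hg, rfl⟩
  exact Submodule.smul_mem _ a (Submodule.subset_span hg)
end

section
/- The closure of D_0 in C(X,ℝ) for the uniform norm is exactly D_1. -/
open Set

namespace Stmt5

variable (K : Type*) [Fintype K]

/-- The simplex `Δ(K)` of probability vectors on `K`, inside `K → ℝ`
(endowed with the ℓ¹ norm, written explicitly as sums of absolute values below). -/
def Δ : Set (K → ℝ) := {p | (∀ k, 0 ≤ p k) ∧ ∑ k, p k = 1}

/-- The probability simplex on `Fin n`. -/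
def fsimplex (n : ℕ) : Set (Fin n → ℝ) := {x | (∀ i, 0 ≤ x i) ∧ ∑ i, x i = 1}

/-- The value `max_{x ∈ Δ(I)} min_{y ∈ Δ(J)} Σ_{i,j} x(i)·y(j)·M(i,j)` of a matrix game. -/
noncomputable def matValue {n m : ℕ} (M : Fin n → Fin m → ℝ) : ℝ :=
  sSup ((fun x => sInf ((fun y => ∑ i, ∑ j, x i * y j * M i j) '' fsimplex m)) '' fsimplex n)

/-- `D₀`: the set of non-revealing game functions `p ↦ Val(Σ_k p^k G^k)`, for families
`(G^k)` of `I×J` matrices with entries in `[−1,1]` (with `I`, `J` nonempty finite). -/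
def D0 : Set C(Δ K, ℝ) :=
  {f | ∃ (n m : ℕ), 0 < n ∧ 0 < m ∧ ∃ G : K → Fin n → Fin m → ℝ,
    (∀ k i j, G k i j ∈ Icc (-1 : ℝ) 1) ∧
    ∀ p : Δ K, f p = matValue (fun i j => ∑ k, (p : K → ℝ) k * G k i j)}

/-- `D₁ = {f ∈ C(Δ(K),ℝ) : ∀ x,y, ∀ a,b ≥ 0, a·f(x) − b·f(y) ≤ ‖a·x − b·y‖₁}`. -/
def D1 : Set C(Δ K, ℝ) :=
  {f | ∀ x y : Δ K, ∀ a b : ℝ, 0 ≤ a → 0 ≤ b →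
    a * f x - b * f y ≤ ∑ k, |a * (x : K → ℝ) k - b * (y : K → ℝ) k|}

end Stmt5

namespace Stmt5

lemma exists_sep {K : Type*} [Fintype K] (x y : K → ℝ) (u v : ℝ)
    (h : ∀ α β : ℝ, α * u + β * v ≤ ∑ k, |α * x k + β * y k|) :
    ∃ g : K → ℝ, (∀ k, g k ∈ Icc (-1 : ℝ) 1) ∧ ∑ k, x k * g k = u ∧ ∑ k, y k * g k = v := by
  let L : (K → ℝ) →ₗ[ℝ] ℝ × ℝ :=
    { toFun := fun g => (∑ k, x k * g k, ∑ k, y k * g k)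
      map_add' := by
        intro a b
        simp [mul_add, Finset.sum_add_distrib]
      map_smul' := by
        intro c a
        simp [Finset.mul_sum, mul_left_comm] }
  have hLc : Continuous L := by
    change Continuous (fun g : K → ℝ => (∑ k, x k * g k, ∑ k, y k * g k))
    fun_prop
  let C : Set (K → ℝ) := Set.pi Set.univ (fun _ => Icc (-1 : ℝ) 1)
  have hC : IsCompact C := isCompact_univ_pi (fun _ => isCompact_Icc)
  have hCv : Convex ℝ C := convex_pi (fun _ _ => convex_Icc _ _)
  by_cases hm : (u, v) ∈ L '' C
  · obtain ⟨g, hg, he⟩ := hm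
    have he' : (∑ k, x k * g k, ∑ k, y k * g k) = (u, v) := he
    exact ⟨g, fun k => hg k (mem_univ _), (Prod.mk.inj he').1, (Prod.mk.inj he').2⟩
  · exfalso
    obtain ⟨F, c, h1, h2⟩ := geometric_hahn_banach_closed_point (hCv.linear_image L)
      (hC.image hLc).isClosed hm
    have hF : ∀ a b : ℝ, F (a, b) = F (1, 0) * a + F (0, 1) * b := by
      intro a b
      have : ((a, b) : ℝ × ℝ) = a • ((1, 0) : ℝ × ℝ) + b • ((0, 1) : ℝ × ℝ) := by simp
      rw [this, map_add, map_smul, map_smul]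
      simp [mul_comm]
    set α := F (1, 0)
    set β := F (0, 1)
    let g : K → ℝ := fun k => if 0 ≤ α * x k + β * y k then 1 else -1
    have hg : g ∈ C := by
      intro k _
      simp only [g]
      split_ifs <;> simp
    have h3 := h1 (L g) ⟨g, hg, rfl⟩
    have h4 : L g = (∑ k, x k * g k, ∑ k, y k * g k) := rfl
    rw [h4, hF, Finset.mul_sum, Finset.mul_sum, ← Finset.sum_add_distrib] at h3
    rw [hF] at h2
    have h5 : ∑ k, (α * (x k * g k) + β * (y k * g k)) = ∑ k, |α * x k + β * y k| := by
      refine Finset.sum_congr rfl fun k _ => ?_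
      simp only [g]
      split_ifs with hk
      · rw [abs_of_nonneg hk]; ring
      · rw [abs_of_neg (not_le.1 hk)]; ring
    have := h α β
    linarith

lemma payoff_shift {n m : ℕ} {M M' : Fin n → Fin m → ℝ} {c : ℝ}
    (h : ∀ i j, M i j ≤ M' i j + c) {x : Fin n → ℝ} {y : Fin m → ℝ}
    (hx : x ∈ fsimplex n) (hy : y ∈ fsimplex m) :
    ∑ i, ∑ j, x i * y j * M i j ≤ (∑ i, ∑ j, x i * y j * M' i j) + c := by
  have hc : ∑ i, ∑ j, x i * y j * c = c := by
    simp_rw [← Finset.sum_mul, ← Finset.mul_sum]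
    rw [hy.2]; simp [hx.2]
  calc _ ≤ ∑ i, ∑ j, x i * y j * (M' i j + c) :=
        Finset.sum_le_sum fun i _ => Finset.sum_le_sum fun j _ =>
          mul_le_mul_of_nonneg_left (h i j) (mul_nonneg (hx.1 i) (hy.1 j))
    _ = _ := by simp_rw [mul_add, Finset.sum_add_distrib]; rw [hc]

lemma exists_bound {n m : ℕ} (M : Fin n → Fin m → ℝ) : ∃ B : ℝ, ∀ i j, |M i j| ≤ B := by
  refine ⟨∑ i, ∑ j, |M i j|, fun i j => ?_⟩
  calc |M i j| ≤ ∑ j, |M i j| :=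
        Finset.single_le_sum (f := fun j => |M i j|) (fun _ _ => abs_nonneg _) (Finset.mem_univ j)
    _ ≤ _ := Finset.single_le_sum (f := fun i => ∑ j, |M i j|)
        (fun _ _ => Finset.sum_nonneg fun _ _ => abs_nonneg _) (Finset.mem_univ i)

lemma single_mem {n : ℕ} (i : Fin n) : (Pi.single i 1 : Fin n → ℝ) ∈ fsimplex n := by
  refine ⟨fun k => ?_, by simp⟩
  by_cases h : k = i
  · subst h; simp
  · simp [h]

lemma inner_bdd {n m : ℕ} (M : Fin n → Fin m → ℝ) {x : Fin n → ℝ} (hx : x ∈ fsimplex n) :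
    BddBelow ((fun y => ∑ i, ∑ j, x i * y j * M i j) '' fsimplex m) := by
  obtain ⟨B, hB⟩ := exists_bound M
  refine ⟨-B, ?_⟩
  rintro _ ⟨y, hy, rfl⟩
  have := payoff_shift (M := fun _ _ => 0) (M' := M) (c := B)
    (fun i j => by have := (abs_le.1 (hB i j)).1; linarith) hx hy
  simp at this
  simp only
  linarith

lemma outer_bdd {n m : ℕ} (hm : 0 < m) (M : Fin n → Fin m → ℝ) :
    BddAbove ((fun x => sInf ((fun y => ∑ i, ∑ j, x i * y j * M i j) '' fsimplex m))
      '' fsimplex n) := by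
  obtain ⟨B, hB⟩ := exists_bound M
  refine ⟨B, ?_⟩
  rintro _ ⟨x, hx, rfl⟩
  refine (csInf_le (inner_bdd M hx) ⟨_, single_mem ⟨0, hm⟩, rfl⟩).trans ?_
  have := payoff_shift (M := M) (M' := fun _ _ => 0) (c := B)
    (fun i j => by have := (abs_le.1 (hB i j)).2; linarith) hx (single_mem (⟨0, hm⟩ : Fin m))
  simpa using this

lemma le_matValue {n m : ℕ} (hm : 0 < m) (M : Fin n → Fin m → ℝ) {x : Fin n → ℝ}
    (hx : x ∈ fsimplex n) {c : ℝ} (h : ∀ y ∈ fsimplex m, c ≤ ∑ i, ∑ j, x i * y j * M i j) :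
    c ≤ matValue M := by
  refine le_trans ?_ (le_csSup (outer_bdd hm M) ⟨x, hx, rfl⟩)
  refine le_csInf ⟨_, _, single_mem ⟨0, hm⟩, rfl⟩ ?_
  rintro _ ⟨y, hy, rfl⟩
  exact h y hy

lemma matValue_le {n m : ℕ} (hn : 0 < n) (M : Fin n → Fin m → ℝ) {y : Fin m → ℝ}
    (hy : y ∈ fsimplex m) {c : ℝ} (h : ∀ x ∈ fsimplex n, ∑ i, ∑ j, x i * y j * M i j ≤ c) :
    matValue M ≤ c := by
  refine csSup_le ⟨_, _, single_mem ⟨0, hn⟩, rfl⟩ ?_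
  rintro _ ⟨x, hx, rfl⟩
  exact (csInf_le (inner_bdd M hx) ⟨y, hy, rfl⟩).trans (h x hx)

lemma matValue_shift {n m : ℕ} (hn : 0 < n) (hm : 0 < m) {M M' : Fin n → Fin m → ℝ} {c : ℝ}
    (h : ∀ i j, M i j ≤ M' i j + c) : matValue M ≤ matValue M' + c := by
  refine csSup_le ⟨_, _, single_mem ⟨0, hn⟩, rfl⟩ ?_
  rintro _ ⟨x, hx, rfl⟩
  rw [← sub_le_iff_le_add]
  refine le_matValue hm M' hx fun y hy => ?_
  rw [sub_le_iff_le_add]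
  exact (csInf_le (inner_bdd M hx) ⟨y, hy, rfl⟩).trans (payoff_shift h hx hy)

lemma matValue_smul {n m : ℕ} (M : Fin n → Fin m → ℝ) {a : ℝ} (ha : 0 ≤ a) :
    matValue (fun i j => a * M i j) = a * matValue M := by
  unfold matValue
  simp only [sSup_image', sInf_image']
  rw [Real.mul_iSup_of_nonneg ha]
  congr 1
  funext x
  rw [Real.mul_iInf_of_nonneg ha]
  congr 1
  funext y
  simp only [Finset.mul_sum]
  exact Finset.sum_congr rfl fun i _ => Finset.sum_congr rfl fun j _ => by ring

lemma D0_subset (K : Type*) [Fintype K] : D0 K ⊆ D1 K := by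
  rintro f ⟨n, m, hn, hm, G, hG, hf⟩ x y a b ha hb
  rw [hf, hf, ← matValue_smul _ ha, ← matValue_smul _ hb, sub_le_iff_le_add']
  refine matValue_shift hn hm fun i j => ?_
  rw [← sub_le_iff_le_add', Finset.mul_sum, Finset.mul_sum, ← Finset.sum_sub_distrib]
  refine Finset.sum_le_sum fun k _ => ?_
  have h1 : |G k i j| ≤ 1 := abs_le.2 (hG k i j)
  calc _ = (a * x.1 k - b * y.1 k) * G k i j := by ring
    _ ≤ |(a * x.1 k - b * y.1 k) * G k i j| := le_abs_self _
    _ = |a * x.1 k - b * y.1 k| * |G k i j| := abs_mul _ _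
    _ ≤ _ := mul_le_of_le_one_right (abs_nonneg _) h1

lemma D1_closed (K : Type*) [Fintype K] : IsClosed (D1 K) := by
  have : D1 K = ⋂ (x : Δ K) (y : Δ K) (a : ℝ) (b : ℝ) (_ : 0 ≤ a) (_ : 0 ≤ b),
      {f : C(Δ K, ℝ) | a * f x - b * f y ≤ ∑ k, |a * (x : K → ℝ) k - b * (y : K → ℝ) k|} := by
    ext f
    simp only [D1, mem_iInter, mem_setOf_eq]
  rw [this]
  refine isClosed_iInter fun x => isClosed_iInter fun y => isClosed_iInter fun a =>
    isClosed_iInter fun b => isClosed_iInter fun _ => isClosed_iInter fun _ => ?_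
  refine isClosed_le ?_ continuous_const
  exact ((continuous_eval_const (F := C(Δ K, ℝ)) x).const_mul a).sub
    ((continuous_eval_const (F := C(Δ K, ℝ)) y).const_mul b)

lemma D1_interp {K : Type*} [Fintype K] {f : C(Δ K, ℝ)} (hf : f ∈ D1 K) (x y : Δ K) :
    ∃ g : K → ℝ, (∀ k, g k ∈ Icc (-1 : ℝ) 1) ∧ ∑ k, x.1 k * g k = f x ∧
      ∑ k, y.1 k * g k = f y := by
  refine exists_sep x.1 y.1 (f x) (f y) fun α β => ?_
  have habs : ∀ z : Δ K, ∑ k, |z.1 k| = 1 := fun z => by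
    rw [← z.2.2]; exact Finset.sum_congr rfl fun k _ => abs_of_nonneg (z.2.1 k)
  have hle : ∀ z : Δ K, |f z| ≤ 1 := fun z => by
    have h1 := hf z z 1 0 zero_le_one le_rfl
    have h2 := hf z z 0 1 le_rfl zero_le_one
    simp [habs] at h1 h2
    exact abs_le.2 ⟨by linarith, h1⟩
  have hx := abs_le.1 (hle x)
  have hy := abs_le.1 (hle y)
  have hsum : ∑ k, (α * x.1 k + β * y.1 k) = α + β := by
    rw [Finset.sum_add_distrib, ← Finset.mul_sum, ← Finset.mul_sum, x.2.2, y.2.2]; ring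
  have hs := Finset.abs_sum_le_sum_abs (fun k => α * x.1 k + β * y.1 k) Finset.univ
  rw [hsum] at hs
  rcases le_total 0 α with ha | ha <;> rcases le_total 0 β with hb | hb
  · have := (abs_le.1 (le_refl |α + β|)).2
    nlinarith [mul_le_mul_of_nonneg_left hx.2 ha, mul_le_mul_of_nonneg_left hy.2 hb]
  · have := hf x y α (-β) ha (by linarith)
    simpa using this
  · have := hf y x β (-α) hb (by linarith)
    simp only [neg_mul, sub_neg_eq_add] at this
    calc _ = _ := add_comm _ _
      _ ≤ _ := this
      _ = _ := Finset.sum_congr rfl fun k _ => by rw [add_comm]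
  · have := neg_abs_le (α + β)
    nlinarith [mul_le_mul_of_nonpos_left hx.1 ha, mul_le_mul_of_nonpos_left hy.1 hb]

lemma matValue_continuous {K : Type*} [Fintype K] {n m : ℕ} (hn : 0 < n) (hm : 0 < m)
    (G : K → Fin n → Fin m → ℝ) (hG : ∀ k i j, G k i j ∈ Icc (-1 : ℝ) 1) :
    Continuous fun p : Δ K => matValue (fun i j => ∑ k, (p : K → ℝ) k * G k i j) := by
  have hlip : ∀ p q : Δ K, matValue (fun i j => ∑ k, (p : K → ℝ) k * G k i j) ≤
      matValue (fun i j => ∑ k, (q : K → ℝ) k * G k i j) + Fintype.card K * dist p q := by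
    intro p q
    refine matValue_shift hn hm fun i j => ?_
    rw [← sub_le_iff_le_add', ← Finset.sum_sub_distrib]
    calc _ ≤ ∑ _k : K, dist p q := Finset.sum_le_sum fun k _ => by
          have h1 : |G k i j| ≤ 1 := abs_le.2 (hG k i j)
          rw [← sub_mul]
          refine (le_abs_self _).trans ?_
          rw [abs_mul]
          exact (mul_le_of_le_one_right (abs_nonneg _) h1).trans (dist_le_pi_dist p.1 q.1 k)
      _ = _ := by simp
  exact (LipschitzWith.of_le_add_mul (Fintype.card K : NNReal)
    (by simpa using hlip)).continuous

lemma D1_subset (K : Type*) [Fintype K] [Nonempty K] : D1 K ⊆ closure (D0 K) := by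
  classical
  intro f hf
  have hcomp : IsCompact (Δ K) := isCompact_stdSimplex ℝ K
  haveI : CompactSpace (Δ K) := isCompact_iff_compactSpace.1 hcomp
  rw [Metric.mem_closure_iff]
  intro ε hε
  have hcard : (0 : ℝ) < Fintype.card K := by exact_mod_cast Fintype.card_pos
  set δ : ℝ := ε / (4 * Fintype.card K) with hδ
  have hδ0 : 0 < δ := by positivity
  have hcδ : Fintype.card K * δ = ε / 4 := by rw [hδ]; field_simp
  obtain ⟨t, -, htf, htc⟩ := (isCompact_univ (X := Δ K)).finite_cover_balls hδ0
  have hne : t.Nonempty := by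
    obtain ⟨k⟩ := ‹Nonempty K›
    have hp : (Pi.single k 1 : K → ℝ) ∈ Δ K := by
      refine ⟨fun l => ?_, by simp⟩
      by_cases h : l = k
      · subst h; simp
      · simp [h]
    have := htc (mem_univ (⟨_, hp⟩ : Δ K))
    simp only [mem_iUnion] at this
    obtain ⟨z, hz, -⟩ := this
    exact ⟨z, hz⟩
  haveI : Fintype t := htf.fintype
  haveI : Nonempty t := hne.to_subtype
  choose g hg1 hg2 hg3 using fun x y : t => D1_interp hf x.1 y.1
  let eI := Fintype.equivFin t
  let eJ := Fintype.equivFin (t → t)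
  have hn : 0 < Fintype.card t := Fintype.card_pos
  have hm : 0 < Fintype.card (t → t) := Fintype.card_pos
  let G : K → Fin (Fintype.card t) → Fin (Fintype.card (t → t)) → ℝ :=
    fun k i j => g (eI.symm i) (eJ.symm j (eI.symm i)) k
  have hG : ∀ k i j, G k i j ∈ Icc (-1 : ℝ) 1 := fun k i j => hg1 _ _ k
  refine ⟨⟨_, matValue_continuous hn hm G hG⟩, ⟨_, _, hn, hm, G, hG, fun p => rfl⟩, ?_⟩
  refine lt_of_le_of_lt (b := ε / 2) ?_ (by linarith)
  rw [ContinuousMap.dist_le (by linarith)]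
  intro p
  have hp := htc (mem_univ p)
  simp only [mem_iUnion] at hp
  obtain ⟨z, hz, hpz⟩ := hp
  rw [Metric.mem_ball] at hpz
  have hl1 : ∑ k, |p.1 k - z.1 k| ≤ ε / 4 := by
    calc _ ≤ ∑ _k : K, δ := Finset.sum_le_sum fun k _ =>
          (dist_le_pi_dist p.1 z.1 k).trans hpz.le
      _ = ε / 4 := by rw [← hcδ]; simp
  have hf1 : f p - f z ≤ ε / 4 := by
    have := hf p z 1 1 zero_le_one zero_le_one
    simp only [one_mul] at this
    exact this.trans hl1
  have hf2 : f z - f p ≤ ε / 4 := by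
    have := hf z p 1 1 zero_le_one zero_le_one
    simp only [one_mul] at this
    refine this.trans (le_trans (le_of_eq ?_) hl1)
    exact Finset.sum_congr rfl fun k _ => abs_sub_comm _ _
  have hlin : ∀ x y : t, |∑ k, p.1 k * g x y k - ∑ k, z.1 k * g x y k| ≤ ε / 4 := by
    intro x y
    rw [← Finset.sum_sub_distrib]
    refine (Finset.abs_sum_le_sum_abs _ _).trans (le_trans (Finset.sum_le_sum fun k _ => ?_) hl1)
    rw [← sub_mul, abs_mul]
    exact mul_le_of_le_one_right (abs_nonneg _) (abs_le.2 (hg1 x y k))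
  have hlow : f z - ε / 4 ≤ matValue (fun i j => ∑ k, p.1 k * G k i j) := by
    refine le_matValue hm _ (single_mem (eI ⟨z, hz⟩)) fun y hy => ?_
    rw [Finset.sum_eq_single (eI ⟨z, hz⟩) (by intro b _ hb; simp [hb]) (by simp)]
    simp only [Pi.single_eq_same, one_mul]
    calc f z - ε / 4 = ∑ j, y j * (f z - ε / 4) := by rw [← Finset.sum_mul, hy.2, one_mul]
      _ ≤ _ := Finset.sum_le_sum fun j _ => mul_le_mul_of_nonneg_left ?_ (hy.1 j)
    simp only [G, Equiv.symm_apply_apply]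
    have h1 := (abs_le.1 (hlin ⟨z, hz⟩ (eJ.symm j ⟨z, hz⟩))).1
    have h2 := hg2 ⟨z, hz⟩ (eJ.symm j ⟨z, hz⟩)
    simp only at h2
    linarith
  have hup : matValue (fun i j => ∑ k, p.1 k * G k i j) ≤ f z + ε / 4 := by
    refine matValue_le hn _ (single_mem (eJ fun _ => ⟨z, hz⟩)) fun x hx => ?_
    calc _ ≤ ∑ i, x i * (f z + ε / 4) := Finset.sum_le_sum fun i _ => ?_
      _ = f z + ε / 4 := by rw [← Finset.sum_mul, hx.2, one_mul]
    rw [Finset.sum_eq_single (eJ fun _ => ⟨z, hz⟩) (by intro b _ hb; simp [hb]) (by simp)]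
    simp only [Pi.single_eq_same, mul_one]
    refine mul_le_mul_of_nonneg_left ?_ (hx.1 i)
    simp only [G, Equiv.symm_apply_apply]
    have h1 := (abs_le.1 (hlin (eI.symm i) ⟨z, hz⟩)).2
    have h2 := hg3 (eI.symm i) ⟨z, hz⟩
    simp only at h2
    linarith
  rw [Real.dist_eq, abs_le]
  simp only [ContinuousMap.coe_mk]
  constructor <;> linarith

end Stmt5

/-- **Lemma 3 (Renault–Venel).** The closure of `D₀` in `C(X,ℝ)` for the uniform norm
(`X = Δ(K)` compact, so this is the closure for the compact-open topology) is `D₁`. -/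
theorem stmt5 (K : Type*) [Fintype K] [Nonempty K] :
    closure (Stmt5.D0 K) = Stmt5.D1 K := by
  exact Set.Subset.antisymm (closure_minimal (Stmt5.D0_subset K) (Stmt5.D1_closed K))
    (Stmt5.D1_subset K)
end

section
/- The map d_0 defined by d_0(u,v) = sup_{f ∈ D_0} (u(f) − v(f)) is a distance on Δ(X) which metrizes the weak-* topology on Δ(X), and d_0 = d_1 on Δ(X). -/
open Set MeasureTheory

namespace Stmt6

variable (K : Type*) [Fintype K]

/-- The simplex `Δ(K)` of probability vectors on `K`, inside `K → ℝ`
(endowed with the ℓ¹ norm, written explicitly as sums of absolute values below). -/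
def Δ : Set (K → ℝ) := {p | (∀ k, 0 ≤ p k) ∧ ∑ k, p k = 1}

/-- The probability simplex on `Fin n`. -/
def fsimplex (n : ℕ) : Set (Fin n → ℝ) := {x | (∀ i, 0 ≤ x i) ∧ ∑ i, x i = 1}

/-- The value `max_{x ∈ Δ(I)} min_{y ∈ Δ(J)} Σ_{i,j} x(i)·y(j)·M(i,j)` of a matrix game. -/
noncomputable def matValue {n m : ℕ} (M : Fin n → Fin m → ℝ) : ℝ :=
  sSup ((fun x => sInf ((fun y => ∑ i, ∑ j, x i * y j * M i j) '' fsimplex m)) '' fsimplex n)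

/-- `D₀`: the set of non-revealing game functions `p ↦ Val(Σ_k p^k G^k)`, for families
`(G^k)` of `I×J` matrices with entries in `[−1,1]` (with `I`, `J` nonempty finite). -/
def D0 : Set C(Δ K, ℝ) :=
  {f | ∃ (n m : ℕ), 0 < n ∧ 0 < m ∧ ∃ G : K → Fin n → Fin m → ℝ,
    (∀ k i j, G k i j ∈ Icc (-1 : ℝ) 1) ∧
    ∀ p : Δ K, f p = matValue (fun i j => ∑ k, (p : K → ℝ) k * G k i j)}

/-- `D₁ = {f ∈ C(Δ(K),ℝ) : ∀ x,y, ∀ a,b ≥ 0, a·f(x) − b·f(y) ≤ ‖a·x − b·y‖₁}`. -/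
def D1 : Set C(Δ K, ℝ) :=
  {f | ∀ x y : Δ K, ∀ a b : ℝ, 0 ≤ a → 0 ≤ b →
    a * f x - b * f y ≤ ∑ k, |a * (x : K → ℝ) k - b * (y : K → ℝ) k|}

/-- The pairing `u(f) = ∫_X f du`. -/
noncomputable def pairing (u : ProbabilityMeasure (Δ K)) (f : C(Δ K, ℝ)) : ℝ :=
  ∫ p, f p ∂(u : Measure (Δ K))

noncomputable def d0 (u v : ProbabilityMeasure (Δ K)) : ℝ :=
  sSup ((fun f => pairing K u f - pairing K v f) '' D0 K)

noncomputable def d1 (u v : ProbabilityMeasure (Δ K)) : ℝ :=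
  sSup ((fun f => pairing K u f - pairing K v f) '' D1 K)

end Stmt6


namespace Stmt6

section Aux

lemma le_mul_sInf_aux {b c : ℝ} {S : Set ℝ} (hb : 0 ≤ b) (hS : S.Nonempty)
    (h : ∀ s ∈ S, c ≤ b * s) : c ≤ b * sInf S := by
  rcases hb.eq_or_lt with rfl | hb
  · obtain ⟨s, hs⟩ := hS
    simpa using h s hs
  · have : c / b ≤ sInf S := le_csInf hS (fun s hs => by
      rw [div_le_iff₀ hb]; linarith [h s hs])
    rw [div_le_iff₀ hb] at this
    linarith

lemma mul_sSup_le_aux {a c : ℝ} {S : Set ℝ} (ha : 0 ≤ a) (hS : S.Nonempty)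
    (h : ∀ s ∈ S, a * s ≤ c) : a * sSup S ≤ c := by
  rcases ha.eq_or_lt with rfl | ha
  · obtain ⟨s, hs⟩ := hS
    simpa using h s hs
  · have : sSup S ≤ c / a := csSup_le hS (fun s hs => by
      rw [le_div_iff₀ ha]; linarith [h s hs])
    rw [le_div_iff₀ ha] at this
    linarith

lemma pay_mono {n m : ℕ} {x : Fin n → ℝ} {y : Fin m → ℝ} (hx : x ∈ fsimplex n)
    (hy : y ∈ fsimplex m) {M N : Fin n → Fin m → ℝ} {a b e : ℝ}
    (h : ∀ i j, a * M i j ≤ b * N i j + e) :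
    a * ∑ i, ∑ j, x i * y j * M i j ≤ b * (∑ i, ∑ j, x i * y j * N i j) + e := by
  have h1 : ∑ i, ∑ j, x i * y j * e = e := by
    simp_rw [← Finset.sum_mul, ← Finset.mul_sum, hy.2, mul_one, hx.2, one_mul]
  have h2 : b * (∑ i, ∑ j, x i * y j * N i j) + e
      = ∑ i, ∑ j, x i * y j * (b * N i j + e) := by
    simp_rw [mul_add, Finset.sum_add_distrib, h1, Finset.mul_sum]
    congr 1
    refine Finset.sum_congr rfl fun i _ => Finset.sum_congr rfl fun j _ => by ring
  have h3 : a * (∑ i, ∑ j, x i * y j * M i j) = ∑ i, ∑ j, x i * y j * (a * M i j) := by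
    simp_rw [Finset.mul_sum]
    refine Finset.sum_congr rfl fun i _ => Finset.sum_congr rfl fun j _ => by ring
  rw [h2, h3]
  refine Finset.sum_le_sum fun i _ => Finset.sum_le_sum fun j _ => ?_
  exact mul_le_mul_of_nonneg_left (h i j) (mul_nonneg (hx.1 i) (hy.1 j))

lemma single_mem {n : ℕ} (i : Fin n) : (Pi.single i 1 : Fin n → ℝ) ∈ fsimplex n := by
  refine ⟨fun j => ?_, by simp⟩
  by_cases h : j = i
  · subst h; simp
  · simp [h]

lemma fsimplex_nonempty {n : ℕ} (hn : 0 < n) : (fsimplex n).Nonempty :=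
  ⟨_, single_mem ⟨0, hn⟩⟩

lemma pay_abs {n m : ℕ} {x : Fin n → ℝ} {y : Fin m → ℝ} (hx : x ∈ fsimplex n)
    (hy : y ∈ fsimplex m) (M : Fin n → Fin m → ℝ) :
    |∑ i, ∑ j, x i * y j * M i j| ≤ ∑ i, ∑ j, |M i j| := by
  have hb : ∀ i j, |M i j| ≤ ∑ i, ∑ j, |M i j| := fun i j =>
    (Finset.single_le_sum (f := fun j => |M i j|) (fun j _ => abs_nonneg _)
      (Finset.mem_univ j)).trans
    (Finset.single_le_sum (f := fun i => ∑ j, |M i j|)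
      (fun i _ => Finset.sum_nonneg fun j _ => abs_nonneg _) (Finset.mem_univ i))
  rw [abs_le]
  have h1 := pay_mono hx hy (M := M) (N := M) (a := 1) (b := 0) (e := ∑ i, ∑ j, |M i j|)
    (fun i j => by linarith [le_abs_self (M i j), hb i j])
  have h2 := pay_mono hx hy (M := M) (N := M) (a := -1) (b := 0) (e := ∑ i, ∑ j, |M i j|)
    (fun i j => by linarith [neg_abs_le (M i j), hb i j])
  constructor <;> linarith

lemma bddBelow_inner {n m : ℕ} {x : Fin n → ℝ} (hx : x ∈ fsimplex n)
    (M : Fin n → Fin m → ℝ) :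
    BddBelow ((fun y => ∑ i, ∑ j, x i * y j * M i j) '' fsimplex m) := by
  refine ⟨-∑ i, ∑ j, |M i j|, ?_⟩
  rintro _ ⟨y, hy, rfl⟩
  exact (abs_le.1 (pay_abs hx hy M)).1

lemma bddAbove_outer {n m : ℕ} (hm : 0 < m) (M : Fin n → Fin m → ℝ) :
    BddAbove ((fun x => sInf ((fun y => ∑ i, ∑ j, x i * y j * M i j) '' fsimplex m))
      '' fsimplex n) := by
  refine ⟨∑ i, ∑ j, |M i j|, ?_⟩
  rintro _ ⟨x, hx, rfl⟩
  obtain ⟨y, hy⟩ := fsimplex_nonempty hm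
  exact (csInf_le (bddBelow_inner hx M) ⟨y, hy, rfl⟩).trans (abs_le.1 (pay_abs hx hy M)).2

lemma matValue_lip {n m : ℕ} (hn : 0 < n) (hm : 0 < m) {M N : Fin n → Fin m → ℝ} {a b e : ℝ}
    (ha : 0 ≤ a) (hb : 0 ≤ b) (h : ∀ i j, a * M i j ≤ b * N i j + e) :
    a * matValue M ≤ b * matValue N + e := by
  refine mul_sSup_le_aux ha ((fsimplex_nonempty hn).image _) ?_
  rintro _ ⟨x, hx, rfl⟩
  have h1 : a * sInf ((fun y => ∑ i, ∑ j, x i * y j * M i j) '' fsimplex m) - e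
      ≤ b * sInf ((fun y => ∑ i, ∑ j, x i * y j * N i j) '' fsimplex m) := by
    refine le_mul_sInf_aux hb ((fsimplex_nonempty hm).image _) ?_
    rintro _ ⟨y, hy, rfl⟩
    have h2 := mul_le_mul_of_nonneg_left (csInf_le (bddBelow_inner hx M) ⟨y, hy, rfl⟩) ha
    have h3 := pay_mono hx hy h
    simp only at h2 ⊢
    linarith
  have h4 := mul_le_mul_of_nonneg_left (le_csSup (bddAbove_outer hm N) ⟨x, hx, rfl⟩) hb
  unfold matValue
  simp only at h1 h4 ⊢
  linarith

lemma le_matValue {n m : ℕ} (hm : 0 < m) {M : Fin n → Fin m → ℝ} {c : ℝ}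
    (i0 : Fin n) (h : ∀ j, c ≤ M i0 j) : c ≤ matValue M := by
  refine le_trans ?_ (le_csSup (bddAbove_outer hm M) ⟨_, single_mem i0, rfl⟩)
  refine le_csInf ((fsimplex_nonempty hm).image _) ?_
  rintro _ ⟨y, hy, rfl⟩
  have : ∑ i, ∑ j, (Pi.single i0 1 : Fin n → ℝ) i * y j * M i j = ∑ j, y j * M i0 j := by
    rw [Finset.sum_eq_single i0]
    · simp
    · intro i _ hi; simp [hi]
    · simp
  simp only [this]
  calc c = ∑ j, y j * c := by rw [← Finset.sum_mul, hy.2, one_mul]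
    _ ≤ _ := Finset.sum_le_sum fun j _ => mul_le_mul_of_nonneg_left (h j) (hy.1 j)

lemma matValue_le {n m : ℕ} (hn : 0 < n) {M : Fin n → Fin m → ℝ} {c : ℝ}
    (j0 : Fin m) (h : ∀ i, M i j0 ≤ c) : matValue M ≤ c := by
  refine csSup_le ((fsimplex_nonempty hn).image _) ?_
  rintro _ ⟨x, hx, rfl⟩
  refine (csInf_le (bddBelow_inner hx M) ⟨_, single_mem j0, rfl⟩).trans ?_
  have : ∑ i, ∑ j, x i * (Pi.single j0 1 : Fin m → ℝ) j * M i j = ∑ i, x i * M i j0 := by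
    refine Finset.sum_congr rfl fun i _ => ?_
    rw [Finset.sum_eq_single j0]
    · simp
    · intro i _ hi; simp [hi]
    · simp
  simp only [this]
  calc ∑ i, x i * M i j0 ≤ ∑ i, x i * c :=
        Finset.sum_le_sum fun j _ => mul_le_mul_of_nonneg_left (h j) (hx.1 j)
    _ = c := by rw [← Finset.sum_mul, hx.2, one_mul]

variable {K : Type*} [Fintype K]

lemma lin_le {c z w : K → ℝ} (hc : ∀ k, c k ∈ Icc (-1 : ℝ) 1) (a b : ℝ) :
    a * (∑ k, z k * c k) ≤ b * (∑ k, w k * c k) + ∑ k, |a * z k - b * w k| := by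
  rw [Finset.mul_sum, Finset.mul_sum, ← Finset.sum_add_distrib]
  refine Finset.sum_le_sum fun k _ => ?_
  have h1 : |c k| ≤ 1 := abs_le.2 (hc k)
  have h2 : (a * z k - b * w k) * c k ≤ |a * z k - b * w k| := by
    refine (le_abs_self _).trans ?_
    rw [abs_mul]
    exact mul_le_of_le_one_right (abs_nonneg _) h1
  nlinarith

lemma val_lip {n m : ℕ} (hn : 0 < n) (hm : 0 < m) {G : K → Fin n → Fin m → ℝ}
    (hG : ∀ k i j, G k i j ∈ Icc (-1 : ℝ) 1) (x y : K → ℝ) {a b : ℝ} (ha : 0 ≤ a) (hb : 0 ≤ b) :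
    a * matValue (fun i j => ∑ k, x k * G k i j) ≤
      b * matValue (fun i j => ∑ k, y k * G k i j) + ∑ k, |a * x k - b * y k| :=
  matValue_lip hn hm ha hb fun i j => lin_le (fun k => hG k i j) a b

lemma D0_subset_D1 : D0 K ⊆ D1 K := by
  rintro f ⟨n, m, hn, hm, G, hG, hf⟩ x y a b ha hb
  rw [hf, hf]
  linarith [val_lip hn hm hG x y ha hb]

/-- the l1 distance on the simplex. -/
noncomputable def l1 (p q : Δ K) : ℝ := ∑ k, |(p : K → ℝ) k - (q : K → ℝ) k|

lemma l1_comm (p q : Δ K) : l1 p q = l1 q p := by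
  simp only [l1, abs_sub_comm]

lemma l1_le (p q : Δ K) : l1 p q ≤ Fintype.card K * dist p q := by
  calc l1 p q ≤ ∑ _k : K, dist p q := by
        refine Finset.sum_le_sum fun k _ => ?_
        exact dist_le_pi_dist (p : K → ℝ) (q : K → ℝ) k
    _ = _ := by simp

lemma dist_le_l1 (p q : Δ K) : dist p q ≤ l1 p q := by
  unfold l1
  rw [Subtype.dist_eq, dist_pi_le_iff (Finset.sum_nonneg fun k _ => abs_nonneg _)]
  intro k
  exact Finset.single_le_sum (f := fun k => |(p : K → ℝ) k - (q : K → ℝ) k|)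
    (fun k _ => abs_nonneg _) (Finset.mem_univ k)

lemma continuous_of_l1 {f : Δ K → ℝ} (h : ∀ p q, f p ≤ f q + l1 p q) : Continuous f := by
  have : LipschitzWith (Fintype.card K : NNReal) f := by
    refine LipschitzWith.of_dist_le_mul fun p q => ?_
    rw [Real.dist_eq, abs_sub_le_iff]
    have := l1_le p q
    have h1 := h p q
    have h2 := h q p
    rw [l1_comm] at h2
    simp only [NNReal.coe_natCast]
    constructor <;> linarith
  exact this.continuous

lemma D1_l1 {f : C(Δ K, ℝ)} (hf : f ∈ D1 K) (p q : Δ K) : f p ≤ f q + l1 p q := by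
  have := hf p q 1 1 zero_le_one zero_le_one
  simp only [one_mul] at this
  unfold l1
  linarith

lemma sum_abs_one (p : Δ K) : ∑ k, |(p : K → ℝ) k| = 1 := by
  rw [← p.2.2]
  exact Finset.sum_congr rfl fun k _ => abs_of_nonneg (p.2.1 k)

lemma D1_abs {f : C(Δ K, ℝ)} (hf : f ∈ D1 K) (p : Δ K) : |f p| ≤ 1 := by
  have h1 := hf p p 1 0 zero_le_one le_rfl
  have h2 := hf p p 0 1 le_rfl zero_le_one
  simp [sum_abs_one] at h1 h2
  exact abs_le.2 ⟨by linarith, h1⟩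

lemma D1_neg {f : C(Δ K, ℝ)} (hf : f ∈ D1 K) : -f ∈ D1 K := by
  intro x y a b ha hb
  have := hf y x b a hb ha
  simp only [abs_sub_comm (b * _)] at this
  simp only [ContinuousMap.neg_apply]
  linarith

lemma D1_zero : (0 : C(Δ K, ℝ)) ∈ D1 K := by
  intro x y a b ha hb
  simp only [ContinuousMap.zero_apply, mul_zero, sub_zero]
  exact Finset.sum_nonneg fun k _ => abs_nonneg _

instance : CompactSpace (Δ K) := isCompact_iff_compactSpace.mp (isCompact_stdSimplex ℝ K)

lemma exists_net [Nonempty K] {δ : ℝ} (hδ : 0 < δ) :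
    ∃ n : ℕ, 0 < n ∧ ∃ z : Fin n → Δ K, ∀ p, ∃ i, l1 p (z i) ≤ δ := by
  classical
  have hc : (0 : ℝ) < Fintype.card K := by exact_mod_cast Fintype.card_pos
  obtain ⟨t, -, htf, ht⟩ := finite_cover_balls_of_compact (isCompact_univ (X := Δ K))
    (div_pos hδ hc)
  have key : ∀ p, ∃ q ∈ t, l1 p q ≤ δ := by
    intro p
    have := ht (mem_univ p)
    simp only [mem_iUnion, Metric.mem_ball] at this
    obtain ⟨q, hq, hd⟩ := this
    refine ⟨q, hq, (l1_le p q).trans ?_⟩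
    rw [lt_div_iff₀ hc] at hd
    linarith
  have hne : t.Nonempty := by
    obtain ⟨k⟩ := ‹Nonempty K›
    obtain ⟨q, hq, -⟩ := key ⟨Pi.single k 1, by
      refine ⟨fun j => ?_, by simp⟩
      by_cases h : j = k
      · subst h; simp
      · simp [h]⟩
    exact ⟨q, hq⟩
  let T := htf.toFinset
  refine ⟨T.card, Finset.card_pos.2 (by simpa [T] using hne), fun i => (T.equivFin.symm i).1, ?_⟩
  intro p
  obtain ⟨q, hq, hd⟩ := key p
  refine ⟨T.equivFin ⟨q, by simpa [T] using hq⟩, ?_⟩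
  simpa using hd

lemma exists_lin {x y : K → ℝ} {α β : ℝ}
    (h : ∀ a b : ℝ, 0 ≤ a → 0 ≤ b → a * α - b * β ≤ ∑ k, |a * x k - b * y k|) :
    ∃ c : K → ℝ, (∀ k, c k ∈ Icc (-1 : ℝ) 1) ∧ α ≤ ∑ k, x k * c k ∧ ∑ k, y k * c k ≤ β := by
  by_contra! hcon
  let L : (K → ℝ) →ₗ[ℝ] ℝ × ℝ :=
    { toFun := fun c => (∑ k, x k * c k, ∑ k, y k * c k)
      map_add' := fun c d => by simp [mul_add, Finset.sum_add_distrib]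
      map_smul' := fun r c => by
        simp only [Pi.smul_apply, smul_eq_mul, RingHom.id_apply, Prod.smul_mk, Finset.mul_sum]
        congr 1 <;> exact Finset.sum_congr rfl fun k _ => by ring }
  have hL : Continuous L := by
    change Continuous fun c : K → ℝ => (∑ k, x k * c k, ∑ k, y k * c k)
    fun_prop
  let C : Set (K → ℝ) := Set.pi univ fun _ => Icc (-1 : ℝ) 1
  have hCc : IsCompact C := isCompact_univ_pi fun _ => isCompact_Icc
  have hCv : Convex ℝ C := convex_pi fun _ _ => convex_Icc _ _
  obtain ⟨g, u, v, h1, huv, h2⟩ := geometric_hahn_banach_compact_closed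
    (s := L '' C) (t := Ici α ×ˢ Iic β) (hCv.linear_image L) (hCc.image hL)
    ((convex_Ici α).prod (convex_Iic β)) (isClosed_Ici.prod isClosed_Iic) (by
      rw [Set.disjoint_left]
      rintro _ ⟨c, hc, rfl⟩ ⟨ha, hb⟩
      have hc' : ∀ k, c k ∈ Icc (-1 : ℝ) 1 := fun k => hc k (mem_univ k)
      exact absurd hb (not_le.2 (hcon c hc' ha)))
  have hg : ∀ s t : ℝ, g (s, t) = s * g (1, 0) + t * g (0, 1) := by
    intro s t
    have : ((s, t) : ℝ × ℝ) = s • ((1, 0) : ℝ × ℝ) + t • ((0, 1) : ℝ × ℝ) := by simp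
    rw [this, map_add, map_smul, map_smul]; rfl
  set a := g (1, 0) with ha
  set b := g (0, 1) with hb
  have ha0 : 0 ≤ a := by
    by_contra! hneg
    have h3 := h2 (α, β) ⟨mem_Ici.2 le_rfl, mem_Iic.2 le_rfl⟩
    have h4 := h2 (α + (α * a + β * b - v) / (-a), β)
      ⟨by simp only [mem_Ici]
          rw [hg] at h3
          have : 0 ≤ (α * a + β * b - v) / (-a) := div_nonneg (by linarith) (by linarith)
          linarith, mem_Iic.2 le_rfl⟩
    rw [hg, add_mul, div_neg, neg_mul, div_mul_cancel₀ _ hneg.ne] at h4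
    linarith
  have hb0 : b ≤ 0 := by
    by_contra! hneg
    have h3 := h2 (α, β) ⟨mem_Ici.2 le_rfl, mem_Iic.2 le_rfl⟩
    have h4 := h2 (α, β - (α * a + β * b - v) / b)
      ⟨mem_Ici.2 le_rfl, by
          simp only [mem_Iic]
          rw [hg] at h3
          have : 0 ≤ (α * a + β * b - v) / b := div_nonneg (by linarith) (by linarith)
          linarith⟩
    rw [hg, sub_mul, div_mul_cancel₀ _ hneg.ne'] at h4
    linarith
  have h5 := h2 (α, β) ⟨mem_Ici.2 le_rfl, mem_Iic.2 le_rfl⟩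
  rw [hg] at h5
  have h6 := h a (-b) ha0 (by linarith)
  let c : K → ℝ := fun k => if 0 ≤ a * x k - -b * y k then 1 else -1
  have hc : c ∈ C := by
    intro k _
    simp only [c]
    split_ifs <;> constructor <;> norm_num
  have h7 := h1 _ ⟨c, hc, rfl⟩
  change g (∑ k, x k * c k, ∑ k, y k * c k) < u at h7
  rw [hg] at h7
  have h8 : ∑ k, |a * x k - -b * y k| = (∑ k, x k * c k) * a + (∑ k, y k * c k) * b := by
    rw [Finset.sum_mul, Finset.sum_mul, ← Finset.sum_add_distrib]
    refine Finset.sum_congr rfl fun k _ => ?_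
    simp only [c]
    split_ifs with hk
    · rw [abs_of_nonneg hk]; ring
    · rw [abs_of_neg (not_le.1 hk)]; ring
  linarith

lemma D0_dense [Nonempty K] {f : C(Δ K, ℝ)} (hf : f ∈ D1 K) {ε : ℝ} (hε : 0 < ε) :
    ∃ g ∈ D0 K, ∀ p, |f p - g p| ≤ ε := by
  obtain ⟨n, hn, z, hz⟩ := exists_net (K := K) (half_pos hε)
  have := fun i j => exists_lin (hf (z i) (z j))
  choose c hc h1 h2 using this
  let G : K → Fin n → Fin n → ℝ := fun k i j => c i j k
  have hG : ∀ k i j, G k i j ∈ Icc (-1 : ℝ) 1 := fun k i j => hc i j k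
  refine ⟨⟨fun p => matValue (fun i j => ∑ k, (p : K → ℝ) k * G k i j), ?_⟩,
    ⟨n, n, hn, hn, G, hG, fun p => rfl⟩, ?_⟩
  · refine continuous_of_l1 fun p q => ?_
    have := val_lip hn hn hG p q zero_le_one zero_le_one
    simpa [l1] using this
  · intro p
    obtain ⟨i, hi⟩ := hz p
    have hlin : ∀ (i j : Fin n) (p q : Δ K),
        ∑ k, (p : K → ℝ) k * G k i j ≤ ∑ k, (q : K → ℝ) k * G k i j + l1 p q := by
      intro i j p q
      simpa [l1] using lin_le (z := (p : K → ℝ)) (w := (q : K → ℝ)) (fun k => hG k i j) 1 1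
    have hi' : l1 (z i) p ≤ ε / 2 := by rwa [l1_comm]
    rw [abs_sub_le_iff]
    constructor
    · have : f p - ε ≤ matValue (fun i j => ∑ k, (p : K → ℝ) k * G k i j) := by
        refine le_matValue hn i fun j => ?_
        have := h1 i j
        have := hlin i j (z i) p
        have := D1_l1 hf p (z i)
        simp only [G] at *
        linarith
      simp only [ContinuousMap.coe_mk]
      linarith
    · have : matValue (fun i j => ∑ k, (p : K → ℝ) k * G k i j) ≤ f p + ε := by
        refine matValue_le hn i fun j => ?_
        have := h2 j i
        have := hlin j i p (z i)
        have := D1_l1 hf (z i) p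
        simp only [G] at *
        linarith
      simp only [ContinuousMap.coe_mk]
      linarith

lemma integrable_cm (u : ProbabilityMeasure (Δ K)) (f : C(Δ K, ℝ)) :
    Integrable (fun p => f p) (u : Measure (Δ K)) :=
  (BoundedContinuousFunction.mkOfCompact f).integrable _

lemma pairing_close (u : ProbabilityMeasure (Δ K)) {f g : C(Δ K, ℝ)} {ε : ℝ}
    (h : ∀ p, |f p - g p| ≤ ε) : pairing K u f ≤ pairing K u g + ε := by
  have : ∫ p, f p ∂(u : Measure (Δ K)) ≤ ∫ p, (g p + ε) ∂(u : Measure (Δ K)) := by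
    refine integral_mono (integrable_cm u f) ((integrable_cm u g).add (integrable_const _)) ?_
    intro p
    have := (abs_le.1 (h p)).2
    simp only
    linarith
  rw [integral_add (integrable_cm u g) (integrable_const _)] at this
  simpa [pairing] using this

lemma bdd_D1 (u v : ProbabilityMeasure (Δ K)) :
    BddAbove ((fun f => pairing K u f - pairing K v f) '' D1 K) := by
  refine ⟨2, ?_⟩
  rintro _ ⟨f, hf, rfl⟩
  have h1 := pairing_close u (f := f) (g := 0) (ε := 1) (by simpa using D1_abs hf)
  have h2 := pairing_close v (f := 0) (g := f) (ε := 1) (by simpa using D1_abs hf)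
  have h0 : ∀ w, pairing K w 0 = 0 := by simp [pairing]
  simp only [h0] at h1 h2 ⊢
  linarith

lemma le_d1 {f : C(Δ K, ℝ)} (hf : f ∈ D1 K) (u v : ProbabilityMeasure (Δ K)) :
    pairing K u f - pairing K v f ≤ d1 K u v :=
  le_csSup (bdd_D1 u v) ⟨f, hf, rfl⟩

lemma d1_le {u v : ProbabilityMeasure (Δ K)} {c : ℝ}
    (h : ∀ f ∈ D1 K, pairing K u f - pairing K v f ≤ c) : d1 K u v ≤ c := by
  refine csSup_le ⟨_, 0, D1_zero, rfl⟩ ?_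
  rintro _ ⟨f, hf, rfl⟩
  exact h f hf

lemma d0_eq_d1 [Nonempty K] (u v : ProbabilityMeasure (Δ K)) : d0 K u v = d1 K u v := by
  have hb : BddAbove ((fun f => pairing K u f - pairing K v f) '' D0 K) :=
    (bdd_D1 u v).mono (image_mono D0_subset_D1)
  apply le_antisymm
  · obtain ⟨g, hg, -⟩ := D0_dense (K := K) D1_zero one_pos
    refine csSup_le ⟨_, g, hg, rfl⟩ ?_
    rintro _ ⟨f, hf, rfl⟩
    exact le_d1 (D0_subset_D1 hf) u v
  · refine d1_le fun f hf => le_of_forall_pos_le_add fun ε hε => ?_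
    obtain ⟨g, hg, hfg⟩ := D0_dense hf (half_pos hε)
    have h1 := pairing_close u hfg
    have h2 := pairing_close v (f := g) (g := f) (fun p => by rw [abs_sub_comm]; exact hfg p)
    have h3 : pairing K u g - pairing K v g ≤ d0 K u v := le_csSup hb ⟨g, hg, rfl⟩
    linarith

lemma d1_self (u : ProbabilityMeasure (Δ K)) : d1 K u u = 0 := by
  apply le_antisymm
  · exact d1_le fun f _ => by simp
  · simpa using le_d1 D1_zero u u

lemma d1_nonneg (u v : ProbabilityMeasure (Δ K)) : 0 ≤ d1 K u v := by
  simpa [pairing] using le_d1 D1_zero u v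

lemma pairing_neg (u : ProbabilityMeasure (Δ K)) (f : C(Δ K, ℝ)) :
    pairing K u (-f) = - pairing K u f := by
  simp [pairing, integral_neg]

lemma d1_comm_le (u v : ProbabilityMeasure (Δ K)) : d1 K u v ≤ d1 K v u :=
  d1_le fun f hf => by
    have := le_d1 (D1_neg hf) v u
    rw [pairing_neg, pairing_neg] at this
    linarith

lemma d1_triangle (u v w : ProbabilityMeasure (Δ K)) : d1 K u w ≤ d1 K u v + d1 K v w :=
  d1_le fun f hf => by linarith [le_d1 hf u v, le_d1 hf v w]

/-- bounded Lipschitz functions are multiples of elements of `D1`. -/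
lemma scale_D1 {f : C(Δ K, ℝ)} {L B : ℝ} (hL : 0 ≤ L) (hB : ∀ p, |f p| ≤ B) (hB0 : 0 ≤ B)
    (h : ∀ p q, |f p - f q| ≤ L * l1 p q) : (2 * L + B + 1)⁻¹ • f ∈ D1 K := by
  intro x y a b ha hb
  set S := ∑ k, |a * (x : K → ℝ) k - b * (y : K → ℝ) k| with hS
  have hC : 0 < 2 * L + B + 1 := by positivity
  have hS0 : 0 ≤ S := Finset.sum_nonneg fun k _ => abs_nonneg _
  have h1 : |a - b| ≤ S := by
    have : a - b = ∑ k, (a * (x : K → ℝ) k - b * (y : K → ℝ) k) := by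
      rw [Finset.sum_sub_distrib, ← Finset.mul_sum, ← Finset.mul_sum, x.2.2, y.2.2]; ring
    rw [this]
    exact Finset.abs_sum_le_sum_abs _ _
  have h2 : a * l1 x y ≤ S + |a - b| := by
    have : |a - b| = ∑ k, |a - b| * |(y : K → ℝ) k| := by
      rw [← Finset.mul_sum, sum_abs_one, mul_one]
    rw [this, hS, l1, Finset.mul_sum, ← Finset.sum_add_distrib]
    refine Finset.sum_le_sum fun k _ => ?_
    rw [← abs_mul]
    calc a * |(x : K → ℝ) k - (y : K → ℝ) k|
        = |(a * (x : K → ℝ) k - b * (y : K → ℝ) k) - (a - b) * (y : K → ℝ) k| := by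
          rw [← abs_of_nonneg ha, ← abs_mul, abs_of_nonneg ha]; congr 1; ring
      _ ≤ _ := abs_sub _ _
  have h3 : a * f x - b * f y ≤ (2 * L + B) * S := by
    have e1 : a * (f x - f y) ≤ a * (L * l1 x y) :=
      mul_le_mul_of_nonneg_left ((le_abs_self _).trans (h x y)) ha
    have e2 : (a - b) * f y ≤ S * B := by
      refine (le_abs_self _).trans ?_
      rw [abs_mul]
      exact mul_le_mul h1 (hB y) (abs_nonneg _) hS0
    have e3 : L * (a * l1 x y) ≤ L * (2 * S) := mul_le_mul_of_nonneg_left (by linarith) hL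
    nlinarith
  simp only [ContinuousMap.smul_apply, smul_eq_mul]
  have : a * ((2 * L + B + 1)⁻¹ * f x) - b * ((2 * L + B + 1)⁻¹ * f y)
      = (a * f x - b * f y) / (2 * L + B + 1) := by
    field_simp
  rw [this, div_le_iff₀ hC]
  nlinarith

lemma pairing_smul (u : ProbabilityMeasure (Δ K)) (r : ℝ) (f : C(Δ K, ℝ)) :
    pairing K u (r • f) = r * pairing K u f := by
  simp [pairing, integral_const_mul]

lemma tendsto_of_d1 {v : ℕ → ProbabilityMeasure (Δ K)} {u : ProbabilityMeasure (Δ K)}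
    (h : Filter.Tendsto (fun n => d1 K u (v n)) Filter.atTop (nhds 0)) :
    Filter.Tendsto v Filter.atTop (nhds u) := by
  rw [tendsto_iff_forall_lipschitz_integral_tendsto]
  rintro f - ⟨L, hL⟩
  let F : C(Δ K, ℝ) := ⟨f, hL.continuous⟩
  have hS := scale_D1 (f := F) (L := L) (B := ‖F‖) L.2 (fun p => F.norm_coe_le_norm p)
    (norm_nonneg _) (fun p q => by
      have h1 := hL.dist_le_mul p q
      rw [Real.dist_eq] at h1
      exact h1.trans (mul_le_mul_of_nonneg_left (dist_le_l1 p q) L.2))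
  have hC : 0 < 2 * (L : ℝ) + ‖F‖ + 1 := by positivity
  set C := 2 * (L : ℝ) + ‖F‖ + 1 with hCdef
  have key : ∀ n, |pairing K (v n) F - pairing K u F| ≤ C * d1 K u (v n) := by
    intro n
    have h1 := le_d1 hS u (v n)
    have h2 := le_d1 (D1_neg hS) u (v n)
    rw [pairing_neg, pairing_neg] at h2
    rw [pairing_smul, pairing_smul] at h1 h2
    have e1 := mul_le_mul_of_nonneg_left h1 hC.le
    have e2 := mul_le_mul_of_nonneg_left h2 hC.le
    rw [mul_sub, mul_inv_cancel_left₀ hC.ne', mul_inv_cancel_left₀ hC.ne'] at e1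
    rw [mul_sub, mul_neg, mul_neg, mul_inv_cancel_left₀ hC.ne', mul_inv_cancel_left₀ hC.ne'] at e2
    rw [abs_sub_le_iff]
    constructor <;> linarith
  have : Filter.Tendsto (fun n => pairing K (v n) F) Filter.atTop (nhds (pairing K u F)) := by
    rw [tendsto_iff_dist_tendsto_zero]
    refine squeeze_zero (fun n => dist_nonneg) (fun n => key n) ?_
    simpa using h.const_mul C
  exact this

lemma nhds_d1 (u : ProbabilityMeasure (Δ K)) {ε : ℝ} (hε : 0 < ε) :
    ∀ᶠ v in nhds u, d1 K u v < ε := by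
  let A : Set (BoundedContinuousFunction (Δ K) ℝ) := {g | g.toContinuousMap ∈ D1 K}
  have hA : IsCompact (closure A) := by
    refine BoundedContinuousFunction.arzela_ascoli (Icc (-1) 1) isCompact_Icc A ?_ ?_
    · intro f x hf
      exact abs_le.1 (D1_abs hf x)
    · refine (LipschitzWith.uniformEquicontinuous _ (Fintype.card K : NNReal) ?_).equicontinuous
      rintro ⟨f, hf⟩
      refine LipschitzWith.of_dist_le_mul fun p q => ?_
      have h1 := D1_l1 hf p q
      have h2 := D1_l1 hf q p
      rw [l1_comm] at h2
      have h3 := l1_le p q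
      rw [Real.dist_eq, abs_sub_le_iff]
      simp only [NNReal.coe_natCast]
      simp only [BoundedContinuousFunction.coe_toContinuousMap] at h1 h2
      constructor <;> linarith
  have hT : TotallyBounded A := hA.totallyBounded.subset subset_closure
  obtain ⟨t, htf, ht⟩ := Metric.totallyBounded_iff.1 hT (ε / 4) (by positivity)
  have hev : ∀ g ∈ t, ∀ᶠ v : ProbabilityMeasure (Δ K) in nhds u,
      ∫ p, g p ∂(u : Measure (Δ K)) - ∫ p, g p ∂(v : Measure (Δ K)) < ε / 4 := by
    intro g _
    have h1 := (ProbabilityMeasure.tendsto_iff_forall_integral_tendsto.1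
      (Filter.tendsto_id (x := nhds u))) g
    filter_upwards [h1.eventually (lt_mem_nhds (b := ∫ p, g p ∂(u : Measure (Δ K)))
      (a := ∫ p, g p ∂(u : Measure (Δ K)) - ε / 4) (by linarith))] with v hv
    simp only [id] at hv
    linarith
  filter_upwards [(Filter.eventually_all_finite htf).2 hev] with v hv
  refine lt_of_le_of_lt (d1_le (c := 3 * (ε / 4)) fun f hf => ?_) (by linarith)
  have hfA : BoundedContinuousFunction.mkOfCompact f ∈ A := hf
  have := ht hfA
  simp only [mem_iUnion, Metric.mem_ball] at this
  obtain ⟨g, hg, hd⟩ := this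
  have hc : ∀ p, |f p - g.toContinuousMap p| ≤ ε / 4 := fun p =>
    (BoundedContinuousFunction.dist_coe_le_dist (f := BoundedContinuousFunction.mkOfCompact f)
      (g := g) p).trans hd.le
  have h1 := pairing_close u hc
  have h2 := pairing_close v (f := g.toContinuousMap) (g := f)
    (fun p => by rw [abs_sub_comm]; exact hc p)
  have h3 : pairing K u g.toContinuousMap - pairing K v g.toContinuousMap < ε / 4 := hv g hg
  linarith

lemma eq_of_d1 {u v : ProbabilityMeasure (Δ K)} (h : d1 K u v = 0) : u = v := by
  have : Filter.Tendsto (fun _ : ℕ => v) Filter.atTop (nhds u) :=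
    tendsto_of_d1 (by simp [h])
  exact tendsto_nhds_unique this tendsto_const_nhds

lemma isOpen_iff_d1 (s : Set (ProbabilityMeasure (Δ K))) :
    IsOpen s ↔ ∀ u ∈ s, ∃ ε > 0, ∀ v, d1 K u v < ε → v ∈ s := by
  constructor
  · intro hs u hu
    by_contra! hcon
    choose v hv hvs using fun n : ℕ => hcon (1 / ((n : ℝ) + 1)) (by positivity)
    have : Filter.Tendsto v Filter.atTop (nhds u) :=
      tendsto_of_d1 (squeeze_zero (fun n => d1_nonneg _ _) (fun n => (hv n).le)
        tendsto_one_div_add_atTop_nhds_zero_nat)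
    obtain ⟨n, hn⟩ := (this.eventually (hs.mem_nhds hu)).exists
    exact hvs n hn
  · intro h
    rw [isOpen_iff_mem_nhds]
    intro u hu
    obtain ⟨ε, hε, hs⟩ := h u hu
    filter_upwards [nhds_d1 u hε] with v hv using hs v hv

end Aux

end Stmt6

/-- **Proposition 3 (Renault–Venel).** `d₀(u,v) = sup_{f ∈ D₀} (u(f) − v(f))` is a
distance on `Δ(X)` (`X = Δ(K)`) which metrizes the weak-* topology, and `d₀ = d₁`. -/
theorem stmt6 (K : Type*) [Fintype K] [Nonempty K] :
    (∀ u v : ProbabilityMeasure (Stmt6.Δ K), 0 ≤ Stmt6.d0 K u v) ∧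
    (∀ u v : ProbabilityMeasure (Stmt6.Δ K), Stmt6.d0 K u v = 0 ↔ u = v) ∧
    (∀ u v : ProbabilityMeasure (Stmt6.Δ K), Stmt6.d0 K u v = Stmt6.d0 K v u) ∧
    (∀ u v w : ProbabilityMeasure (Stmt6.Δ K),
      Stmt6.d0 K u w ≤ Stmt6.d0 K u v + Stmt6.d0 K v w) ∧
    (∀ s : Set (ProbabilityMeasure (Stmt6.Δ K)),
      IsOpen s ↔ ∀ u ∈ s, ∃ ε > 0, ∀ v, Stmt6.d0 K u v < ε → v ∈ s) ∧
    (∀ u v : ProbabilityMeasure (Stmt6.Δ K), Stmt6.d0 K u v = Stmt6.d1 K u v) := by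
  simp only [Stmt6.d0_eq_d1]
  refine ⟨Stmt6.d1_nonneg, fun u v => ⟨Stmt6.eq_of_d1, ?_⟩, ?_, Stmt6.d1_triangle,
    Stmt6.isOpen_iff_d1, fun u v => trivial⟩
  · rintro rfl
    exact Stmt6.d1_self u
  · exact fun u v => le_antisymm (Stmt6.d1_comm_le u v) (Stmt6.d1_comm_le v u)
end

section
/- For all p and q in X = Δ(K), d_*(δ_p, δ_q) = ‖p − q‖, where δ_p, δ_q are the Dirac measures at p and q. -/
open Set MeasureTheory

namespace Stmt7

variable (K : Type*) [Fintype K]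

/-- The simplex `Δ(K)` of probability vectors on `K`, inside `K → ℝ`
(endowed with the ℓ¹ norm, written explicitly as sums of absolute values below). -/
def Δ : Set (K → ℝ) := {p | (∀ k, 0 ≤ p k) ∧ ∑ k, p k = 1}

/-- `D₁ = {f ∈ C(Δ(K),ℝ) : ∀ x,y, ∀ a,b ≥ 0, a·f(x) − b·f(y) ≤ ‖a·x − b·y‖₁}`. -/
def D1 : Set C(Δ K, ℝ) :=
  {f | ∀ x y : Δ K, ∀ a b : ℝ, 0 ≤ a → 0 ≤ b →
    a * f x - b * f y ≤ ∑ k, |a * (x : K → ℝ) k - b * (y : K → ℝ) k|}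

/-- The pairing `u(f) = ∫_X f du`. -/
noncomputable def pairing (u : ProbabilityMeasure (Δ K)) (f : C(Δ K, ℝ)) : ℝ :=
  ∫ p, f p ∂(u : Measure (Δ K))

/-- The distance `d_*(u,v) = sup_{f ∈ D₁} (u(f) − v(f))`. -/
noncomputable def dstar (u v : ProbabilityMeasure (Δ K)) : ℝ :=
  sSup ((fun f => pairing K u f - pairing K v f) '' D1 K)

end Stmt7

/-- **Lemma (Renault–Venel).** For `p, q` in `X = Δ(K)`,
`d_*(δ_p, δ_q) = ‖p − q‖₁`. -/
theorem stmt7 (K : Type*) [Fintype K] [Nonempty K] (p q : Stmt7.Δ K) :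
    Stmt7.dstar K ⟨Measure.dirac p, inferInstance⟩ ⟨Measure.dirac q, inferInstance⟩ =
      ∑ k, |(p : K → ℝ) k - (q : K → ℝ) k| := by
  unfold Stmt7.dstar
  have hd : ∀ (r : Stmt7.Δ K) (f : C(Stmt7.Δ K, ℝ)),
      Stmt7.pairing K ⟨Measure.dirac r, inferInstance⟩ f = f r := by
    intro r f
    unfold Stmt7.pairing
    exact integral_dirac (fun x => f x) r
  apply IsGreatest.csSup_eq
  constructor
  · refine ⟨⟨fun x => ∑ k, SignType.sign ((p : K → ℝ) k - (q : K → ℝ) k) * (x : K → ℝ) k,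
      continuous_finsetSum _ fun k _ => continuous_const.mul
        ((continuous_apply k).comp continuous_subtype_val)⟩, ?_, ?_⟩
    · intro x y a b ha hb
      simp only [ContinuousMap.coe_mk, Finset.mul_sum, ← Finset.sum_sub_distrib]
      refine Finset.sum_le_sum fun k _ => ?_
      rcases SignType.sign ((p : K → ℝ) k - (q : K → ℝ) k) with _ | _ | _
      · simp
      · have := neg_abs_le (a * (x : K → ℝ) k - b * (y : K → ℝ) k)
        simp
        linarith
      · have := le_abs_self (a * (x : K → ℝ) k - b * (y : K → ℝ) k)
        simp
        linarith
    · simp only [hd, ContinuousMap.coe_mk, ← Finset.sum_sub_distrib]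
      refine Finset.sum_congr rfl fun k _ => ?_
      rw [← mul_sub, sign_mul_self]
  · rintro _ ⟨f, hf, rfl⟩
    simp only [hd]
    simpa using hf p q 1 1 zero_le_one zero_le_one
end

section
/- (Duality formula) Let u and v be Borel probability measures on X with finite supports U and V respectively. Then d_*(u,v) = sup_{f ∈ D_1} |u(f) − v(f)| = min_{(α,β) ∈ M_4(u,v)} Σ_{(x,y) ∈ U×V} ‖α(x,y)·x − β(x,y)·y‖, and the minimum is attained. -/
open Set MeasureTheory

namespace Stmt8

variable (K : Type*) [Fintype K]

/-- The simplex `Δ(K)` of probability vectors on `K`, inside `K → ℝ`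
(endowed with the ℓ¹ norm, written explicitly as sums of absolute values below). -/
def Δ : Set (K → ℝ) := {p | (∀ k, 0 ≤ p k) ∧ ∑ k, p k = 1}

/-- `D₁ = {f ∈ C(Δ(K),ℝ) : ∀ x,y, ∀ a,b ≥ 0, a·f(x) − b·f(y) ≤ ‖a·x − b·y‖₁}`. -/
def D1 : Set C(Δ K, ℝ) :=
  {f | ∀ x y : Δ K, ∀ a b : ℝ, 0 ≤ a → 0 ≤ b →
    a * f x - b * f y ≤ ∑ k, |a * (x : K → ℝ) k - b * (y : K → ℝ) k|}

/-- The pairing `u(f) = ∫_X f du`. -/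
noncomputable def pairing (u : ProbabilityMeasure (Δ K)) (f : C(Δ K, ℝ)) : ℝ :=
  ∫ p, f p ∂(u : Measure (Δ K))

/-- The distance `d_*(u,v) = sup_{f ∈ D₁} (u(f) − v(f))`. -/
noncomputable def dstar (u v : ProbabilityMeasure (Δ K)) : ℝ :=
  sSup ((fun f => pairing K u f - pairing K v f) '' D1 K)

/-- `M₄(u,v)` for finitely supported `u, v`, described through the supports `U, V` and the
weight functions `wu, wv`. -/
def M4 (U V : Finset (Δ K)) (wu wv : Δ K → ℝ) :
    Set ((Δ K → Δ K → ℝ) × (Δ K → Δ K → ℝ)) :=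
  {ab | (∀ x ∈ U, ∀ y ∈ V, 0 ≤ ab.1 x y ∧ 0 ≤ ab.2 x y) ∧
    (∀ x ∈ U, ∑ y ∈ V, ab.1 x y = wu x) ∧ (∀ y ∈ V, ∑ x ∈ U, ab.2 x y = wv y)}

/-- The transport-like cost `Σ_{(x,y) ∈ U×V} ‖α(x,y)·x − β(x,y)·y‖₁`. -/
noncomputable def cost (U V : Finset (Δ K))
    (ab : (Δ K → Δ K → ℝ) × (Δ K → Δ K → ℝ)) : ℝ :=
  ∑ x ∈ U, ∑ y ∈ V, ∑ k, |ab.1 x y * (x : K → ℝ) k - ab.2 x y * (y : K → ℝ) k|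

end Stmt8

namespace Stmt8

section gen
variable {ι κ L : Type*} [Fintype ι] [Fintype κ] [Fintype L]

/-- transport cost in indexed form -/
noncomputable def gcost (X : ι → L → ℝ) (Y : κ → L → ℝ) (α β : ι → κ → ℝ) : ℝ :=
  ∑ i, ∑ j, ∑ k, |α i j * X i k - β i j * Y j k|

/-- penalized cost -/
noncomputable def pcost (X : ι → L → ℝ) (Y : κ → L → ℝ) (s : ι → ℝ) (t : κ → ℝ)
    (α β : ι → κ → ℝ) : ℝ :=
  gcost X Y α β + ∑ i, |s i - ∑ j, α i j| + ∑ j, |t j - ∑ i, β i j|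

/-- nonnegative pairs -/
abbrev NN (ι κ : Type*) := {ab : (ι → κ → ℝ) × (ι → κ → ℝ) // 0 ≤ ab.1 ∧ 0 ≤ ab.2}

/-- value function -/
noncomputable def val (X : ι → L → ℝ) (Y : κ → L → ℝ) (p : (ι → ℝ) × (κ → ℝ)) : ℝ :=
  ⨅ ab : NN ι κ, pcost X Y p.1 p.2 ab.1.1 ab.1.2

lemma gcost_nonneg (X : ι → L → ℝ) (Y : κ → L → ℝ) (α β : ι → κ → ℝ) :
    0 ≤ gcost X Y α β := by unfold gcost; positivity

lemma pcost_nonneg (X : ι → L → ℝ) (Y : κ → L → ℝ) (s : ι → ℝ) (t : κ → ℝ)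
    (α β : ι → κ → ℝ) : 0 ≤ pcost X Y s t α β := by
  have := gcost_nonneg X Y α β
  unfold pcost; positivity

lemma pcost_bdd (X : ι → L → ℝ) (Y : κ → L → ℝ) (p : (ι → ℝ) × (κ → ℝ)) :
    BddBelow (range fun ab : NN ι κ => pcost X Y p.1 p.2 ab.1.1 ab.1.2) :=
  ⟨0, by rintro _ ⟨ab, rfl⟩; exact pcost_nonneg _ _ _ _ _ _⟩

instance : Nonempty (NN ι κ) := ⟨⟨(0, 0), le_rfl, le_rfl⟩⟩

lemma val_nonneg (X : ι → L → ℝ) (Y : κ → L → ℝ) (p : (ι → ℝ) × (κ → ℝ)) : 0 ≤ val X Y p :=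
  le_ciInf fun _ => pcost_nonneg _ _ _ _ _ _

lemma val_le (X : ι → L → ℝ) (Y : κ → L → ℝ) (p : (ι → ℝ) × (κ → ℝ)) (α β : ι → κ → ℝ)
    (hα : 0 ≤ α) (hβ : 0 ≤ β) : val X Y p ≤ pcost X Y p.1 p.2 α β :=
  ciInf_le (pcost_bdd X Y p) (⟨(α, β), hα, hβ⟩ : NN ι κ)

lemma pcost_add (X : ι → L → ℝ) (Y : κ → L → ℝ) (s s' : ι → ℝ) (t t' : κ → ℝ)
    (α β α' β' : ι → κ → ℝ) :
    pcost X Y (s + s') (t + t') (α + α') (β + β') ≤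
      pcost X Y s t α β + pcost X Y s' t' α' β' := by
  have h1 : gcost X Y (α + α') (β + β') ≤ gcost X Y α β + gcost X Y α' β' := by
    unfold gcost
    simp only [← Finset.sum_add_distrib]
    refine Finset.sum_le_sum fun i _ => Finset.sum_le_sum fun j _ =>
      Finset.sum_le_sum fun k _ => ?_
    refine le_trans (le_of_eq ?_) (abs_add_le _ _)
    congr 1; simp; ring
  have h2 : ∑ i, |(s + s') i - ∑ j, (α + α') i j| ≤
      ∑ i, |s i - ∑ j, α i j| + ∑ i, |s' i - ∑ j, α' i j| := by
    rw [← Finset.sum_add_distrib]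
    refine Finset.sum_le_sum fun i _ => ?_
    refine le_trans (le_of_eq ?_) (abs_add_le _ _)
    congr 1; simp [Finset.sum_add_distrib]; ring
  have h3 : ∑ j, |(t + t') j - ∑ i, (β + β') i j| ≤
      ∑ j, |t j - ∑ i, β i j| + ∑ j, |t' j - ∑ i, β' i j| := by
    rw [← Finset.sum_add_distrib]
    refine Finset.sum_le_sum fun i _ => ?_
    refine le_trans (le_of_eq ?_) (abs_add_le _ _)
    congr 1; simp [Finset.sum_add_distrib]; ring
  unfold pcost; linarith

lemma pcost_smul (X : ι → L → ℝ) (Y : κ → L → ℝ) (s : ι → ℝ) (t : κ → ℝ)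
    (α β : ι → κ → ℝ) (c : ℝ) (hc : 0 ≤ c) :
    pcost X Y (c • s) (c • t) (c • α) (c • β) = c * pcost X Y s t α β := by
  unfold pcost gcost
  simp only [mul_add, Finset.mul_sum, Pi.smul_apply, smul_eq_mul]
  congr 1
  · congr 1
    · refine Finset.sum_congr rfl fun i _ => Finset.sum_congr rfl fun j _ =>
        Finset.sum_congr rfl fun k _ => ?_
      rw [mul_assoc, mul_assoc, ← mul_sub, abs_mul, abs_of_nonneg hc]
    · refine Finset.sum_congr rfl fun i _ => ?_
      rw [← Finset.mul_sum, ← mul_sub, abs_mul, abs_of_nonneg hc]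
  · refine Finset.sum_congr rfl fun i _ => ?_
    rw [← Finset.mul_sum, ← mul_sub, abs_mul, abs_of_nonneg hc]

lemma val_add (X : ι → L → ℝ) (Y : κ → L → ℝ) (p q : (ι → ℝ) × (κ → ℝ)) :
    val X Y (p + q) ≤ val X Y p + val X Y q := by
  refine le_ciInf_add_ciInf fun a b => ?_
  exact (val_le X Y (p + q) (a.1.1 + b.1.1) (a.1.2 + b.1.2)
    (add_nonneg a.2.1 b.2.1) (add_nonneg a.2.2 b.2.2)).trans (pcost_add _ _ _ _ _ _ _ _ _ _)

lemma val_smul_le (X : ι → L → ℝ) (Y : κ → L → ℝ) (p : (ι → ℝ) × (κ → ℝ)) (c : ℝ)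
    (hc : 0 ≤ c) : val X Y (c • p) ≤ c * val X Y p := by
  conv_rhs => unfold val
  rw [Real.mul_iInf_of_nonneg hc]
  refine le_ciInf fun a => ?_
  exact (val_le X Y (c • p) (c • a.1.1) (c • a.1.2)
    (smul_nonneg hc a.2.1) (smul_nonneg hc a.2.2)).trans (pcost_smul _ _ _ _ _ _ _ hc).le

lemma val_smul (X : ι → L → ℝ) (Y : κ → L → ℝ) (c : ℝ) (hc : 0 < c)
    (p : (ι → ℝ) × (κ → ℝ)) : val X Y (c • p) = c * val X Y p := by
  refine le_antisymm (val_smul_le X Y p c hc.le) ?_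
  have := val_smul_le X Y (c • p) c⁻¹ (inv_nonneg.2 hc.le)
  rw [smul_smul, inv_mul_cancel₀ hc.ne', one_smul] at this
  calc c * val X Y p ≤ c * (c⁻¹ * val X Y (c • p)) := by gcongr
    _ = _ := by rw [← mul_assoc, mul_inv_cancel₀ hc.ne', one_mul]

/-- adjusting a nonnegative vector to a prescribed total mass -/
lemma fix_row [Nonempty κ] (a : κ → ℝ) (ha : 0 ≤ a) (s : ℝ) (hs : 0 ≤ s) :
    ∃ a' : κ → ℝ, 0 ≤ a' ∧ ∑ j, a' j = s ∧ ∑ j, |a' j - a j| ≤ |s - ∑ j, a j| := by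
  classical
  rcases le_total (∑ j, a j) s with h | h
  · obtain ⟨j0⟩ := ‹Nonempty κ›
    refine ⟨a + Pi.single j0 (s - ∑ j, a j), ?_, ?_, ?_⟩
    · exact add_nonneg ha (Pi.single_nonneg.2 (sub_nonneg.2 h))
    · simp [Finset.sum_add_distrib]
    · simp only [Pi.add_apply, add_sub_cancel_left]
      rw [Finset.sum_eq_single j0]
      · simp
      · intro b _ hb; simp [hb]
      · simp
  · rcases (Finset.sum_nonneg fun j _ => ha j : 0 ≤ ∑ j, a j).eq_or_lt with h0 | h0
    · exact ⟨a, ha, by linarith, by simp⟩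
    · set T := ∑ j, a j
      refine ⟨fun j => s / T * a j, fun j => mul_nonneg (by positivity) (ha j), ?_, ?_⟩
      · rw [← Finset.mul_sum]; exact div_mul_cancel₀ _ h0.ne'
      · have : ∀ j, |s / T * a j - a j| = (1 - s / T) * a j := by
          intro j
          have h1 : s / T ≤ 1 := (div_le_one h0).2 h
          rw [abs_sub_comm, abs_of_nonneg]
          · ring
          · nlinarith [ha j, mul_nonneg (sub_nonneg.2 h1) (ha j)]
        simp only [this]
        rw [← Finset.mul_sum, abs_sub_comm, abs_of_nonneg (by linarith)]
        apply le_of_eq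
        change (1 - s / T) * T = _
        field_simp

lemma gcost_lip (X : ι → L → ℝ) (Y : κ → L → ℝ) (hX : ∀ i, ∑ k, |X i k| = 1)
    (hY : ∀ j, ∑ k, |Y j k| = 1) (α β α' β' : ι → κ → ℝ) :
    gcost X Y α' β' ≤ gcost X Y α β + ∑ i, ∑ j, |α' i j - α i j| +
      ∑ j, ∑ i, |β' i j - β i j| := by
  rw [Finset.sum_comm (s := (Finset.univ : Finset κ))]
  unfold gcost
  simp only [← Finset.sum_add_distrib]
  refine Finset.sum_le_sum fun i _ => Finset.sum_le_sum fun j _ => ?_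
  have e1 : |α' i j - α i j| = ∑ k, |α' i j - α i j| * |X i k| := by
    rw [← Finset.mul_sum, hX, mul_one]
  have e2 : |β' i j - β i j| = ∑ k, |β' i j - β i j| * |Y j k| := by
    rw [← Finset.mul_sum, hY, mul_one]
  rw [e1, e2]
  simp only [← Finset.sum_add_distrib]
  refine Finset.sum_le_sum fun k _ => ?_
  rw [← abs_mul, ← abs_mul]
  have := abs_add_three (α i j * X i k - β i j * Y j k) ((α' i j - α i j) * X i k)
    (-((β' i j - β i j) * Y j k))
  rw [abs_neg] at this
  refine le_trans (le_of_eq ?_) this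
  congr 1; ring

lemma fix_all [Nonempty ι] [Nonempty κ] (X : ι → L → ℝ) (Y : κ → L → ℝ)
    (hX : ∀ i, ∑ k, |X i k| = 1)
    (hY : ∀ j, ∑ k, |Y j k| = 1) (s : ι → ℝ) (t : κ → ℝ) (hs : 0 ≤ s) (ht : 0 ≤ t)
    (α β : ι → κ → ℝ) (hα : 0 ≤ α) (hβ : 0 ≤ β) :
    ∃ α' β' : ι → κ → ℝ, 0 ≤ α' ∧ 0 ≤ β' ∧ (∀ i, ∑ j, α' i j = s i) ∧
      (∀ j, ∑ i, β' i j = t j) ∧ gcost X Y α' β' ≤ pcost X Y s t α β := by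
  choose a ha0 ha1 ha2 using fun i => fix_row (α i) (hα i) (s i) (hs i)
  choose b hb0 hb1 hb2 using fun j => fix_row (fun i => β i j) (fun i => hβ i j) (t j) (ht j)
  refine ⟨a, fun i j => b j i, ha0, fun i j => hb0 j i, ha1, hb1, ?_⟩
  refine (gcost_lip X Y hX hY α β _ _).trans ?_
  unfold pcost
  gcongr with i _ j _
  · exact ha2 i
  · exact hb2 j

lemma exists_min [Nonempty ι] [Nonempty κ] (X : ι → L → ℝ) (Y : κ → L → ℝ)
    (hX : ∀ i, ∑ k, |X i k| = 1)
    (hY : ∀ j, ∑ k, |Y j k| = 1) (s : ι → ℝ) (t : κ → ℝ) (hs : 0 ≤ s) (ht : 0 ≤ t) :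
    ∃ α β : ι → κ → ℝ, 0 ≤ α ∧ 0 ≤ β ∧ (∀ i, ∑ j, α i j = s i) ∧
      (∀ j, ∑ i, β i j = t j) ∧ gcost X Y α β ≤ val X Y (s, t) := by
  let M : Set ((ι → κ → ℝ) × (ι → κ → ℝ)) := {ab | (0 ≤ ab.1 ∧ 0 ≤ ab.2) ∧
    (∀ i, ∑ j, ab.1 i j = s i) ∧ (∀ j, ∑ i, ab.2 i j = t j)}
  have hMc : IsCompact M := by
    refine IsCompact.of_isClosed_subset
      (isCompact_Icc (a := ((0, 0) : (ι → κ → ℝ) × (ι → κ → ℝ)))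
        (b := (fun i _ => s i, fun _ j => t j))) ?_ ?_
    · have c1 : ∀ i j, Continuous fun ab : (ι → κ → ℝ) × (ι → κ → ℝ) => ab.1 i j := by
        intro i j; fun_prop
      have c2 : ∀ i j, Continuous fun ab : (ι → κ → ℝ) × (ι → κ → ℝ) => ab.2 i j := by
        intro i j; fun_prop
      refine IsClosed.inter (IsClosed.inter ?_ ?_) (IsClosed.inter ?_ ?_)
      · exact isClosed_le continuous_const continuous_fst
      · exact isClosed_le continuous_const continuous_snd
      · change IsClosed {ab : (ι → κ → ℝ) × (ι → κ → ℝ) | ∀ i, ∑ j, ab.1 i j = s i}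
        rw [ofPred_forall]
        exact isClosed_iInter fun i => isClosed_eq (by fun_prop) continuous_const
      · change IsClosed {ab : (ι → κ → ℝ) × (ι → κ → ℝ) | ∀ j, ∑ i, ab.2 i j = t j}
        rw [ofPred_forall]
        exact isClosed_iInter fun i => isClosed_eq (by fun_prop) continuous_const
    · rintro ⟨a, b⟩ ⟨⟨h1, h2⟩, h3, h4⟩
      refine ⟨⟨h1, h2⟩, ⟨fun i j => ?_, fun i j => ?_⟩⟩
      · exact (Finset.single_le_sum (fun j _ => h1 i j) (Finset.mem_univ j)).trans (h3 i).le
      · exact (Finset.single_le_sum (f := fun i => b i j)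
          (fun i _ => h2 i j) (Finset.mem_univ i)).trans (h4 j).le
  have hMne : M.Nonempty := by
    obtain ⟨a, b, h1, h2, h3, h4, -⟩ := fix_all X Y hX hY s t hs ht 0 0 le_rfl le_rfl
    exact ⟨(a, b), ⟨h1, h2⟩, h3, h4⟩
  have hcont : Continuous fun ab : (ι → κ → ℝ) × (ι → κ → ℝ) => gcost X Y ab.1 ab.2 := by
    unfold gcost; fun_prop
  obtain ⟨⟨a, b⟩, ⟨⟨h1, h2⟩, h3, h4⟩, hmin⟩ := hMc.exists_isMinOn hMne hcont.continuousOn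
  refine ⟨a, b, h1, h2, h3, h4, le_ciInf fun ab => ?_⟩
  obtain ⟨a', b', g1, g2, g3, g4, g5⟩ :=
    fix_all X Y hX hY s t hs ht ab.1.1 ab.1.2 ab.2.1 ab.2.2
  exact (hmin (a := (a', b')) ⟨⟨g1, g2⟩, g3, g4⟩).trans g5

lemma exists_dual (X : ι → L → ℝ) (Y : κ → L → ℝ) (w : (ι → ℝ) × (κ → ℝ)) (hw : w ≠ 0) :
    ∃ (φ : ι → ℝ) (ψ : κ → ℝ),
      (∀ i j a b, 0 ≤ a → 0 ≤ b → a * φ i + b * ψ j ≤ ∑ k, |a * X i k - b * Y j k|) ∧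
      val X Y w = ∑ i, w.1 i * φ i + ∑ j, w.2 j * ψ j := by
  classical
  obtain ⟨g, hg1, hg2⟩ := exists_extension_of_le_sublinear
    (LinearPMap.mkSpanSingleton (K := ℝ) w (val X Y w) hw) (val X Y)
    (val_smul X Y) (val_add X Y) (by
      rintro ⟨x, hx⟩
      obtain ⟨c, rfl⟩ := Submodule.mem_span_singleton.1 hx
      erw [LinearPMap.mkSpanSingleton'_apply]
      change c * val X Y w ≤ val X Y (c • w)
      rcases le_or_gt c 0 with h | h
      · exact (mul_nonpos_of_nonpos_of_nonneg h (val_nonneg _ _ _)).trans (val_nonneg _ _ _)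
      · exact (val_smul X Y c h w).ge)
  have hgw : g w = val X Y w := by
    have := hg1 ⟨w, Submodule.mem_span_singleton_self w⟩
    rw [this]
    exact LinearPMap.mkSpanSingleton_apply ℝ ℝ hw (val X Y w)
  refine ⟨fun i => g (Pi.single i 1, 0), fun j => g (0, Pi.single j 1), ?_, ?_⟩
  · intro i j a b ha hb
    have e : a * g (Pi.single i 1, 0) + b * g (0, Pi.single j 1) =
        g (Pi.single i a, Pi.single j b) := by
      rw [← smul_eq_mul, ← smul_eq_mul, ← map_smul, ← map_smul, ← map_add]
      congr 1
      ext l <;> simp [Pi.single_apply]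
    rw [e]
    refine (hg2 _).trans ?_
    refine (val_le X Y _ (Pi.single i (Pi.single j a)) (Pi.single i (Pi.single j b))
      (Pi.single_nonneg.2 (Pi.single_nonneg.2 ha))
      (Pi.single_nonneg.2 (Pi.single_nonneg.2 hb))).trans (le_of_eq ?_)
    have z1 : ∀ i', ∑ j', (Pi.single i (Pi.single j a) : ι → κ → ℝ) i' j' =
        (Pi.single i a : ι → ℝ) i' := by
      intro i'
      by_cases h : i' = i
      · subst h; simp
      · simp [h]
    have z2 : ∀ j', ∑ i', (Pi.single i (Pi.single j b) : ι → κ → ℝ) i' j' =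
        (Pi.single j b : κ → ℝ) j' := by
      intro j'
      rw [Finset.sum_eq_single i]
      · simp
      · intro i' _ h; simp [h]
      · simp
    unfold pcost
    simp only [z1, z2, sub_self, abs_zero, Finset.sum_const_zero, add_zero]
    unfold gcost
    rw [Finset.sum_eq_single i, Finset.sum_eq_single j]
    · simp
    · intro j' _ h; simp [h]
    · simp
    · intro i' _ h; simp [h]
    · simp
  · rw [← hgw]
    simp only [← smul_eq_mul, ← map_smul, ← map_sum, ← map_add]
    congr 1
    ext l
    · simp [Prod.fst_sum, Finset.sum_apply, Pi.single_apply]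
    · simp [Prod.snd_sum, Finset.sum_apply, Pi.single_apply]

/-- homogeneous extension -/
noncomputable def ext (Y : κ → L → ℝ) (ψ : κ → ℝ) (p : L → ℝ) : ℝ :=
  ⨅ jb : κ × {b : ℝ // 0 ≤ b}, (∑ k, |p k - jb.2.1 * Y jb.1 k| - jb.2.1 * ψ jb.1)

section ext

lemma ext_bdd (Y : κ → L → ℝ) (ψ : κ → ℝ)
    (hY : ∀ j, ∑ k, |Y j k| = 1) (hψ : ∀ j, ψ j ≤ 1) (p : L → ℝ) : BddBelow (range fun jb : κ × {b : ℝ // 0 ≤ b} =>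
    (∑ k, |p k - jb.2.1 * Y jb.1 k| - jb.2.1 * ψ jb.1)) := by
  refine ⟨-∑ k, |p k|, ?_⟩
  rintro _ ⟨⟨j, b, hb⟩, rfl⟩
  dsimp only
  have h1 : b = ∑ k, |b * Y j k| := by
    simp only [abs_mul, abs_of_nonneg hb, ← Finset.mul_sum, hY, mul_one]
  have h2 : ∑ k, |b * Y j k| ≤ ∑ k, |p k - b * Y j k| + ∑ k, |p k| := by
    rw [← Finset.sum_add_distrib]
    refine Finset.sum_le_sum fun k _ => ?_
    have := abs_sub_abs_le_abs_sub (b * Y j k) (p k)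
    rw [abs_sub_comm] at this
    linarith
  have h3 : b * ψ j ≤ b := mul_le_of_le_one_right hb (hψ j)
  linarith

lemma ext_le (Y : κ → L → ℝ) (ψ : κ → ℝ)
    (hY : ∀ j, ∑ k, |Y j k| = 1) (hψ : ∀ j, ψ j ≤ 1) (p : L → ℝ) (j : κ) (b : ℝ) (hb : 0 ≤ b) :
    ext Y ψ p ≤ ∑ k, |p k - b * Y j k| - b * ψ j :=
  ciInf_le (ext_bdd Y ψ hY hψ p) (⟨j, b, hb⟩ : κ × {b : ℝ // 0 ≤ b})

lemma ext_lip [Nonempty κ] (Y : κ → L → ℝ) (ψ : κ → ℝ)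
    (hY : ∀ j, ∑ k, |Y j k| = 1) (hψ : ∀ j, ψ j ≤ 1) (p q : L → ℝ) : ext Y ψ p - ext Y ψ q ≤ ∑ k, |p k - q k| := by
  rw [sub_le_comm]
  have : Nonempty {b : ℝ // 0 ≤ b} := ⟨⟨0, le_rfl⟩⟩
  refine le_ciInf ?_
  rintro ⟨j, b, hb⟩
  dsimp only
  have h := ext_le Y ψ hY hψ p j b hb
  have h2 : ∑ k, |p k - b * Y j k| ≤ ∑ k, |p k - q k| + ∑ k, |q k - b * Y j k| := by
    rw [← Finset.sum_add_distrib]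
    exact Finset.sum_le_sum fun k _ => abs_sub_le _ _ _
  linarith

lemma ext_smul_le [Nonempty κ] (Y : κ → L → ℝ) (ψ : κ → ℝ)
    (hY : ∀ j, ∑ k, |Y j k| = 1) (hψ : ∀ j, ψ j ≤ 1) (p : L → ℝ) (a : ℝ) (ha : 0 ≤ a) : ext Y ψ (a • p) ≤ a * ext Y ψ p := by
  have : Nonempty {b : ℝ // 0 ≤ b} := ⟨⟨0, le_rfl⟩⟩
  conv_rhs => unfold ext
  rw [Real.mul_iInf_of_nonneg ha]
  refine le_ciInf ?_
  rintro ⟨j, b, hb⟩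
  dsimp only
  refine (ext_le Y ψ hY hψ _ j (a * b) (mul_nonneg ha hb)).trans (le_of_eq ?_)
  rw [mul_sub, Finset.mul_sum]
  congr 1
  · refine Finset.sum_congr rfl fun k _ => ?_
    rw [Pi.smul_apply, smul_eq_mul, mul_assoc, ← mul_sub, abs_mul, abs_of_nonneg ha]
  · ring

lemma ext_smul [Nonempty κ] (Y : κ → L → ℝ) (ψ : κ → ℝ)
    (hY : ∀ j, ∑ k, |Y j k| = 1) (hψ : ∀ j, ψ j ≤ 1) (p : L → ℝ) (a : ℝ) (ha : 0 ≤ a) : ext Y ψ (a • p) = a * ext Y ψ p := by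
  refine le_antisymm (ext_smul_le Y ψ hY hψ p a ha) ?_
  rcases ha.eq_or_lt with rfl | h
  · rw [zero_mul, zero_smul]
    have : Nonempty {b : ℝ // 0 ≤ b} := ⟨⟨0, le_rfl⟩⟩
    refine le_ciInf ?_
    rintro ⟨j, b, hb⟩
    have h3 : b * ψ j ≤ b := mul_le_of_le_one_right hb (hψ j)
    simp only [Pi.zero_apply, zero_sub, abs_neg, abs_mul, abs_of_nonneg hb, ← Finset.mul_sum, hY]
    linarith
  · have := ext_smul_le Y ψ hY hψ (a • p) a⁻¹ (inv_nonneg.2 ha)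
    rw [smul_smul, inv_mul_cancel₀ h.ne', one_smul] at this
    calc a * ext Y ψ p ≤ a * (a⁻¹ * ext Y ψ (a • p)) := by gcongr
      _ = _ := by rw [← mul_assoc, mul_inv_cancel₀ h.ne', one_mul]

end ext
end gen

variable {K : Type*} [Fintype K]

lemma norm_mem (x : Δ K) : ∑ k, |(x : K → ℝ) k| = 1 := by
  rw [← x.2.2]
  exact Finset.sum_congr rfl fun k _ => abs_of_nonneg (x.2.1 k)

lemma pairing_eq (u : ProbabilityMeasure (Δ K)) (U : Finset (Δ K)) (wu : Δ K → ℝ)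
    (hwu : ∀ x ∈ U, 0 < wu x)
    (hu : (u : Measure (Δ K)) = ∑ x ∈ U, ENNReal.ofReal (wu x) • Measure.dirac x)
    (f : C(Δ K, ℝ)) : pairing K u f = ∑ x ∈ U, wu x * f x := by
  unfold pairing
  rw [hu, integral_finsetSum_measure]
  · refine Finset.sum_congr rfl fun x hx => ?_
    rw [integral_smul_measure, integral_dirac, ENNReal.toReal_ofReal (hwu x hx).le, smul_eq_mul]
  · intro x _
    exact (integrable_dirac (by simp)).smul_measure ENNReal.ofReal_ne_top

lemma supp_nonempty (u : ProbabilityMeasure (Δ K)) (U : Finset (Δ K)) (wu : Δ K → ℝ)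
    (hu : (u : Measure (Δ K)) = ∑ x ∈ U, ENNReal.ofReal (wu x) • Measure.dirac x) :
    U.Nonempty := by
  by_contra h
  rw [Finset.not_nonempty_iff_eq_empty] at h
  subst h
  rw [Finset.sum_empty] at hu
  exact IsProbabilityMeasure.ne_zero (u : Measure (Δ K)) hu

lemma neg_mem_D1 {f : C(Δ K, ℝ)} (hf : f ∈ D1 K) : -f ∈ D1 K := by
  intro x y a b ha hb
  have := hf y x b a hb ha
  simp only [abs_sub_comm (a * _)]
  simp only [ContinuousMap.neg_apply]
  linarith

lemma pairing_neg (u : ProbabilityMeasure (Δ K)) (f : C(Δ K, ℝ)) :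
    pairing K u (-f) = - pairing K u f := by
  simp [pairing, integral_neg]

lemma weak (U V : Finset (Δ K)) (wu wv : Δ K → ℝ) {f : C(Δ K, ℝ)} (hf : f ∈ D1 K)
    {ab} (hab : ab ∈ M4 K U V wu wv) :
    ∑ x ∈ U, wu x * f x - ∑ y ∈ V, wv y * f y ≤ cost K U V ab := by
  obtain ⟨h0, h1, h2⟩ := hab
  have e1 : ∑ x ∈ U, wu x * f x = ∑ x ∈ U, ∑ y ∈ V, ab.1 x y * f x :=
    Finset.sum_congr rfl fun x hx => by rw [← h1 x hx, Finset.sum_mul]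
  have e2 : ∑ y ∈ V, wv y * f y = ∑ x ∈ U, ∑ y ∈ V, ab.2 x y * f y := by
    rw [Finset.sum_comm]
    exact Finset.sum_congr rfl fun x hx => by rw [← h2 x hx, Finset.sum_mul]
  rw [e1, e2]
  simp only [← Finset.sum_sub_distrib]
  exact Finset.sum_le_sum fun x hx => Finset.sum_le_sum fun y hy =>
    hf x y _ _ (h0 x hx y hy).1 (h0 x hx y hy).2

lemma strong (U V : Finset (Δ K)) (wu wv : Δ K → ℝ) (hU : U.Nonempty) (hV : V.Nonempty)
    (hwu : ∀ x ∈ U, 0 < wu x) (hwv : ∀ y ∈ V, 0 < wv y) :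
    ∃ ab ∈ M4 K U V wu wv, ∃ f ∈ D1 K,
      cost K U V ab ≤ ∑ x ∈ U, wu x * f x - ∑ y ∈ V, wv y * f y := by
  classical
  have : Nonempty U := hU.to_subtype
  have : Nonempty V := hV.to_subtype
  let X : U → K → ℝ := fun x => x.1.1
  let Y : V → K → ℝ := fun y => y.1.1
  have hX : ∀ i, ∑ k, |X i k| = 1 := fun i => norm_mem i.1
  have hY : ∀ i, ∑ k, |Y i k| = 1 := fun i => norm_mem i.1
  let s : U → ℝ := fun x => wu x
  let t : V → ℝ := fun x => wv x
  obtain ⟨α, β, hα, hβ, hs, ht, hle⟩ := exists_min X Y hX hY s t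
    (fun i => (hwu i i.2).le) (fun i => (hwv i i.2).le)
  obtain ⟨φ, ψ, hd, hval⟩ := exists_dual X Y (s, t) (by
    intro h
    obtain ⟨x⟩ := ‹Nonempty U›
    have := congrFun (congrArg Prod.fst h) x
    exact (hwu x x.2).ne' this)
  have hψ : ∀ j, ψ j ≤ 1 := by
    intro j
    obtain ⟨x⟩ := ‹Nonempty U›
    have := hd x j 0 1 le_rfl zero_le_one
    simpa [hY] using this
  have hlip := ext_lip Y ψ hY hψ
  have hcont : Continuous fun x : Δ K => ext Y ψ x.1 := by
    have h2 : Continuous fun p : K → ℝ => ext Y ψ p := by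
      rw [continuous_iff_continuousAt]
      intro q
      rw [ContinuousAt, tendsto_iff_dist_tendsto_zero]
      have h0 : Filter.Tendsto (fun p : K → ℝ => ∑ k, |p k - q k|) (nhds q) (nhds 0) := by
        have : Continuous (fun p : K → ℝ => ∑ k, |p k - q k|) := by fun_prop
        simpa using this.tendsto q
      refine squeeze_zero (fun _ => dist_nonneg) (fun p => ?_) h0
      rw [Real.dist_eq, abs_le]
      have := hlip q p
      simp only [abs_sub_comm (q _)] at this
      exact ⟨by linarith, hlip p q⟩
    exact h2.comp continuous_subtype_val
  let f : C(Δ K, ℝ) := ⟨fun x => ext Y ψ x.1, hcont⟩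
  refine ⟨(fun x y => if h : x ∈ U ∧ y ∈ V then α ⟨x, h.1⟩ ⟨y, h.2⟩ else 0,
    fun x y => if h : x ∈ U ∧ y ∈ V then β ⟨x, h.1⟩ ⟨y, h.2⟩ else 0), ⟨?_, ?_, ?_⟩, f, ?_, ?_⟩
  · intro x hx y hy
    simp only [hx, hy, and_self, dite_true]
    exact ⟨hα _ _, hβ _ _⟩
  · intro x hx
    rw [← Finset.sum_coe_sort V]
    simpa [hx] using hs ⟨x, hx⟩
  · intro y hy
    rw [← Finset.sum_coe_sort U]
    simpa [hy] using ht ⟨y, hy⟩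
  · intro x y a b ha hb
    have := hlip (a • x.1) (b • y.1)
    rw [ext_smul Y ψ hY hψ _ a ha, ext_smul Y ψ hY hψ _ b hb] at this
    exact this
  · have hc : cost K U V (fun x y => if h : x ∈ U ∧ y ∈ V then α ⟨x, h.1⟩ ⟨y, h.2⟩ else 0,
        fun x y => if h : x ∈ U ∧ y ∈ V then β ⟨x, h.1⟩ ⟨y, h.2⟩ else 0) = gcost X Y α β := by
      unfold cost gcost
      rw [← Finset.sum_coe_sort U]
      refine Finset.sum_congr rfl fun x _ => ?_
      rw [← Finset.sum_coe_sort V]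
      refine Finset.sum_congr rfl fun y _ => ?_
      simp [X, Y]
    rw [hc]
    refine hle.trans ?_
    rw [hval, ← Finset.sum_coe_sort U, ← Finset.sum_coe_sort V, sub_eq_add_neg,
      ← Finset.sum_neg_distrib]
    refine add_le_add (Finset.sum_le_sum fun x _ => ?_) (Finset.sum_le_sum fun y _ => ?_)
    · refine mul_le_mul_of_nonneg_left ?_ (hwu x x.2).le
      have : Nonempty {b : ℝ // 0 ≤ b} := ⟨⟨0, le_rfl⟩⟩
      change φ x ≤ ext Y ψ x.1.1
      refine le_ciInf ?_
      rintro ⟨j, b, hb⟩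
      have := hd x j 1 b zero_le_one hb
      simp only [one_mul] at this
      exact le_sub_iff_add_le.2 this
    · rw [← mul_neg]
      refine mul_le_mul_of_nonneg_left ?_ (hwv y y.2).le
      have := ext_le Y ψ hY hψ (Y y) y 1 zero_le_one
      simp only [one_mul, sub_self, abs_zero, Finset.sum_const_zero, zero_sub] at this
      change ψ y ≤ - ext Y ψ (Y y)
      linarith

end Stmt8


/-- **Theorem 2 (Renault–Venel), duality formula.** For Borel probability measures `u, v`
on `X = Δ(K)` with finite supports `U, V`,
`d_*(u,v) = sup_{f ∈ D₁} |u(f) − v(f)| = min_{(α,β) ∈ M₄(u,v)} Σ_{(x,y) ∈ U×V}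
‖α(x,y)·x − β(x,y)·y‖₁`, the minimum being attained. -/
theorem stmt8 (K : Type*) [Fintype K] [Nonempty K]
    (u v : ProbabilityMeasure (Stmt8.Δ K))
    (U V : Finset (Stmt8.Δ K)) (wu wv : Stmt8.Δ K → ℝ)
    (hwu : ∀ x ∈ U, 0 < wu x) (hwv : ∀ y ∈ V, 0 < wv y)
    (hu : (u : Measure (Stmt8.Δ K)) = ∑ x ∈ U, ENNReal.ofReal (wu x) • Measure.dirac x)
    (hv : (v : Measure (Stmt8.Δ K)) = ∑ y ∈ V, ENNReal.ofReal (wv y) • Measure.dirac y) :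
    Stmt8.dstar K u v =
      sSup ((fun f => |Stmt8.pairing K u f - Stmt8.pairing K v f|) '' Stmt8.D1 K) ∧
    IsLeast (Stmt8.cost K U V '' Stmt8.M4 K U V wu wv) (Stmt8.dstar K u v) := by
  obtain ⟨ab, hab, f, hf, hle⟩ := Stmt8.strong U V wu wv
    (Stmt8.supp_nonempty u U wu hu) (Stmt8.supp_nonempty v V wv hv) hwu hwv
  have hp : ∀ f, Stmt8.pairing K u f - Stmt8.pairing K v f =
      ∑ x ∈ U, wu x * f x - ∑ y ∈ V, wv y * f y := fun f => by
    rw [Stmt8.pairing_eq u U wu hwu hu, Stmt8.pairing_eq v V wv hwv hv]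
  have hw : ∀ g ∈ Stmt8.D1 K, ∀ ab' ∈ Stmt8.M4 K U V wu wv,
      Stmt8.pairing K u g - Stmt8.pairing K v g ≤ Stmt8.cost K U V ab' := fun g hg ab' hab' => by
    rw [hp]; exact Stmt8.weak U V wu wv hg hab'
  rw [← hp] at hle
  have heq := le_antisymm (hw f hf ab hab) hle
  have g1 : IsGreatest ((fun f => Stmt8.pairing K u f - Stmt8.pairing K v f) '' Stmt8.D1 K)
      (Stmt8.cost K U V ab) := by
    refine ⟨⟨f, hf, heq⟩, ?_⟩
    rintro _ ⟨g, hg, rfl⟩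
    exact hw g hg ab hab
  have g2 : IsGreatest ((fun f => |Stmt8.pairing K u f - Stmt8.pairing K v f|) '' Stmt8.D1 K)
      (Stmt8.cost K U V ab) := by
    have hub : ∀ g ∈ Stmt8.D1 K,
        |Stmt8.pairing K u g - Stmt8.pairing K v g| ≤ Stmt8.cost K U V ab := by
      intro g hg
      have h1 := hw g hg ab hab
      have h2 := hw (-g) (Stmt8.neg_mem_D1 hg) ab hab
      rw [Stmt8.pairing_neg, Stmt8.pairing_neg] at h2
      exact abs_le.2 ⟨by linarith, h1⟩
    refine ⟨⟨f, hf, le_antisymm (hub f hf) (hle.trans (le_abs_self _))⟩, ?_⟩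
    rintro _ ⟨g, hg, rfl⟩
    exact hub g hg
  have hd : Stmt8.dstar K u v = Stmt8.cost K U V ab := g1.csSup_eq
  refine ⟨by rw [hd, g2.csSup_eq], ?_⟩
  rw [hd]
  refine ⟨⟨ab, hab, rfl⟩, ?_⟩
  rintro _ ⟨ab', hab', rfl⟩
  rw [← heq]
  exact hw f hf ab' hab'
end

section
/- Let u and v be Borel probability measures on X with finite supports U and V. Then d_3(u,v) ≥ d_5(u,v). -/
open Set MeasureTheory

namespace Stmt10

variable (K : Type*) [Fintype K]

/-- The simplex `Δ(K)` of probability vectors on `K`, inside `K → ℝ`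
(endowed with the ℓ¹ norm, written explicitly as sums of absolute values below). -/
def Δ : Set (K → ℝ) := {p | (∀ k, 0 ≤ p k) ∧ ∑ k, p k = 1}

/-- The pairing `u(f) = ∫_X f du`. -/
noncomputable def pairing (u : ProbabilityMeasure (Δ K)) (f : C(Δ K, ℝ)) : ℝ :=
  ∫ p, f p ∂(u : Measure (Δ K))

/-- `M₃(u,v)`: finite positive measures `γ` on `X²×[0,1]²` whose suitably weighted
marginals are `u` and `v`. -/
def M3 (u v : ProbabilityMeasure (Δ K)) :
    Set (Measure (Δ K × Δ K × Icc (0:ℝ) 1 × Icc (0:ℝ) 1)) :=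
  {γ | IsFiniteMeasure γ ∧ ∀ f : C(Δ K, ℝ),
    (∫ p, (p.2.2.1 : ℝ) * f p.1 ∂γ = pairing K u f) ∧
    (∫ p, (p.2.2.2 : ℝ) * f p.2.1 ∂γ = pairing K v f)}

noncomputable def d3 (u v : ProbabilityMeasure (Δ K)) : ℝ :=
  sInf ((fun γ => ∫ p,
      ∑ k, |(p.2.2.1 : ℝ) * (p.1 : K → ℝ) k - (p.2.2.2 : ℝ) * (p.2.1 : K → ℝ) k| ∂γ) ''
    M3 K u v)

/-- `M₅(u,v)` for finitely supported `u, v`, described through the supports `U, V` and the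
weight functions `wu, wv`: subprobability couplings. -/
def M5 (U V : Finset (Δ K)) (wu wv : Δ K → ℝ) :
    Set ((Δ K → Δ K → ℝ) × (Δ K → Δ K → ℝ)) :=
  {ab | (∀ x ∈ U, ∀ y ∈ V, 0 ≤ ab.1 x y ∧ 0 ≤ ab.2 x y) ∧
    (∀ x ∈ U, ∑ y ∈ V, ab.1 x y ≤ wu x) ∧ (∀ y ∈ V, ∑ x ∈ U, ab.2 x y ≤ wv y)}

noncomputable def cost5 (U V : Finset (Δ K))
    (ab : (Δ K → Δ K → ℝ) × (Δ K → Δ K → ℝ)) : ℝ :=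
  2 + ∑ x ∈ U, ∑ y ∈ V,
    ((∑ k, |ab.1 x y * (x : K → ℝ) k - ab.2 x y * (y : K → ℝ) k|) - ab.1 x y - ab.2 x y)

noncomputable def d5 (U V : Finset (Δ K)) (wu wv : Δ K → ℝ) : ℝ :=
  sInf (cost5 K U V '' M5 K U V wu wv)

end Stmt10

namespace Stmt10

lemma marg {Ω X : Type*} [MeasurableSpace Ω] [TopologicalSpace X] [MeasurableSpace X]
    [BorelSpace X] [HasOuterApproxClosed X] (γ : Measure Ω) [IsFiniteMeasure γ]
    (u : Measure X) [IsFiniteMeasure u] (l : Ω → ℝ) (hl : Measurable l)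
    (h0 : ∀ p, 0 ≤ l p) (h1 : ∀ p, l p ≤ 1) (φ : Ω → X) (hφ : Measurable φ)
    (h : ∀ f : C(X, ℝ), ∫ p, l p * f (φ p) ∂γ = ∫ x, f x ∂u) (A : Set X)
    (hA : MeasurableSet A) : ∫ p in φ ⁻¹' A, l p ∂γ = u.real A := by
  have hint : Integrable l γ := Integrable.of_bound hl.aestronglyMeasurable 1
    (Filter.Eventually.of_forall fun p => by
      rw [Real.norm_eq_abs, abs_of_nonneg (h0 p)]; exact h1 p)
  have : IsFiniteMeasure (γ.withDensity (fun p => ENNReal.ofReal (l p))) :=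
    isFiniteMeasure_withDensity_ofReal hint.2
  have key : (γ.withDensity (fun p => ENNReal.ofReal (l p))).map φ = u := by
    apply ext_of_forall_integral_eq_of_IsFiniteMeasure
    intro f
    rw [integral_map hφ.aemeasurable f.continuous.measurable.aestronglyMeasurable,
      integral_withDensity_eq_integral_toReal_smul hl.ennreal_ofReal
        (Filter.Eventually.of_forall fun p => ENNReal.ofReal_lt_top)]
    rw [← BoundedContinuousFunction.coe_toContinuousMap, ← h]
    congr 1
    ext p
    rw [ENNReal.toReal_ofReal (h0 p), smul_eq_mul]
  rw [← key, Measure.real, Measure.map_apply hφ hA, withDensity_apply _ (hφ hA),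
    integral_eq_lintegral_of_nonneg_ae (Filter.Eventually.of_forall h0)
      hl.aestronglyMeasurable]

lemma simplex_le {K : Type*} [Fintype K] (x : Δ K) (k : K) : (x : K → ℝ) k ≤ 1 := by
  rw [← x.2.2]
  exact Finset.single_le_sum (f := (x : K → ℝ)) (fun i _ => x.2.1 i) (Finset.mem_univ k)

lemma weights {X : Type*} [MeasurableSpace X] [MeasurableSingletonClass X]
    (u : Measure X) (U : Finset X) (wu : X → ℝ)
    (hwu : ∀ x ∈ U, 0 < wu x)
    (hu : u = ∑ x ∈ U, ENNReal.ofReal (wu x) • Measure.dirac x) :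
    (∀ x ∈ U, u.real {x} = wu x) ∧ u.real (U : Set X)ᶜ = 0 := by
  classical
  constructor
  · intro x hx
    have : u {x} = ENNReal.ofReal (wu x) := by
      rw [hu, Measure.finsetSum_apply, Finset.sum_eq_single x]
      · simp
      · intro b _ hb
        simp [hb]
      · exact fun h => absurd hx h
    rw [Measure.real, this, ENNReal.toReal_ofReal (hwu x hx).le]
  · have : u (U : Set X)ᶜ = 0 := by
      rw [hu, Measure.finsetSum_apply]
      apply Finset.sum_eq_zero
      intro x hx
      simp [Measure.dirac_apply' _ U.measurableSet.compl, hx]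
    rw [Measure.real, this]; rfl

lemma cost5_nonneg {K : Type*} [Fintype K] (U V : Finset (Δ K)) (wu wv : Δ K → ℝ)
    (hU : ∑ x ∈ U, wu x = 1) (hV : ∑ y ∈ V, wv y = 1) 
    (ab : (Δ K → Δ K → ℝ) × (Δ K → Δ K → ℝ)) (h : ab ∈ M5 K U V wu wv) :
    0 ≤ cost5 K U V ab := by
  obtain ⟨-, h1, h2⟩ := h
  have a1 := Finset.sum_le_sum h1
  have a2 := Finset.sum_le_sum h2
  rw [Finset.sum_comm] at a2
  have : ∑ x ∈ U, ∑ y ∈ V, (- ab.1 x y - ab.2 x y) ≤ ∑ x ∈ U, ∑ y ∈ V,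
    ((∑ k, |ab.1 x y * (x : K → ℝ) k - ab.2 x y * (y : K → ℝ) k|) - ab.1 x y - ab.2 x y) := by
    refine Finset.sum_le_sum fun x _ => Finset.sum_le_sum fun y _ => ?_
    have : 0 ≤ ∑ k, |ab.1 x y * (x : K → ℝ) k - ab.2 x y * (y : K → ℝ) k| :=
      Finset.sum_nonneg fun k _ => abs_nonneg _
    linarith
  simp only [Finset.sum_sub_distrib, Finset.sum_neg_distrib] at this
  simp only [cost5, Finset.sum_sub_distrib]
  linarith

lemma main {K : Type*} [Fintype K] (u v : ProbabilityMeasure (Δ K))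
    (U V : Finset (Δ K)) (wu wv : Δ K → ℝ)
    (hwu : ∀ x ∈ U, u.toMeasure.real {x} = wu x) (hwv : ∀ y ∈ V, v.toMeasure.real {y} = wv y)
    (hu : u.toMeasure.real (U : Set (Δ K))ᶜ = 0) (hv : v.toMeasure.real (V : Set (Δ K))ᶜ = 0)
    {Ω : Type*} [MeasurableSpace Ω] (γ : Measure Ω) [IsFiniteMeasure γ]
    (X Y : Ω → Δ K) (l m : Ω → ℝ) (hX : Measurable X) (hY : Measurable Y)
    (hl : Measurable l) (hm : Measurable m)
    (l0 : ∀ p, 0 ≤ l p) (l1 : ∀ p, l p ≤ 1) (m0 : ∀ p, 0 ≤ m p) (m1 : ∀ p, m p ≤ 1)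
    (h1 : ∀ f : C(Δ K, ℝ), ∫ p, l p * f (X p) ∂γ = ∫ x, f x ∂(u : Measure (Δ K)))
    (h2 : ∀ f : C(Δ K, ℝ), ∫ p, m p * f (Y p) ∂γ = ∫ x, f x ∂(v : Measure (Δ K))) :
    ∃ ab ∈ M5 K U V wu wv, cost5 K U V ab ≤
      ∫ p, ∑ k, |l p * (X p : K → ℝ) k - m p * (Y p : K → ℝ) k| ∂γ := by
  classical
  have M1 := marg γ (u : Measure (Δ K)) l hl l0 l1 X hX h1
  have M2 := marg γ (v : Measure (Δ K)) m hm m0 m1 Y hY h2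
  have bd : ∀ f : Ω → ℝ, Measurable f → (∀ p, 0 ≤ f p) → (∀ p, f p ≤ 1) → Integrable f γ :=
    fun f hf f0 f1 => Integrable.of_bound hf.aestronglyMeasurable 1
      (Filter.Eventually.of_forall fun p => by
        rw [Real.norm_eq_abs, abs_of_nonneg (f0 p)]; exact f1 p)
  have il := bd l hl l0 l1
  have im := bd m hm m0 m1
  have hXk : ∀ k, Measurable fun p => (X p : K → ℝ) k := fun k =>
    (measurable_pi_apply k).comp (measurable_subtype_coe.comp hX)
  have hYk : ∀ k, Measurable fun p => (Y p : K → ℝ) k := fun k =>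
    (measurable_pi_apply k).comp (measurable_subtype_coe.comp hY)
  have ilX : ∀ k, Integrable (fun p => l p * (X p : K → ℝ) k) γ := fun k =>
    bd _ (hl.mul (hXk k)) (fun p => mul_nonneg (l0 p) ((X p).2.1 k))
      (fun p => mul_le_one₀ (l1 p) ((X p).2.1 k) (simplex_le _ _))
  have imY : ∀ k, Integrable (fun p => m p * (Y p : K → ℝ) k) γ := fun k =>
    bd _ (hm.mul (hYk k)) (fun p => mul_nonneg (m0 p) ((Y p).2.1 k))
      (fun p => mul_le_one₀ (m1 p) ((Y p).2.1 k) (simplex_le _ _))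
  have iabs : ∀ k, Integrable (fun p => |l p * (X p : K → ℝ) k - m p * (Y p : K → ℝ) k|) γ :=
    fun k => ((ilX k).sub (imY k)).abs
  have isum : Integrable (fun p => ∑ k, |l p * (X p : K → ℝ) k - m p * (Y p : K → ℝ) k|) γ :=
    integrable_finsetSum _ fun k _ => iabs k
  have isub : Integrable (fun p =>
      (∑ k, |l p * (X p : K → ℝ) k - m p * (Y p : K → ℝ) k|) - l p) γ := isum.sub il
  let E : Δ K → Δ K → Set Ω := fun x y => X ⁻¹' {x} ∩ Y ⁻¹' {y}
  have hE : ∀ x y, MeasurableSet (E x y) := fun x y =>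
    (hX (measurableSet_singleton x)).inter (hY (measurableSet_singleton y))
  let g : Ω → ℝ := fun p => (∑ k, |l p * (X p : K → ℝ) k - m p * (Y p : K → ℝ) k|) - l p - m p
  have ig : Integrable g γ := (isum.sub il).sub im
  have L1 : ∫ p, l p ∂γ = 1 := by
    have := M1 univ MeasurableSet.univ
    simpa using this
  have L2 : ∫ p, m p ∂γ = 1 := by
    have := M2 univ MeasurableSet.univ
    simpa using this
  have z1 : ∀ᵐ p ∂γ, X p ∉ U → l p = 0 := by
    have := M1 _ U.measurableSet.compl
    rw [hu, setIntegral_eq_zero_iff_of_nonneg_ae (Filter.Eventually.of_forall l0)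
      il.integrableOn] at this
    have := (ae_restrict_iff' (hX U.measurableSet.compl)).1 this
    filter_upwards [this] with p hp hx
    exact hp (by simpa using hx)
  have z2 : ∀ᵐ p ∂γ, Y p ∉ V → m p = 0 := by
    have := M2 _ V.measurableSet.compl
    rw [hv, setIntegral_eq_zero_iff_of_nonneg_ae (Filter.Eventually.of_forall m0)
      im.integrableOn] at this
    have := (ae_restrict_iff' (hY V.measurableSet.compl)).1 this
    filter_upwards [this] with p hp hx
    exact hp (by simpa using hx)
  have gl : ∀ p, l p = 0 → g p = 0 := by
    intro p hp
    simp only [g, hp, zero_mul, zero_sub, abs_neg, sub_zero]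
    have : ∀ k, |m p * (Y p : K → ℝ) k| = m p * (Y p : K → ℝ) k := fun k =>
      abs_of_nonneg (mul_nonneg (m0 p) ((Y p).2.1 k))
    simp only [this, ← Finset.mul_sum, (Y p).2.2]
    ring
  have gm : ∀ p, m p = 0 → g p = 0 := by
    intro p hp
    simp only [g, hp, zero_mul, sub_zero]
    have : ∀ k, |l p * (X p : K → ℝ) k| = l p * (X p : K → ℝ) k := fun k =>
      abs_of_nonneg (mul_nonneg (l0 p) ((X p).2.1 k))
    simp only [this, ← Finset.mul_sum, (X p).2.2]
    ring
  have gdec : g =ᵐ[γ] fun p => ∑ x ∈ U, ∑ y ∈ V, (E x y).indicator g p := by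
    filter_upwards [z1, z2] with p hp1 hp2
    have e : ∀ x y, (E x y).indicator g p = if X p = x then (if Y p = y then g p else 0) else 0 := by
      intro x y
      by_cases hx : X p = x <;> by_cases hy : Y p = y <;> simp [E, Set.indicator, hx, hy]
    simp only [e]
    by_cases hx : X p ∈ U
    · by_cases hy : Y p ∈ V
      · rw [Finset.sum_eq_single (X p)]
        · rw [Finset.sum_eq_single (Y p)]
          · simp
          · intro b _ hb; simp [hb.symm]
          · exact fun h => absurd hy h
        · intro b _ hb; simp [hb.symm]
        · exact fun h => absurd hx h
      · simp [gm p (hp2 hy)]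
    · simp [gl p (hp1 hx)]
  have Ig : ∫ p, g p ∂γ = ∑ x ∈ U, ∑ y ∈ V, ∫ p in E x y, g p ∂γ := by
    rw [integral_congr_ae gdec, integral_finsetSum]
    · refine Finset.sum_congr rfl fun x _ => ?_
      rw [integral_finsetSum]
      · exact Finset.sum_congr rfl fun y _ => integral_indicator (hE x y)
      · exact fun y _ => ig.indicator (hE x y)
    · exact fun x _ => integrable_finsetSum _ fun y _ => ig.indicator (hE x y)
  have Ig2 : ∫ p, g p ∂γ =
      (∫ p, ∑ k, |l p * (X p : K → ℝ) k - m p * (Y p : K → ℝ) k| ∂γ) - 2 := by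
    have : ∫ p, g p ∂γ = (∫ p, ∑ k, |l p * (X p : K → ℝ) k - m p * (Y p : K → ℝ) k| ∂γ)
        - (∫ p, l p ∂γ) - ∫ p, m p ∂γ := by
      rw [← integral_sub isum il, ← integral_sub isub im]
    rw [this, L1, L2]; ring
  refine ⟨(fun x y => ∫ p in E x y, l p ∂γ, fun x y => ∫ p in E x y, m p ∂γ),
    ⟨fun x _ y _ => ⟨integral_nonneg l0, integral_nonneg m0⟩, fun x hx => ?_, fun y hy => ?_⟩, ?_⟩
  · rw [← hwu x hx, ← M1 _ (measurableSet_singleton x)]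
    simp only
    rw [← integral_biUnion_finset V (fun y _ => hE x y) ?_ (fun y _ => il.integrableOn)]
    · refine setIntegral_mono_set il.integrableOn (Filter.Eventually.of_forall l0)
        (Filter.Eventually.of_forall ?_)
      refine iUnion₂_subset fun y _ => inter_subset_left
    · intro a _ b _ hab
      refine Set.disjoint_left.2 fun p hp hq => hab ?_
      exact hp.2.symm.trans hq.2
  · rw [← hwv y hy, ← M2 _ (measurableSet_singleton y)]
    simp only
    rw [← integral_biUnion_finset U (fun x _ => hE x y) ?_ (fun x _ => im.integrableOn)]
    · refine setIntegral_mono_set im.integrableOn (Filter.Eventually.of_forall m0)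
        (Filter.Eventually.of_forall ?_)
      refine iUnion₂_subset fun y _ => inter_subset_right
    · intro a _ b _ hab
      refine Set.disjoint_left.2 fun p hp hq => hab ?_
      exact hp.1.symm.trans hq.1
  · have : ∑ x ∈ U, ∑ y ∈ V, ((∑ k, |(∫ p in E x y, l p ∂γ) * (x : K → ℝ) k -
        (∫ p in E x y, m p ∂γ) * (y : K → ℝ) k|) - (∫ p in E x y, l p ∂γ)
        - (∫ p in E x y, m p ∂γ)) ≤ ∫ p, g p ∂γ := by
      rw [Ig]
      refine Finset.sum_le_sum fun x _ => Finset.sum_le_sum fun y _ => ?_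
      have e1 : ∫ p in E x y, g p ∂γ =
          (∑ k, ∫ p in E x y, |l p * (X p : K → ℝ) k - m p * (Y p : K → ℝ) k| ∂γ)
          - (∫ p in E x y, l p ∂γ) - ∫ p in E x y, m p ∂γ := by
        rw [← integral_finsetSum _ fun k _ => (iabs k).integrableOn,
          ← integral_sub isum.integrableOn il.integrableOn,
          ← integral_sub isub.integrableOn im.integrableOn]
      rw [e1]
      gcongr with k
      have e2 : (∫ p in E x y, l p ∂γ) * (x : K → ℝ) k - (∫ p in E x y, m p ∂γ) * (y : K → ℝ) k
          = ∫ p in E x y, (l p * (X p : K → ℝ) k - m p * (Y p : K → ℝ) k) ∂γ := by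
        rw [← integral_mul_const, ← integral_mul_const,
          ← integral_sub (il.mul_const _).integrableOn (im.mul_const _).integrableOn]
        refine setIntegral_congr_fun (hE x y) fun p hp => ?_
        have a : X p = x := hp.1
        have b : Y p = y := hp.2
        simp only [a, b]
      rw [e2]
      exact abs_integral_le_integral_abs
    simp only [cost5]
    linarith

lemma M3_nonempty {K : Type*} [Fintype K] (u v : ProbabilityMeasure (Δ K)) :
    (M3 K u v).Nonempty := by
  let φ : Δ K × Δ K → Δ K × Δ K × Icc (0:ℝ) 1 × Icc (0:ℝ) 1 := fun q => (q.1, q.2, 1, 1)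
  have hφ : Measurable φ := by fun_prop
  refine ⟨((u : Measure (Δ K)).prod (v : Measure (Δ K))).map φ, inferInstance, fun f => ⟨?_, ?_⟩⟩
  · rw [integral_map hφ.aemeasurable (Continuous.aestronglyMeasurable (by fun_prop))]
    simp only [φ, pairing, Icc.coe_one, one_mul]
    rw [integral_fun_fst]
    simp
  · rw [integral_map hφ.aemeasurable (Continuous.aestronglyMeasurable (by fun_prop))]
    simp only [φ, pairing, Icc.coe_one, one_mul]
    rw [integral_fun_snd]
    simp

lemma sum_weights {X : Type*} [MeasurableSpace X] 
    (u : Measure X) [IsProbabilityMeasure u] (U : Finset X) (wu : X → ℝ)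
    (hwu : ∀ x ∈ U, 0 < wu x)
    (hu : u = ∑ x ∈ U, ENNReal.ofReal (wu x) • Measure.dirac x) : ∑ x ∈ U, wu x = 1 := by
  have h : u univ = 1 := measure_univ
  rw [hu, Measure.finsetSum_apply] at h
  simp only [Measure.smul_apply, measure_univ, smul_eq_mul, mul_one] at h
  rw [← ENNReal.ofReal_sum_of_nonneg fun x hx => (hwu x hx).le] at h
  exact ENNReal.ofReal_eq_one.1 h

end Stmt10

/-- **Lemma 5 (Renault–Venel).** Let `u, v` be Borel probability measures on `X = Δ(K)`
with finite supports `U, V`. Then `d₃(u,v) ≥ d₅(u,v)`. -/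
theorem stmt10 (K : Type*) [Fintype K] [Nonempty K]
    (u v : ProbabilityMeasure (Stmt10.Δ K))
    (U V : Finset (Stmt10.Δ K)) (wu wv : Stmt10.Δ K → ℝ)
    (hwu : ∀ x ∈ U, 0 < wu x) (hwv : ∀ y ∈ V, 0 < wv y)
    (hu : (u : Measure (Stmt10.Δ K)) = ∑ x ∈ U, ENNReal.ofReal (wu x) • Measure.dirac x)
    (hv : (v : Measure (Stmt10.Δ K)) = ∑ y ∈ V, ENNReal.ofReal (wv y) • Measure.dirac y) :
    Stmt10.d3 K u v ≥ Stmt10.d5 K U V wu wv := by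
  obtain ⟨a1, a2⟩ := Stmt10.weights _ U wu hwu hu
  obtain ⟨b1, b2⟩ := Stmt10.weights _ V wv hwv hv
  have sU := Stmt10.sum_weights _ U wu hwu hu
  have sV := Stmt10.sum_weights _ V wv hwv hv
  refine le_csInf ((Stmt10.M3_nonempty u v).image _) ?_
  rintro _ ⟨γ, ⟨hfin, h⟩, rfl⟩
  obtain ⟨ab, hab, hle⟩ := Stmt10.main u v U V wu wv a1 b1 a2 b2 γ
    (fun p => p.1) (fun p => p.2.1) (fun p => (p.2.2.1 : ℝ)) (fun p => (p.2.2.2 : ℝ))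
    (by fun_prop) (by fun_prop) (by fun_prop) (by fun_prop)
    (fun p => p.2.2.1.2.1) (fun p => p.2.2.1.2.2) (fun p => p.2.2.2.2.1) (fun p => p.2.2.2.2.2)
    (fun f => (h f).1) (fun f => (h f).2)
  refine le_trans (csInf_le ⟨0, ?_⟩ ⟨ab, hab, rfl⟩) hle
  rintro _ ⟨ab', hab', rfl⟩
  exact Stmt10.cost5_nonneg U V wu wv sU sV ab' hab'
end

section
/- Let u and v be Borel probability measures on X with finite supports U and V. Then d_5(u,v) ≥ d_4(u,v). -/
open Set MeasureTheory

namespace Stmt11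

variable (K : Type*) [Fintype K]

/-- The simplex `Δ(K)` of probability vectors on `K`, inside `K → ℝ`
(endowed with the ℓ¹ norm, written explicitly as sums of absolute values below). -/
def Δ : Set (K → ℝ) := {p | (∀ k, 0 ≤ p k) ∧ ∑ k, p k = 1}

/-- `M₄(u,v)` for finitely supported `u, v`, described through the supports `U, V` and the
weight functions `wu, wv`. -/
def M4 (U V : Finset (Δ K)) (wu wv : Δ K → ℝ) :
    Set ((Δ K → Δ K → ℝ) × (Δ K → Δ K → ℝ)) :=
  {ab | (∀ x ∈ U, ∀ y ∈ V, 0 ≤ ab.1 x y ∧ 0 ≤ ab.2 x y) ∧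
    (∀ x ∈ U, ∑ y ∈ V, ab.1 x y = wu x) ∧ (∀ y ∈ V, ∑ x ∈ U, ab.2 x y = wv y)}

noncomputable def cost4 (U V : Finset (Δ K))
    (ab : (Δ K → Δ K → ℝ) × (Δ K → Δ K → ℝ)) : ℝ :=
  ∑ x ∈ U, ∑ y ∈ V, ∑ k, |ab.1 x y * (x : K → ℝ) k - ab.2 x y * (y : K → ℝ) k|

noncomputable def d4 (U V : Finset (Δ K)) (wu wv : Δ K → ℝ) : ℝ :=
  sInf (cost4 K U V '' M4 K U V wu wv)

/-- `M₅(u,v)`: subprobability couplings. -/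
def M5 (U V : Finset (Δ K)) (wu wv : Δ K → ℝ) :
    Set ((Δ K → Δ K → ℝ) × (Δ K → Δ K → ℝ)) :=
  {ab | (∀ x ∈ U, ∀ y ∈ V, 0 ≤ ab.1 x y ∧ 0 ≤ ab.2 x y) ∧
    (∀ x ∈ U, ∑ y ∈ V, ab.1 x y ≤ wu x) ∧ (∀ y ∈ V, ∑ x ∈ U, ab.2 x y ≤ wv y)}

noncomputable def cost5 (U V : Finset (Δ K))
    (ab : (Δ K → Δ K → ℝ) × (Δ K → Δ K → ℝ)) : ℝ :=
  2 + ∑ x ∈ U, ∑ y ∈ V,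
    ((∑ k, |ab.1 x y * (x : K → ℝ) k - ab.2 x y * (y : K → ℝ) k|) - ab.1 x y - ab.2 x y)

noncomputable def d5 (U V : Finset (Δ K)) (wu wv : Δ K → ℝ) : ℝ :=
  sInf (cost5 K U V '' M5 K U V wu wv)

end Stmt11

theorem Stmt11.sum_weights (K : Type*) [Fintype K] (u : ProbabilityMeasure (Stmt11.Δ K))
    (U : Finset (Stmt11.Δ K)) (wu : Stmt11.Δ K → ℝ) (hwu : ∀ x ∈ U, 0 < wu x)
    (hu : (u : Measure (Stmt11.Δ K)) = ∑ x ∈ U, ENNReal.ofReal (wu x) • Measure.dirac x) :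
    ∑ x ∈ U, wu x = 1 := by
  have h : (u : Measure (Stmt11.Δ K)) Set.univ = 1 := measure_univ
  rw [hu] at h
  simp only [Measure.coe_finsetSum, Finset.sum_apply, Measure.smul_apply, measure_univ,
    smul_eq_mul, mul_one] at h
  rw [← ENNReal.ofReal_sum_of_nonneg (fun x hx => (hwu x hx).le)] at h
  exact ENNReal.ofReal_eq_one.mp h

theorem Stmt11.norm_step (K : Type*) [Fintype K] (x y : Stmt11.Δ K) (a b r s : ℝ)
    (hr : 0 ≤ r) (hs : 0 ≤ s) :
    ∑ k, |(a + r) * (x : K → ℝ) k - (b + s) * (y : K → ℝ) k| ≤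
      (∑ k, |a * (x : K → ℝ) k - b * (y : K → ℝ) k|) + r + s := by
  obtain ⟨x, hx0, hx1⟩ := x
  obtain ⟨y, hy0, hy1⟩ := y
  calc ∑ k, |(a + r) * x k - (b + s) * y k|
      ≤ ∑ k, (|a * x k - b * y k| + r * x k + s * y k) := by
        refine Finset.sum_le_sum fun k _ => ?_
        have h1 := mul_nonneg hr (hx0 k)
        have h2 := mul_nonneg hs (hy0 k)
        have h3 := le_abs_self (a * x k - b * y k)
        have h4 := neg_abs_le (a * x k - b * y k)
        rw [abs_le]
        constructor <;> linarith
    _ = (∑ k, |a * x k - b * y k|) + r + s := by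
        rw [Finset.sum_add_distrib, Finset.sum_add_distrib, ← Finset.mul_sum, ← Finset.mul_sum,
          hx1, hy1, mul_one, mul_one]

/-- **Lemma (Renault–Venel).** Let `u, v` be Borel probability measures on `X = Δ(K)`
with finite supports `U, V`. Then `d₅(u,v) ≥ d₄(u,v)`. -/
theorem stmt11 (K : Type*) [Fintype K] [Nonempty K]
    (u v : ProbabilityMeasure (Stmt11.Δ K))
    (U V : Finset (Stmt11.Δ K)) (wu wv : Stmt11.Δ K → ℝ)
    (hwu : ∀ x ∈ U, 0 < wu x) (hwv : ∀ y ∈ V, 0 < wv y)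
    (hu : (u : Measure (Stmt11.Δ K)) = ∑ x ∈ U, ENNReal.ofReal (wu x) • Measure.dirac x)
    (hv : (v : Measure (Stmt11.Δ K)) = ∑ y ∈ V, ENNReal.ofReal (wv y) • Measure.dirac y) :
    Stmt11.d5 K U V wu wv ≥ Stmt11.d4 K U V wu wv := by
  have hU1 := Stmt11.sum_weights K u U wu hwu hu
  have hV1 := Stmt11.sum_weights K v V wv hwv hv
  have hUne : (U.card : ℝ) ≠ 0 := by
    intro h
    have : U = ∅ := by simpa using h
    simp [this] at hU1
  have hVne : (V.card : ℝ) ≠ 0 := by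
    intro h
    have : V = ∅ := by simpa using h
    simp [this] at hV1
  unfold Stmt11.d5 Stmt11.d4
  apply le_csInf
  · refine Set.Nonempty.image _ ⟨(fun _ _ => 0, fun _ _ => 0), ?_, ?_, ?_⟩
    · intro x _ y _
      exact ⟨le_rfl, le_rfl⟩
    · intro x hx
      simpa using (hwu x hx).le
    · intro y hy
      simpa using (hwv y hy).le
  · rintro _ ⟨⟨a, b⟩, ⟨h0, ha, hb⟩, rfl⟩
    simp only at h0 ha hb
    have hr : ∀ x ∈ U, 0 ≤ (wu x - ∑ y ∈ V, a x y) / V.card := fun x hx =>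
      div_nonneg (by linarith [ha x hx]) (Nat.cast_nonneg _)
    have hs : ∀ y ∈ V, 0 ≤ (wv y - ∑ x ∈ U, b x y) / U.card := fun y hy =>
      div_nonneg (by linarith [hb y hy]) (Nat.cast_nonneg _)
    refine le_trans (csInf_le ?_ ⟨(fun x y => a x y + (wu x - ∑ y ∈ V, a x y) / V.card,
      fun x y => b x y + (wv y - ∑ x ∈ U, b x y) / U.card), ⟨?_, ?_, ?_⟩, rfl⟩) ?_
    · refine ⟨0, ?_⟩
      rintro _ ⟨ab, _, rfl⟩
      unfold Stmt11.cost4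
      positivity
    · intro x hx y hy
      exact ⟨add_nonneg (h0 x hx y hy).1 (hr x hx), add_nonneg (h0 x hx y hy).2 (hs y hy)⟩
    · intro x hx
      simp only [Finset.sum_add_distrib, Finset.sum_const, nsmul_eq_mul]
      rw [mul_div_cancel₀ _ hVne]
      ring
    · intro y hy
      simp only [Finset.sum_add_distrib, Finset.sum_const, nsmul_eq_mul]
      rw [mul_div_cancel₀ _ hUne]
      ring
    · unfold Stmt11.cost4 Stmt11.cost5
      refine (Finset.sum_le_sum fun x hx => Finset.sum_le_sum fun y hy =>
        Stmt11.norm_step K x y _ _ _ _ (hr x hx) (hs y hy)).trans (le_of_eq ?_)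
      have e1 : ∑ x ∈ U, ∑ y ∈ V, (wu x - ∑ y ∈ V, a x y) / (V.card : ℝ)
          = 1 - ∑ x ∈ U, ∑ y ∈ V, a x y := by
        simp only [Finset.sum_const, nsmul_eq_mul, mul_div_cancel₀ _ hVne]
        rw [Finset.sum_sub_distrib, hU1]
      have e2 : ∑ x ∈ U, ∑ y ∈ V, (wv y - ∑ x ∈ U, b x y) / (U.card : ℝ)
          = 1 - ∑ x ∈ U, ∑ y ∈ V, b x y := by
        rw [Finset.sum_comm]
        simp only [Finset.sum_const, nsmul_eq_mul, mul_div_cancel₀ _ hUne]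
        rw [Finset.sum_sub_distrib, hV1, Finset.sum_comm]
      simp only [Finset.sum_add_distrib, Finset.sum_sub_distrib] at e1 e2 ⊢
      rw [e1, e2]
      ring
end
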